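/- arXiv:1704.02204 — 4 statements merged into one kernel-verified Lean document; each statement's English description precedes it below -/
import Mathlib

section
/- Let α be a finite nonempty type with |α| = D, let e ≥ 1, let g be a permutation of α and let h : α → Perm(Fin e). Define the permutation σ of α × Fin(e) by σ(a, t) = (g(a), h(g(a))(t)). Then σ is a single cycle of length D·e if and only if g is a single cycle of length D and, for every a ∈ α, the product h(g^{-1}(a))·h(g^{-2}(a))·⋯·h(g^{-D}(a)) (composition of permutations, taken in this order) is a single cycle of length e in Perm(Fin e). -/
/-- A permutation of a finite set is a single cycle through all the points of the set iff
the cyclic group it generates acts transitively. -/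
def IsFullCycle {α : Type*} (σ : Equiv.Perm α) : Prop :=
  ∀ x y : α, ∃ k : ℕ, (σ ^ k) x = y

theorem full_minimalPeriod {α : Type*} [Fintype α] (g : Equiv.Perm α) (hg : IsFullCycle g)
    (b : α) : Function.minimalPeriod g b = Fintype.card α := by
  classical
  have h1 := MulAction.minimalPeriod_eq_card (a := g) (b := b)
  have h2 : MulAction.orbit (Subgroup.zpowers g) b = Set.univ := by
    ext y
    simp only [Set.mem_univ, iff_true]
    obtain ⟨k, hk⟩ := hg b y
    exact ⟨⟨g ^ k, k, by simp⟩, hk⟩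
  have h3 : Fintype.card (MulAction.orbit (Subgroup.zpowers g) b) = Fintype.card α := by
    rw [← Nat.card_eq_fintype_card, h2, Nat.card_univ, Nat.card_eq_fintype_card]
  rw [h3] at h1
  exact h1

theorem stmt9 {α : Type*} [Fintype α] [Nonempty α] (D : ℕ) (hD : Fintype.card α = D)
    (e : ℕ) (he : 1 ≤ e) (g : Equiv.Perm α) (h : α → Equiv.Perm (Fin e))
    (σ : Equiv.Perm (α × Fin e))
    (hσ : ∀ (a : α) (t : Fin e), σ (a, t) = (g a, h (g a) t)) :
    IsFullCycle σ ↔ IsFullCycle g ∧ ∀ a : α,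
      IsFullCycle (((List.range D).map (fun i => h ((g⁻¹ ^ (i + 1)) a))).prod) := by
  have hfst : ∀ (k : ℕ) (x : α × Fin e), ((σ ^ k) x).1 = (g ^ k) x.1 := by
    intro k
    induction k with
    | zero => intro x; simp
    | succ n ih =>
      rintro ⟨a, t⟩
      rw [pow_succ, Equiv.Perm.mul_apply, hσ, ih, pow_succ, Equiv.Perm.mul_apply]
  have hP : ∀ (n : ℕ) (a : α) (t : Fin e), (σ ^ n) ((g⁻¹ ^ (n + 1)) a, t) =
      (g⁻¹ a, ((List.range n).map (fun i => h ((g⁻¹ ^ (i + 1)) a))).prod t) := by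
    intro n a
    induction n with
    | zero => intro t; simp
    | succ n ih =>
      intro t
      have e1 : g ((g⁻¹ ^ (n + 1 + 1)) a) = (g⁻¹ ^ (n + 1)) a := by
        rw [pow_succ' _ (n + 1), Equiv.Perm.mul_apply]; simp
      rw [pow_succ, Equiv.Perm.mul_apply, hσ, e1, ih, List.range_succ]
      simp
  have hper : IsFullCycle g → ∀ (k : ℕ) (b : α), (g ^ k) b = b ↔ D ∣ k := by
    intro hg k b
    rw [← hD, ← full_minimalPeriod g hg b, ← Function.isPeriodicPt_iff_minimalPeriod_dvd,
      Function.IsPeriodicPt, Function.IsFixedPt, Equiv.Perm.iterate_eq_pow]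
  have hQ : IsFullCycle g → ∀ (m : ℕ) (a : α) (t : Fin e), (σ ^ (D * m)) (g⁻¹ a, t) =
      (g⁻¹ a, ((((List.range D).map (fun i => h ((g⁻¹ ^ (i + 1)) a))).prod) ^ m) t) := by
    intro hg m a
    have hgD : g ^ D = 1 := by
      ext b
      exact (hper hg D b).2 dvd_rfl
    have e1 : g⁻¹ ^ (D + 1) = g⁻¹ := by rw [pow_succ, inv_pow, hgD]; simp
    induction m with
    | zero => intro t; simp
    | succ m ih =>
      intro t
      have := hP D a t
      rw [e1] at this
      rw [Nat.mul_succ, pow_add, Equiv.Perm.mul_apply, this, ih, pow_succ, Equiv.Perm.mul_apply]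
  constructor
  · intro hs
    have hg : IsFullCycle g := by
      intro x y
      obtain ⟨k, hk⟩ := hs (x, ⟨0, he⟩) (y, ⟨0, he⟩)
      refine ⟨k, ?_⟩
      have := hfst k (x, ⟨0, he⟩)
      rw [hk] at this
      exact this.symm
    refine ⟨hg, fun a s t => ?_⟩
    obtain ⟨k, hk⟩ := hs (g⁻¹ a, s) (g⁻¹ a, t)
    have h1 := hfst k (g⁻¹ a, s)
    rw [hk] at h1
    obtain ⟨m, rfl⟩ := (hper hg k _).1 h1.symm
    rw [hQ hg] at hk
    exact ⟨m, congrArg Prod.snd hk⟩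
  · rintro ⟨hg, hf⟩ ⟨b, s⟩ ⟨c, t⟩
    obtain ⟨k, hk⟩ := hg b c
    obtain ⟨m, hm⟩ := hf (g c) ((σ ^ k) (b, s)).2 t
    refine ⟨D * m + k, ?_⟩
    have h1 : (σ ^ k) (b, s) = (g⁻¹ (g c), ((σ ^ k) (b, s)).2) := by
      refine Prod.ext ?_ rfl
      rw [hfst]; simpa using hk
    rw [pow_add, Equiv.Perm.mul_apply, h1, hQ hg, hm]; simp
end

section
/- (Odoni.) Let F be a field of characteristic 0 and let f ∈ F[x] be monic and squarefree of degree d ≥ 1 with Galois group G over F. Let ℓ ≥ 2, let t_1,…,t_ℓ be indeterminates over F, and let g(x) = x^ℓ + t_1 x^{ℓ−1} + ⋯ + t_ℓ ∈ F(t_1,…,t_ℓ)[x]. Then the Galois group of f∘g over the rational function field F(t_1,…,t_ℓ) is finite of order |G|·(ℓ!)^d (the order of the wreath product G ≀ S_ℓ). -/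
section OdoniAll
open Equiv

section OdoniGroup
set_option maxRecDepth 100000 in
set_option maxHeartbeats 1000000 in
theorem odoni_d4 : ∀ σ : Perm (Fin 4), Perm.sign σ = -1 → ∃ a b : Perm (Fin 4),
    (σ * (a * σ * a⁻¹) * (b * σ * b⁻¹)) = swap 0 1 ∨ (σ * (a * σ * a⁻¹) * (b * σ * b⁻¹)) = swap 1 2 ∨
    (σ * (a * σ * a⁻¹) * (b * σ * b⁻¹)) = swap 0 2 := by decide

theorem odoni_d3 : ∀ σ : Perm (Fin 3), Perm.sign σ = -1 → ∃ x y , x ≠ y ∧ σ = swap x y := by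
  decide

theorem odoni_d2 : ∀ σ : Perm (Fin 2), Perm.sign σ = -1 → ∃ x y , x ≠ y ∧ σ = swap x y := by
  decide

theorem odoni_top_of_swap {α : Type*} [DecidableEq α] [Finite α] (N : Subgroup (Perm α)) [hN : N.Normal]
    (x y : α) (hxy : x ≠ y) (h : swap x y ∈ N) : N = ⊤ := by
  rw [eq_top_iff, ← Perm.closure_isSwap, Subgroup.closure_le]
  rintro _ ⟨a, b, hab, rfl⟩
  obtain ⟨c, hc⟩ := isConj_iff.1 (Perm.isConj_swap hxy hab)
  rw [← hc]
  exact hN.conj_mem _ h c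

theorem odoni_normal {n : ℕ} (N : Subgroup (Perm (Fin n))) [hN : N.Normal]
    (σ : Perm (Fin n)) (hσ : σ ∈ N) (hs : Perm.sign σ = -1) : N = ⊤ := by
  rcases lt_or_ge n 5 with h | h
  · interval_cases n
    · exact absurd hs (by rw [Subsingleton.elim σ 1]; decide)
    · exact absurd hs (by rw [Subsingleton.elim σ 1]; decide)
    · obtain ⟨x, y, hxy, rfl⟩ := odoni_d2 σ hs
      exact odoni_top_of_swap N x y hxy hσ
    · obtain ⟨x, y, hxy, rfl⟩ := odoni_d3 σ hs
      exact odoni_top_of_swap N x y hxy hσ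
    · obtain ⟨a, b, hab⟩ := odoni_d4 σ hs
      have hm : (σ * (a * σ * a⁻¹) * (b * σ * b⁻¹)) ∈ N :=
        N.mul_mem (N.mul_mem hσ (hN.conj_mem _ hσ a)) (hN.conj_mem _ hσ b)
      rcases hab with hab | hab | hab <;> rw [hab] at hm
      · exact odoni_top_of_swap N _ _ (by decide) hm
      · exact odoni_top_of_swap N _ _ (by decide) hm
      · exact odoni_top_of_swap N _ _ (by decide) hm
  · have hne : σ ≠ 1 := by
      rintro rfl
      simp at hs
    have hnt : Nontrivial N := ⟨⟨⟨σ, hσ⟩, 1, fun h => hne (by simpa using congrArg Subtype.val h)⟩⟩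
    have hA := Perm.alternatingGroup_le_of_normal (by simpa using h) hnt
    rw [eq_top_iff]
    intro τ _
    rcases Int.units_eq_one_or (Perm.sign τ) with ht | ht
    · exact hA (Perm.mem_alternatingGroup.2 ht)
    · have : τ * σ⁻¹ ∈ N := hA (Perm.mem_alternatingGroup.2 (by simp [ht, hs]))
      simpa using N.mul_mem this hσ

theorem odoni_char {n : ℕ} (s : Perm (Fin n) →* ℤˣ) : s = 1 ∨ s = Perm.sign := by
  by_cases h : Function.Surjective s
  · exact Or.inr (Perm.eq_sign_of_surjective_hom h)
  · left
    ext1 σ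
    by_contra hσ
    apply h
    intro u
    have : s σ = -1 := (Int.units_eq_one_or _).resolve_left (by simpa using hσ)
    rcases Int.units_eq_one_or u with rfl | rfl
    · exact ⟨1, by simp⟩
    · exact ⟨σ, this⟩

theorem odoni_char_pi {ι : Type*} [Fintype ι] [DecidableEq ι] {n : ℕ}
    (χ : (ι → Perm (Fin n)) →* ℤˣ) :
    ∃ S : Finset ι, (∀ p, χ p = ∏ j ∈ S, Perm.sign (p j)) ∧
      ∀ j ∈ S, χ.comp (MonoidHom.mulSingle (fun _ => Perm (Fin n)) j) = Perm.sign := by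
  classical
  refine ⟨Finset.univ.filter
    fun j => χ.comp (MonoidHom.mulSingle (fun _ => Perm (Fin n)) j) = Perm.sign, ?_, by simp⟩
  set S := Finset.univ.filter
    fun j => χ.comp (MonoidHom.mulSingle (fun _ => Perm (Fin n)) j) = Perm.sign with hS
  have : χ = ∏ j ∈ S, (Perm.sign : Perm (Fin n) →* ℤˣ).comp (Pi.evalMonoidHom _ j) := by
    refine MonoidHom.pi_ext fun i x => ?_
    rw [MonoidHom.finsetProd_apply]
    have e : χ (Pi.mulSingle i x) =
      χ.comp (MonoidHom.mulSingle (fun _ => Perm (Fin n)) i) x := rfl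
    rw [e]
    by_cases hi : i ∈ S
    · rw [Finset.prod_eq_single_of_mem i hi]
      · rw [(Finset.mem_filter.1 hi).2]; simp
      · intro b _ hb
        simp [hb]
    · rw [Finset.prod_eq_one]
      · rw [(odoni_char (χ.comp (MonoidHom.mulSingle (fun _ => Perm (Fin n)) i))).resolve_right
          (fun h => hi (by simp [hS, h]))]; rfl
      · intro b hb
        have : b ≠ i := fun h => hi (h ▸ hb)
        simp [this]
  intro p
  conv_lhs => rw [this]
  rw [MonoidHom.finsetProd_apply]
  rfl

theorem odoni_goursat {ι : Type*} [Fintype ι] {n : ℕ} {Γ : Type*} [Group Γ]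
    (φ : Γ →* (ι → Perm (Fin n)))
    (h1 : ∀ i, ∀ p : Perm (Fin n), ∃ γ, φ γ i = p)
    (h2 : ∀ S : Finset ι, S.Nonempty → ∃ γ, ∏ i ∈ S, Perm.sign (φ γ i) ≠ 1) :
    Function.Surjective φ := by
  classical
  suffices H : ∀ T : Finset ι, ∀ p : ι → Perm (Fin n), ∃ γ, ∀ i ∈ T, φ γ i = p i by
    intro p
    obtain ⟨γ, hγ⟩ := H Finset.univ p
    exact ⟨γ, funext fun i => hγ i (Finset.mem_univ i)⟩
  intro T
  induction T using Finset.induction_on with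
  | empty => exact fun p => ⟨1, by simp⟩
  | insert i T hi ih =>
    by_cases hodd : ∃ γ, (∀ j ∈ T, φ γ j = 1) ∧ Perm.sign (φ γ i) = -1
    · obtain ⟨γ₀, hγ₀, hs⟩ := hodd
      let N : Subgroup (Perm (Fin n)) :=
        { carrier := {p | ∃ γ, (∀ j ∈ T, φ γ j = 1) ∧ φ γ i = p}
          one_mem' := ⟨1, by simp⟩
          mul_mem' := by
            rintro _ _ ⟨a, ha, rfl⟩ ⟨b, hb, rfl⟩
            exact ⟨a * b, fun j hj => by simp [ha j hj, hb j hj], by simp⟩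
          inv_mem' := by
            rintro _ ⟨a, ha, rfl⟩
            exact ⟨a⁻¹, fun j hj => by simp [ha j hj], by simp⟩ }
      have hN : N.Normal := ⟨by
        rintro _ ⟨a, ha, rfl⟩ q
        obtain ⟨c, rfl⟩ := h1 i q
        exact ⟨c * a * c⁻¹, fun j hj => by simp [ha j hj], by simp⟩⟩
      have htop : N = ⊤ := odoni_normal N (φ γ₀ i) ⟨γ₀, hγ₀, rfl⟩ hs
      intro p
      obtain ⟨γ, hγ⟩ := ih p
      have : p i * (φ γ i)⁻¹ ∈ N := htop ▸ Subgroup.mem_top _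
      obtain ⟨c, hc, hci⟩ := this
      refine ⟨c * γ, fun j hj => ?_⟩
      rcases Finset.mem_insert.1 hj with rfl | hj
      · simp [hci]
      · simp [hc j hj, hγ j hj]
    · exfalso
      push Not at hodd
      have hev : ∀ γ, (∀ j ∈ T, φ γ j = 1) → Perm.sign (φ γ i) = 1 := fun γ hγ =>
        (Int.units_eq_one_or _).resolve_right (hodd γ hγ)
      choose s hs using ih
      have key : ∀ γ p, (∀ j ∈ T, φ γ j = p j) → Perm.sign (φ (s p) i) = Perm.sign (φ γ i) := by
        intro γ p h
        have := hev (s p * γ⁻¹) (fun j hj => by simp [h j hj, hs p j hj])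
        simp only [map_mul, map_inv, Pi.mul_apply, Pi.inv_apply] at this
        rwa [mul_inv_eq_one] at this
      let χ : (ι → Perm (Fin n)) →* ℤˣ :=
        { toFun := fun p => Perm.sign (φ (s p) i)
          map_one' := by rw [key 1 1 (by simp)]; simp
          map_mul' := fun p q => by
            rw [key (s p * s q) (p * q) (fun j hj => by simp [hs p j hj, hs q j hj])]; simp }
      obtain ⟨S, hS, hS'⟩ := odoni_char_pi χ
      have hT : i ∉ S := by
        intro hiS
        have e := hS' i hiS
        have e2 : ∀ q, χ (Pi.mulSingle i q) = Perm.sign q := fun q => DFunLike.congr_fun e q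
        obtain ⟨γ, hγ⟩ := h2 {i} (by simp)
        apply hγ
        rw [Finset.prod_singleton, ← e2]
        change Perm.sign (φ (s _) i) = 1
        rw [key 1 _ (fun j hj => by
          have : j ≠ i := fun h => hi (h ▸ hj)
          simp [this])]
        simp
      obtain ⟨γ, hγ⟩ := h2 (insert i S) (by simp)
      apply hγ
      rw [Finset.prod_insert hT, ← hS, ← key γ (φ γ) (fun _ _ => rfl)]
      exact Int.units_mul_self _
end OdoniGroup
open Polynomial

section OdoniPoly
noncomputable def odoniG {R : Type*} [CommRing R] (ℓ : ℕ) (t : Fin ℓ → R) : R[X] :=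
  X ^ ℓ + ∑ i : Fin ℓ, C (t i) * X ^ (ℓ - 1 - (i : ℕ))

theorem odoniG_map {R S : Type*} [CommRing R] [CommRing S] (ℓ : ℕ) (t : Fin ℓ → R) (φ : R →+* S) :
    (odoniG ℓ t).map φ = odoniG ℓ (fun i => φ (t i)) := by
  simp [odoniG, Polynomial.map_sum]

theorem odoniG_sum_degree {R : Type*} [CommRing R] (ℓ : ℕ) (hℓ : 1 ≤ ℓ) (t : Fin ℓ → R) (a : R) :
    (∑ i : Fin ℓ, C (t i) * X ^ (ℓ - 1 - (i : ℕ)) - C a : R[X]).degree < ℓ := by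
  refine lt_of_le_of_lt (degree_sub_le _ _) (max_lt ?_ ?_)
  · refine (degree_sum_le _ _).trans_lt ((Finset.sup_lt_iff (by exact_mod_cast WithBot.bot_lt_coe ℓ)).2 fun i _ => ?_)
    refine lt_of_le_of_lt (degree_C_mul_X_pow_le _ _) ?_
    have : ℓ - 1 - (i : ℕ) < ℓ := by omega
    exact_mod_cast this
  · refine lt_of_le_of_lt degree_C_le ?_
    exact_mod_cast hℓ

theorem odoniG_sub_monic {R : Type*} [CommRing R] (ℓ : ℕ) (hℓ : 1 ≤ ℓ) (t : Fin ℓ → R) (a : R) :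
    (odoniG ℓ t - C a).Monic := by
  rw [odoniG, add_sub_assoc]
  exact monic_X_pow_add (odoniG_sum_degree ℓ hℓ t a)

theorem odoniG_sub_natDegree {R : Type*} [CommRing R] [Nontrivial R] (ℓ : ℕ) (hℓ : 1 ≤ ℓ)
    (t : Fin ℓ → R) (a : R) :
    (odoniG ℓ t - C a).natDegree = ℓ := by
  rw [odoniG, add_sub_assoc]
  refine natDegree_eq_of_degree_eq_some ?_
  rw [degree_add_eq_left_of_degree_lt] <;> rw [degree_X_pow]
  exact odoniG_sum_degree ℓ hℓ t a

noncomputable def odoniD {R : Type*} [CommRing R] (ℓ : ℕ) (t : Fin ℓ → R) (a : R) : R :=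
  resultant (odoniG ℓ t - C a) (derivative (odoniG ℓ t - C a)) ℓ (ℓ - 1)

theorem odoniD_map {R S : Type*} [CommRing R] [CommRing S] (ℓ : ℕ) (t : Fin ℓ → R) (a : R)
    (φ : R →+* S) :
    φ (odoniD ℓ t a) = odoniD ℓ (fun i => φ (t i)) (φ a) := by
  rw [odoniD, odoniD, ← resultant_map_map, ← derivative_map, Polynomial.map_sub, odoniG_map, map_C]

theorem odoniD_special {E : Type*} [Field E] [CharZero E] (m : ℕ) (γ a : E)  :
    odoniD (m + 2) (fun i : Fin (m + 2) => if i = 0 then (C (-((m + 2) * γ / (m + 1))) : E[X])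
      else if i = Fin.last (m + 1) then X else 0) (C a) =
    C ((m + 2 : E) ^ (m + 2)) *
      ((X - C a) ^ m * (X - C a - C (γ ^ (m + 2) / (m + 1)))) := by
  have hm : (m + 1 : E) ≠ 0 := by exact_mod_cast Nat.succ_ne_zero m
  have hm2 : (m + 2 : E) ≠ 0 := by exact_mod_cast Nat.succ_ne_zero (m + 1)
  set c : E := -((m + 2) * γ / (m + 1)) with hc
  have hg : odoniG (m + 2) (fun i : Fin (m + 2) => if i = 0 then (C c : E[X])
      else if i = Fin.last (m + 1) then X else 0) - C (C a) =
      X ^ (m + 2) + C (C c) * X ^ (m + 1) + C (X - C a) := by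
    rw [odoniG, Fin.sum_univ_succ, Fin.sum_univ_castSucc]
    have : ∀ i : Fin m, (Fin.castSucc i).succ ≠ Fin.last (m + 1) := fun i h => by
      have := congrArg Fin.val h
      have h2 := i.2
      simp at this
      omega
    simp [this, Fin.succ_ne_zero]
    ring
  have hdeg : (odoniG (m + 2) (fun i : Fin (m + 2) => if i = 0 then (C c : E[X])
      else if i = Fin.last (m + 1) then X else 0) - C (C a)).natDegree ≤ m + 2 :=
    (odoniG_sub_natDegree _ (by omega) _ _).le
  rw [odoniD]
  rw [hg] at hdeg ⊢
  have hd : derivative (X ^ (m + 2) + C (C c) * X ^ (m + 1) + C (X - C a) : E[X][X]) =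
      C (C ((m : E) + 2)) * (X ^ m * (X - C (C γ))) := by
    have e : C ((m : E) + 2) * C γ = -(C c * C ((m : E) + 1) : E[X]) := by
      rw [← C_mul, ← C_mul, ← C_neg, hc]
      congr 1
      field_simp
    have e' : C (C ((m : E) + 2)) * C (C γ) = -(C (C c) * C (C ((m : E) + 1)) : E[X][X]) := by
      rw [← C_mul, e]; simp
    simp only [derivative_add, derivative_X_pow, derivative_C_mul, derivative_C]
    have e1 : C (C ((m : E) + 2)) * (X ^ m * (X - C (C γ))) = C (C ((m : E) + 2)) * X ^ (m + 1) - C (C ((m : E) + 2)) * C (C γ) * X ^ m  := by ring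
    rw [e1, e']
    have h2 : (C (2 : E) : E[X]) = 2 := map_ofNat C 2
    simp [h2]
    ring
  rw [hd, resultant_C_mul_right]
  have h1 : m + 2 - 1 = (X ^ m : E[X][X]).natDegree + (X - C (C γ) : E[X][X]).natDegree := by
    rw [natDegree_X_pow, natDegree_X_sub_C]; rfl
  rw [h1, resultant_mul_right _ _ _ _ hdeg, natDegree_X_pow, natDegree_X_sub_C,
    resultant_X_pow_right _ _ _ hdeg, resultant_X_sub_C_right _ _ _ hdeg]
  have e3 : γ ^ (m + 2) + c * γ ^ (m + 1) = - (γ ^ (m + 2) / (m + 1)) := by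
    rw [hc]; field_simp; ring
  have e4 : eval (C γ) (X ^ (m + 2) + C (C c) * X ^ (m + 1) + C (X - C a) : E[X][X]) =
      X - C a - C (γ ^ (m + 2) / (m + 1)) := by
    rw [eval_add, eval_add, eval_mul, eval_pow, eval_pow, eval_X, eval_C, eval_C, ← C_pow, ← C_pow,
      ← C_mul, ← C_add, e3, C_neg]; ring
  rw [e4]
  have e5 : eval (0 : E[X]) (X ^ (m + 2) + C (C c) * X ^ (m + 1) + C (X - C a) : E[X][X]) = X - C a := by
    simp
  rw [coeff_zero_eq_eval_zero, e5]
  have : ((-1 : E[X]) ^ ((m + 2) * m)) * (-1) ^ (m + 2) = 1 := by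
    rw [← pow_add, ← mul_add_one]
    exact Even.neg_one_pow (by rw [mul_comm]; exact Nat.even_mul_succ_self (m + 1))
  rw [← C_pow]
  linear_combination (C ((m + 2 : E) ^ (m + 2)) * ((X - C a) ^ m * (X - C a - C (γ ^ (m + 2) / (m + 1))))) * this

theorem odoni_nonsq {E ι : Type*} [Field E] [CharZero E] (ℓ : ℕ) (hℓ : 2 ≤ ℓ) (α : ι → E)
    (hα : Function.Injective α) (S : Finset ι) (hS : S.Nonempty) (a : MvPolynomial (Fin ℓ) E) (ε : ℤˣ)
    (h : a ^ 2 = (ε : ℤ) * ∏ i ∈ S, odoniD ℓ MvPolynomial.X (MvPolynomial.C (α i))) : False := by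
  classical
  obtain ⟨m, rfl⟩ := Nat.exists_eq_add_of_le' hℓ
  have hm : (m + 1 : E) ≠ 0 := by exact_mod_cast Nat.succ_ne_zero m
  have hm2 : (m + 2 : E) ≠ 0 := by exact_mod_cast Nat.succ_ne_zero (m + 1)
  obtain ⟨γ, hγ⟩ : ∃ γ : E, ∀ i ∈ S, ∀ j ∈ S, α i + γ ^ (m + 2) / (m + 1) ≠ α j := by
    have hinj : Function.Injective (fun n : ℕ => (n : E) ^ (m + 2) / (m + 1)) := by
      intro x y hxy
      simp only [div_left_inj' hm] at hxy
      have : x ^ (m + 2) = y ^ (m + 2) := by exact_mod_cast hxy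
      exact Nat.pow_left_injective (by omega) this
    obtain ⟨_, ⟨n, rfl⟩, hn⟩ := (Set.infinite_range_of_injective hinj).exists_notMem_finset
      ((S ×ˢ S).image fun p => α p.2 - α p.1)
    refine ⟨n, fun i hi j hj e => hn ?_⟩
    exact Finset.mem_image.2 ⟨(i, j), by simp [hi, hj], by rw [← e]; ring⟩
  set v := γ ^ (m + 2) / (m + 1) with hv
  let φ : MvPolynomial (Fin (m + 2)) E →+* E[X] := (MvPolynomial.aeval
    (fun i : Fin (m + 2) => if i = 0 then (C (-((m + 2) * γ / (m + 1))) : E[X])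
      else if i = Fin.last (m + 1) then X else 0)).toRingHom
  have h' := congrArg φ h
  have key : ∀ i, φ (odoniD (m + 2) MvPolynomial.X (MvPolynomial.C (α i))) =
      C ((m + 2 : E) ^ (m + 2)) * ((X - C (α i)) ^ m * (X - C (α i) - C v)) := by
    intro i
    rw [odoniD_map, ← odoniD_special m γ (α i)]
    simp [φ]
  rw [map_pow, map_mul, map_prod, Finset.prod_congr rfl fun i _ => key i, map_intCast] at h'
  obtain ⟨i₀, hi₀⟩ := hS
  set b := φ a
  set W : E[X] := ((ε : ℤ) : E[X]) * (C ((m + 2 : E) ^ (m + 2)) * (X - C (α i₀)) ^ m *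
    ∏ i ∈ S.erase i₀, (C ((m + 2 : E) ^ (m + 2)) * ((X - C (α i)) ^ m * (X - C (α i) - C v))))
    with hW
  have hbW : b ^ 2 = (X - C (α i₀ + v)) * W := by
    rw [h', ← Finset.mul_prod_erase _ _ hi₀, hW, C_add]
    ring
  have hroot : (X - C (α i₀ + v)) ∣ b ^ 2 := ⟨W, hbW⟩
  have hb : (X - C (α i₀ + v)) ∣ b := (prime_X_sub_C _).dvd_of_dvd_pow hroot
  have hsq : (X - C (α i₀ + v)) * (X - C (α i₀ + v)) ∣ b ^ 2 := by
    rw [sq]; exact mul_dvd_mul hb hb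
  rw [hbW] at hsq
  have hWd := (mul_dvd_mul_iff_left (X_sub_C_ne_zero _)).1 hsq
  have hW0 : W.eval (α i₀ + v) = 0 := dvd_iff_isRoot.1 hWd
  have hvi : ∀ i ∈ S, α i₀ + v - α i ≠ 0 := fun i hi => sub_ne_zero.2 (hγ i₀ hi₀ i hi)
  revert hW0
  rw [hW]
  simp only [eval_mul, eval_prod, eval_pow, eval_sub, eval_X, eval_C, eval_intCast]
  refine mul_ne_zero ?_ (mul_ne_zero (mul_ne_zero (pow_ne_zero _ hm2) (pow_ne_zero _ (hvi _ hi₀))) ?_)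
  · rcases Int.units_eq_one_or ε with rfl | rfl <;> simp
  · refine Finset.prod_ne_zero_iff.2 fun i hi => ?_
    have hiS := Finset.mem_of_mem_erase hi
    refine mul_ne_zero (pow_ne_zero _ hm2) (mul_ne_zero (pow_ne_zero _ (hvi _ hiS)) ?_)
    intro e
    have : α i₀ = α i := by linear_combination e
    exact Finset.ne_of_mem_erase hi (hα this).symm
theorem odoniG_vieta {R : Type*} [CommRing R] (ℓ : ℕ) :
    odoniG ℓ (fun k : Fin ℓ => (-1) ^ ((k : ℕ) + 1) * MvPolynomial.esymm (Fin ℓ) R ((k : ℕ) + 1)) =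
      ∏ k : Fin ℓ, (X - C (MvPolynomial.X k : MvPolynomial (Fin ℓ) R)) := by
  have h := Multiset.prod_X_sub_X_eq_sum_esymm
    ((Finset.univ : Finset (Fin ℓ)).val.map (MvPolynomial.X : _ → MvPolynomial (Fin ℓ) R))
  rw [Multiset.map_map] at h
  have e : ((Finset.univ : Finset (Fin ℓ)).val.map
    ((fun t => X - C t) ∘ (MvPolynomial.X : _ → MvPolynomial (Fin ℓ) R))).prod =
      ∏ k : Fin ℓ, (X - C (MvPolynomial.X k : MvPolynomial (Fin ℓ) R)) := rfl
  rw [← e, h, Finset.sum_range_succ']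
  simp only [Multiset.card_map, Finset.card_val, Finset.card_univ, Fintype.card_fin]
  rw [Finset.sum_range, odoniG, add_comm]
  congr 1
  · refine Finset.sum_congr rfl fun i _ => ?_
    rw [MvPolynomial.esymm_eq_multiset_esymm, Nat.sub_sub, add_comm 1]
    simp [mul_assoc]
  · simp [Multiset.esymm]

theorem odoniG_shift {R : Type*} [CommRing R] (ℓ : ℕ) (hℓ : 1 ≤ ℓ) (t : Fin ℓ → R) (a : R) :
    odoniG ℓ (fun k => t k + if (k : ℕ) + 1 = ℓ then a else 0) - C a = odoniG ℓ t := by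
  obtain ⟨m, rfl⟩ := Nat.exists_eq_add_of_le' hℓ
  rw [odoniG, odoniG, Fin.sum_univ_castSucc, Fin.sum_univ_castSucc]
  have : ∀ i : Fin m, ¬ ((i : ℕ) = m) := fun i => i.2.ne
  simp [this]
  ring

theorem odoni_generic_card (E : Type*) [Field E] (ℓ : ℕ) (hℓ : 1 ≤ ℓ) (a : E) :
    ℓ.factorial ≤ Nat.card (odoniG ℓ (fun i => algebraMap (MvPolynomial (Fin ℓ) E)
      (FractionRing (MvPolynomial (Fin ℓ) E)) (MvPolynomial.X i)) -
      C (algebraMap (MvPolynomial (Fin ℓ) E) (FractionRing (MvPolynomial (Fin ℓ) E))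
        (MvPolynomial.C a))).Gal := by
  classical
  set R := MvPolynomial (Fin ℓ) E with hR
  set K := FractionRing R with hK
  let M := FractionRing R
  set p : K[X] := odoniG ℓ (fun i => algebraMap R K (MvPolynomial.X i)) -
    C (algebraMap R K (MvPolynomial.C a)) with hp
  let ψ : R →ₐ[E] R := MvPolynomial.aeval fun k : Fin ℓ =>
    (-1) ^ ((k : ℕ) + 1) * MvPolynomial.esymm (Fin ℓ) E ((k : ℕ) + 1) +
      if (k : ℕ) + 1 = ℓ then MvPolynomial.C a else 0
  have hψX : ∀ k, ψ (MvPolynomial.X k) =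
    (-1) ^ ((k : ℕ) + 1) * MvPolynomial.esymm (Fin ℓ) E ((k : ℕ) + 1) +
      if (k : ℕ) + 1 = ℓ then MvPolynomial.C a else 0 := fun k => MvPolynomial.aeval_X _ _
  have hψinj : Function.Injective ψ := by
    let θ : R →ₐ[E] R := MvPolynomial.aeval fun k : Fin ℓ =>
      (-1) ^ ((k : ℕ) + 1) * MvPolynomial.X k + if (k : ℕ) + 1 = ℓ then MvPolynomial.C a else 0
    let thetaInv : R →ₐ[E] R := MvPolynomial.aeval fun k : Fin ℓ =>
      (-1) ^ ((k : ℕ) + 1) * (MvPolynomial.X k - if (k : ℕ) + 1 = ℓ then MvPolynomial.C a else 0)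
    have h1 : thetaInv.comp θ = AlgHom.id E R := by
      refine MvPolynomial.algHom_ext fun k => ?_
      have : ((-1 : R) ^ ((k : ℕ) + 1)) * (-1) ^ ((k : ℕ) + 1) = 1 := by
        rw [← mul_pow, neg_mul_neg, one_mul, one_pow]
      have h2 : ∀ q : Prop, [Decidable q] → thetaInv (if q then MvPolynomial.C a else 0) =
          if q then MvPolynomial.C a else 0 := by
        intro q _
        split_ifs
        · exact MvPolynomial.algHom_C _ _
        · exact map_zero _
      have h3 : thetaInv (MvPolynomial.X k) = (-1) ^ ((k : ℕ) + 1) * (MvPolynomial.X k -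
        if (k : ℕ) + 1 = ℓ then MvPolynomial.C a else 0) := MvPolynomial.aeval_X _ _
      have h4 : θ (MvPolynomial.X k) = (-1) ^ ((k : ℕ) + 1) * MvPolynomial.X k +
        if (k : ℕ) + 1 = ℓ then MvPolynomial.C a else 0 := MvPolynomial.aeval_X _ _
      rw [AlgHom.comp_apply, h4, map_add, h2, map_mul, h3, map_pow, map_neg, map_one,
        AlgHom.id_apply]
      linear_combination (MvPolynomial.X k - if (k : ℕ) + 1 = ℓ then MvPolynomial.C a else 0) * this
    have hθ : Function.Injective θ := by
      intro x y hxy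
      have := congrArg thetaInv hxy
      rw [← AlgHom.comp_apply, ← AlgHom.comp_apply, h1] at this
      exact this
    let ω : R →ₐ[E] R := (Subalgebra.val _).comp (MvPolynomial.esymmAlgHom (Fin ℓ) E ℓ)
    have hω : Function.Injective ω := Subtype.val_injective.comp
      (MvPolynomial.esymmAlgHom_fin_injective E le_rfl)
    have : ψ = ω.comp θ := by
      refine MvPolynomial.algHom_ext fun k => ?_
      have h2 : ∀ q : Prop, [Decidable q] → ω (if q then MvPolynomial.C a else 0) =
          if q then MvPolynomial.C a else 0 := by
        intro q _
        split_ifs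
        · exact MvPolynomial.algHom_C _ _
        · exact map_zero _
      have h4 : θ (MvPolynomial.X k) = (-1) ^ ((k : ℕ) + 1) * MvPolynomial.X k +
        if (k : ℕ) + 1 = ℓ then MvPolynomial.C a else 0 := MvPolynomial.aeval_X _ _
      have h5 : ω (MvPolynomial.X k) = MvPolynomial.esymm (Fin ℓ) E ((k : ℕ) + 1) := by
        exact congrArg Subtype.val (MvPolynomial.aeval_X (R := E) (fun i : Fin ℓ =>
          (⟨MvPolynomial.esymm (Fin ℓ) E (i + 1), MvPolynomial.esymm_isSymmetric (Fin ℓ) E _⟩ :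
            MvPolynomial.symmetricSubalgebra (Fin ℓ) E)) k)
      rw [hψX, AlgHom.comp_apply, h4, map_add, h2, map_mul, h5, map_pow, map_neg, map_one]
    rw [this]
    exact hω.comp hθ
  let Ψ : K →+* M := IsFractionRing.map (K := K) (L := M) (j := ψ.toRingHom) hψinj
  have hΨ : ∀ r : R, Ψ (algebraMap R K r) = algebraMap R M (ψ r) := fun r =>
    IsLocalization.map_eq _ r
  let _ : Algebra K M := Ψ.toAlgebra
  have hpM : p.map (algebraMap K M) = ∏ k : Fin ℓ, (X - C (algebraMap R M (MvPolynomial.X k))) := by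
    change p.map Ψ = _
    rw [hp, Polynomial.map_sub, odoniG_map, map_C]
    simp only [hΨ, hψX]
    have : ψ (MvPolynomial.C a) = MvPolynomial.C a := MvPolynomial.algHom_C _ _
    rw [this]
    have h := congrArg (Polynomial.map (algebraMap R M)) ((odoniG_shift ℓ hℓ _ _).trans
      (odoniG_vieta (R := E) ℓ) : _ - C (MvPolynomial.C a) = _)
    rw [Polynomial.map_sub, odoniG_map, map_C, Polynomial.map_prod] at h
    simpa using h
  have : Fact ((p.map (algebraMap K M)).Splits) := ⟨by
    rw [hpM]
    exact Splits.prod fun i _ => Splits.X_sub_C _⟩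
  have hp0 : p ≠ 0 := (odoniG_sub_monic ℓ hℓ _ _).ne_zero
  have hx : ∀ k : Fin ℓ, algebraMap R M (MvPolynomial.X k) ∈ p.rootSet M := by
    intro k
    rw [mem_rootSet']
    refine ⟨(hpM ▸ (monic_prod_of_monic _ _ fun i _ => monic_X_sub_C _).ne_zero), ?_⟩
    rw [aeval_def, ← eval_map, hpM, eval_prod]
    exact Finset.prod_eq_zero (Finset.mem_univ k) (by simp)
  let s : Equiv.Perm (Fin ℓ) → (M ≃+* M) := fun q =>
    IsFractionRing.ringEquivOfRingEquiv (MvPolynomial.renameEquiv E q).toRingEquiv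
  have hs : ∀ q (r : R), s q (algebraMap R M r) = algebraMap R M (MvPolynomial.rename q r) :=
    fun q r => IsFractionRing.ringEquivOfRingEquiv_algebraMap _ _
  have hfix : ∀ (q : Equiv.Perm (Fin ℓ)) (r : R), MvPolynomial.rename q (ψ r) = ψ r := by
    intro q r
    have : ((MvPolynomial.rename q : R →ₐ[E] R).comp ψ) = ψ := by
      refine MvPolynomial.algHom_ext fun k => ?_
      rw [AlgHom.comp_apply, hψX, map_add, map_mul, MvPolynomial.rename_esymm]
      congr 1
      · simp
      · split_ifs <;> simp
    exact DFunLike.congr_fun this r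
  have hcomm : ∀ q (z : K), s q (algebraMap K M z) = algebraMap K M z := by
    intro q z
    change s q (Ψ z) = Ψ z
    obtain ⟨x, y, hy, rfl⟩ := IsFractionRing.div_surjective (A := R) z
    rw [map_div₀, hΨ, hΨ, map_div₀, hs, hs, hfix, hfix]
  let σ : Equiv.Perm (Fin ℓ) → (M ≃ₐ[K] M) := fun q => AlgEquiv.ofRingEquiv (hcomm q)
  have hinj : Function.Injective fun q => Polynomial.Gal.restrict p M (σ q) := by
    intro q q' h
    ext1 k
    have e : ∀ q, (Gal.galActionHom p M (Gal.restrict p M (σ q)) ⟨_, hx k⟩ : M) =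
        algebraMap R M (MvPolynomial.X (q k)) := by
      intro q
      rw [Gal.galActionHom_restrict]
      change s q (algebraMap R M (MvPolynomial.X k)) = _
      rw [hs, MvPolynomial.rename_X]
    have h1 := e q
    have h2 := e q'
    simp only at h
    rw [h, h2] at h1
    exact (MvPolynomial.X_injective (IsFractionRing.injective R M h1)).symm
  have : Finite p.Gal := inferInstanceAs (Finite (p.SplittingField ≃ₐ[K] p.SplittingField))
  calc ℓ.factorial = Nat.card (Equiv.Perm (Fin ℓ)) := by
        rw [Nat.card_eq_fintype_card, Fintype.card_perm, Fintype.card_fin]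
    _ ≤ _ := Nat.card_le_card_of_injective _ hinj
end OdoniPoly
end OdoniAll

open Polynomial

section OdoniMain
theorem odoni_vandermonde {L : Type*} [Field L] (ℓ : ℕ) (r : Fin ℓ → L) (q : L[X])
    (hq : q = ∏ a, (X - C (r a))) :
    resultant q (derivative q) ℓ (ℓ - 1) =
      (((∏ i : Fin ℓ, ∏ _j ∈ Finset.Ioi i, (-1 : ℤˣ) : ℤˣ) : ℤ) : L) *
        (∏ i, ∏ j ∈ Finset.Ioi i, (r i - r j)) ^ 2 := by
  classical
  have hmon : q.Monic := hq ▸ monic_prod_of_monic _ _ fun i _ => monic_X_sub_C _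
  have hspl : q.Splits := hq ▸ Splits.prod fun i _ => Splits.X_sub_C _
  have hdeg : q.natDegree = ℓ := by
    rw [hq, natDegree_prod_of_monic _ _ fun i _ => monic_X_sub_C _]; simp
  have hroots : q.roots = Finset.univ.val.map r := by
    rw [hq, ← roots_multiset_prod_X_sub_C (Finset.univ.val.map r), Multiset.map_map]
    rfl
  have h := resultant_eq_prod_eval q (derivative q) (ℓ - 1)
    (by simpa [hdeg] using natDegree_derivative_le q) hspl
  rw [hdeg, hmon.leadingCoeff, one_pow, one_mul, hroots, Multiset.map_map] at h
  rw [h]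
  have e : (Multiset.map ((fun x => eval x (derivative q)) ∘ r) Finset.univ.val).prod =
      ∏ a, eval (r a) (derivative q) := rfl
  rw [e]
  have e2 : ∀ a, eval (r a) (derivative q) = ∏ j ∈ ({a}ᶜ : Finset (Fin ℓ)), (r a - r j) := by
    intro a
    rw [hq, derivative_prod_finset, eval_finsetSum, Finset.sum_eq_single a]
    · rw [eval_mul, eval_prod]
      simp [Finset.compl_singleton]
    · intro b _ hb
      rw [eval_mul, eval_prod, Finset.prod_eq_zero (i := a)]
      · simp
      · simp [hb.symm]
      · simp
    · simp
  rw [Finset.prod_congr rfl fun a _ => e2 a]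
  rw [← Finset.prod_prod_Ioi_mul_eq_prod_prod_off_diag (fun j i => r i - r j)]
  push_cast
  rw [← Finset.prod_pow, ← Finset.prod_mul_distrib]
  refine Finset.prod_congr rfl fun i _ => ?_
  rw [← Finset.prod_pow, ← Finset.prod_mul_distrib]
  refine Finset.prod_congr rfl fun j _ => ?_
  ring

theorem odoni_abstract {K ι : Type*} [Field K] [CharZero K] [Fintype ι] (ℓ : ℕ) (hℓ : 2 ≤ ℓ)
    (p : ι → K[X]) (hmon : ∀ i, (p i).Monic) (hdeg : ∀ i, (p i).natDegree = ℓ)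
    (hcard : ∀ i, ℓ.factorial ≤ Nat.card (p i).Gal)
    (hns : ∀ S : Finset ι, S.Nonempty → ∀ (k : K) (ε : ℤˣ),
      k ^ 2 ≠ ((ε : ℤ) : K) * ∏ i ∈ S, resultant (p i) (derivative (p i)) ℓ (ℓ - 1)) :
    Nat.card (∏ i, p i).Gal = ℓ.factorial ^ Fintype.card ι := by
  classical
  set Q := ∏ i, p i with hQ
  have hQ0 : Q ≠ 0 := (monic_prod_of_monic _ _ fun i _ => hmon i).ne_zero
  set L := Q.SplittingField with hL
  have hsp : ∀ i, ((p i).map (algebraMap K L)).Splits := fun i =>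
    (SplittingField.splits Q).of_dvd (Polynomial.map_ne_zero hQ0)
      ((map_dvd_map' _).mpr (Finset.dvd_prod_of_mem _ (Finset.mem_univ i)))
  have hfact : ∀ i, Fact ((p i).map (algebraMap K L)).Splits := fun i => ⟨hsp i⟩
  have hrc : ∀ i, Fintype.card ((p i).rootSet L) = ℓ := by
    intro i
    have h1 : Fintype.card ((p i).rootSet L) ≤ ℓ := by
      have := card_roots' ((p i).map (algebraMap K L))
      rw [natDegree_map, hdeg] at this
      simp_rw [rootSet_def, Finset.coe_sort_coe, Fintype.card_coe]
      exact (Multiset.toFinset_card_le _).trans this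
    refine le_antisymm h1 ?_
    have h2 : Nat.card (p i).Gal ≤ Nat.card (Equiv.Perm ((p i).rootSet L)) :=
      Nat.card_le_card_of_injective _ (Gal.galActionHom_injective (p i) L)
    rw [Nat.card_eq_fintype_card (α := Equiv.Perm _), Fintype.card_perm] at h2
    by_contra hlt
    push Not at hlt
    have h3 := (hcard i).trans h2
    have h4 : (ℓ - 1).factorial < ℓ.factorial :=
      Nat.factorial_lt_of_lt (by omega) (by omega)
    have h5 := Nat.factorial_le (show Fintype.card ((p i).rootSet L) ≤ ℓ - 1 by omega)
    omega
  have r : ∀ i, Fin ℓ ≃ (p i).rootSet L := fun i =>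
    (Fintype.equivFinOfCardEq (hrc i)).symm
  have hbij : ∀ i, Function.Bijective (Gal.galActionHom (p i) L) := by
    intro i
    have : Finite (p i).Gal :=
      inferInstanceAs (Finite ((p i).SplittingField ≃ₐ[K] (p i).SplittingField))
    refine (Nat.bijective_iff_injective_and_card _).2 ⟨Gal.galActionHom_injective (p i) L, ?_⟩
    refine le_antisymm (Nat.card_le_card_of_injective _ (Gal.galActionHom_injective (p i) L)) ?_
    rw [Nat.card_eq_fintype_card (α := Equiv.Perm _), Fintype.card_perm, hrc]
    exact hcard i
  have hnormal : Normal K L := Normal.of_isSplittingField Q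
  have hgal : IsGalois K L := ⟨⟩
  let φ : (L ≃ₐ[K] L) →* (ι → Equiv.Perm (Fin ℓ)) := MonoidHom.pi fun i =>
    ((r i).symm.permCongrHom.toMonoidHom.comp (Gal.galActionHom (p i) L)).comp
      (Gal.restrict (p i) L)
  have hφ : ∀ σ i a, (r i (φ σ i a) : L) = σ (r i a) := by
    intro σ i a
    rw [← Gal.galActionHom_restrict (p i) L σ (r i a)]
    change ((r i ((r i).symm (Gal.galActionHom (p i) L (Gal.restrict (p i) L σ) (r i a))) :
      (p i).rootSet L) : L) = _
    rw [Equiv.apply_symm_apply]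
  have hprod : ∀ i, (p i).map (algebraMap K L) = ∏ a, (X - C (r i a : L)) := by
    intro i
    have hnd : ((p i).map (algebraMap K L)).roots.Nodup := by
      have := (card_rootSet_eq_natDegree_iff_of_splits (hmon i).ne_zero (hsp i)).1
        ((hrc i).trans (hdeg i).symm)
      exact nodup_roots this.map
    conv_lhs => rw [(hsp i).eq_prod_roots_of_monic ((hmon i).map _)]
    have e : ((p i).map (algebraMap K L)).roots = ((p i).map (algebraMap K L)).roots.toFinset.val := by
      rw [Multiset.toFinset_val, Multiset.dedup_eq_self.2 hnd]
    rw [e]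
    change ∏ x ∈ ((p i).map (algebraMap K L)).roots.toFinset, (X - C x) = _
    rw [← Finset.prod_coe_sort]
    exact (Fintype.prod_equiv (r i) _ _ fun a => rfl).symm
  have hinj : Function.Injective φ := by
    intro σ τ h
    refine Gal.ext (p := Q) fun x hx => ?_
    have hx0 : aeval x Q = 0 := (mem_rootSet.1 hx).2
    have hx1 : ∏ i, aeval x (p i) = 0 := by
      rw [← map_prod]; exact hx0
    obtain ⟨i, -, hi⟩ := Finset.prod_eq_zero_iff.1 hx1
    have hxi : x ∈ (p i).rootSet L := mem_rootSet.2 ⟨(hmon i).ne_zero, hi⟩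
    have e := hφ σ i ((r i).symm ⟨x, hxi⟩)
    rw [h, hφ τ] at e
    simp only [Equiv.apply_symm_apply] at e
    exact e.symm
  have hsurj : Function.Surjective φ := by
    refine odoni_goursat φ ?_ ?_
    · intro i q
      obtain ⟨g, hg⟩ := (hbij i).2 ((r i).permCongr q)
      obtain ⟨σ, hσ⟩ := Gal.restrict_surjective (p i) L g
      refine ⟨σ, ?_⟩
      ext1 a
      apply (r i).injective
      apply Subtype.ext
      rw [hφ, ← Gal.galActionHom_restrict (p i) L σ (r i a), hσ, hg]
      simp [Equiv.permCongr_apply]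
    · intro S hS
      by_contra hcon
      push Not at hcon
      let δ : ι → L := fun i => ∏ a, ∏ b ∈ Finset.Ioi a, ((r i a : L) - r i b)
      have hδ : ∀ σ : L ≃ₐ[K] L, ∀ i, σ (δ i) = ((Equiv.Perm.sign (φ σ i) : ℤ) : L) * δ i := by
        intro σ i
        have := (φ σ i).prod_Ioi_comp_eq_sign_mul_prod
          (f := fun a b => ((r i a : L) - r i b)) (fun a b => by ring)
        rw [← this]
        simp only [δ, map_prod, map_sub, hφ]
      have hfix : ∀ σ : L ≃ₐ[K] L, σ (∏ i ∈ S, δ i) = ∏ i ∈ S, δ i := by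
        intro σ
        rw [map_prod, Finset.prod_congr rfl fun i _ => hδ σ i, Finset.prod_mul_distrib]
        have h1 := congrArg (fun u : ℤˣ => ((u : ℤ) : L)) (hcon σ)
        simp only [Units.coe_prod, Int.cast_prod, Units.val_one, Int.cast_one] at h1
        rw [h1, one_mul]
      obtain ⟨k, hk⟩ := (IsGalois.mem_range_algebraMap_iff_fixed _).2 hfix
      set ε₀ : ℤˣ := ∏ i : Fin ℓ, ∏ _j ∈ Finset.Ioi i, (-1 : ℤˣ) with hε₀
      have hres : ∀ i, algebraMap K L (resultant (p i) (derivative (p i)) ℓ (ℓ - 1)) =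
          ((ε₀ : ℤ) : L) * δ i ^ 2 := by
        intro i
        rw [← resultant_map_map, ← derivative_map]
        exact odoni_vandermonde ℓ (fun a => (r i a : L)) _ (hprod i)
      refine hns S hS k (ε₀ ^ S.card) ?_
      apply (algebraMap K L).injective
      rw [map_pow, hk, map_mul, map_prod, Finset.prod_congr rfl fun i _ => hres i,
        Finset.prod_mul_distrib, Finset.prod_const, map_intCast, Finset.prod_pow, ← mul_assoc]
      have : (((ε₀ ^ S.card : ℤˣ) : ℤ) : L) * ((ε₀ : ℤ) : L) ^ S.card = 1 := by
        have h1 : ((ε₀ : ℤ) : L) * ((ε₀ : ℤ) : L) = 1 := by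
          rw [← Int.cast_mul, ← Units.val_mul, Int.units_mul_self, Units.val_one, Int.cast_one]
        rw [Units.val_pow_eq_pow_val, Int.cast_pow, ← mul_pow, h1, one_pow]
      rw [this, one_mul]
  calc Nat.card Q.Gal = Nat.card (L ≃ₐ[K] L) := rfl
    _ = Nat.card (ι → Equiv.Perm (Fin ℓ)) := Nat.card_congr (Equiv.ofBijective φ ⟨hinj, hsurj⟩)
    _ = _ := by
      rw [Nat.card_eq_fintype_card, Fintype.card_pi]
      simp [Fintype.card_perm]

theorem odoni_geometric {E ι : Type*} [Field E] [CharZero E] [Fintype ι] (ℓ : ℕ) (hℓ : 2 ≤ ℓ)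
    (α : ι → E) (hα : Function.Injective α) :
    Nat.card (∏ i, (odoniG ℓ (fun i => algebraMap (MvPolynomial (Fin ℓ) E)
      (FractionRing (MvPolynomial (Fin ℓ) E)) (MvPolynomial.X i)) -
      C (algebraMap (MvPolynomial (Fin ℓ) E) (FractionRing (MvPolynomial (Fin ℓ) E))
        (MvPolynomial.C (α i))))).Gal = ℓ.factorial ^ Fintype.card ι := by
  have : CharZero (FractionRing (MvPolynomial (Fin ℓ) E)) :=
    charZero_of_injective_algebraMap (IsFractionRing.injective (MvPolynomial (Fin ℓ) E) _)
  refine odoni_abstract ℓ hℓ _ (fun i => odoniG_sub_monic ℓ (by omega) _ _)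
    (fun i => odoniG_sub_natDegree ℓ (by omega) _ _)
    (fun i => odoni_generic_card E ℓ (by omega) (α i)) ?_
  intro S hS k ε h
  have e : ∀ i, resultant (odoniG ℓ (fun i => algebraMap (MvPolynomial (Fin ℓ) E)
      (FractionRing (MvPolynomial (Fin ℓ) E)) (MvPolynomial.X i)) -
      C (algebraMap (MvPolynomial (Fin ℓ) E) (FractionRing (MvPolynomial (Fin ℓ) E))
        (MvPolynomial.C (α i)))) (derivative (odoniG ℓ (fun i => algebraMap (MvPolynomial (Fin ℓ) E)
      (FractionRing (MvPolynomial (Fin ℓ) E)) (MvPolynomial.X i)) -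
      C (algebraMap (MvPolynomial (Fin ℓ) E) (FractionRing (MvPolynomial (Fin ℓ) E))
        (MvPolynomial.C (α i))))) ℓ (ℓ - 1) = algebraMap (MvPolynomial (Fin ℓ) E)
      (FractionRing (MvPolynomial (Fin ℓ) E)) (odoniD ℓ MvPolynomial.X (MvPolynomial.C (α i))) := by
    intro i
    rw [odoniD_map]; rfl
  rw [Finset.prod_congr rfl fun i _ => e i, ← map_prod, ← map_intCast (algebraMap (MvPolynomial (Fin ℓ) E)
      (FractionRing (MvPolynomial (Fin ℓ) E))), ← map_mul] at h
  obtain ⟨a, rfl⟩ := IsIntegrallyClosed.exists_algebraMap_eq_of_isIntegral_pow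
    (R := MvPolynomial (Fin ℓ) E) (x := k) (n := 2) (by norm_num) (h ▸ isIntegral_algebraMap)
  rw [← map_pow] at h
  exact odoni_nonsq ℓ hℓ α hα S hS a ε (IsFractionRing.injective _ _ h)
end OdoniMain

section OdoniTower
theorem odoni_dvd {ι R : Type*} [Fintype ι] [CommSemiring R] (h : ι → R) (Q : R)
    (hQ : Q = ∏ i, h i) (i : ι) : h i ∣ Q :=
  hQ ▸ Finset.dvd_prod_of_mem h (Finset.mem_univ i)

theorem odoni_split {F E K0 K L : Type*} [Field F] [Field E] [Field K0] [Field K] [Field L]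
    [Algebra F E] [Algebra F K0] [Algebra F K] [Algebra K0 K] [Algebra E K] [Algebra K L]
    [Algebra K0 L] [IsScalarTower K0 K L]
    [IsScalarTower F K0 K] [IsScalarTower F E K] (f : F[X]) [IsSplittingField F E f]
    (g : K0[X]) (hg1 : 1 ≤ g.natDegree)
    (hgen : IntermediateField.adjoin K0 (Set.range (algebraMap E K)) = ⊤)
    (P : K0[X]) (Q : K[X]) (hPm : P.Monic) (hQm : Q.Monic) (hPQ : P.map (algebraMap K0 K) = Q)
    (hdvd : ∀ a ∈ f.rootSet E, g.map (algebraMap K0 K) - C (algebraMap E K a) ∣ Q)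
    [IsSplittingField K L Q] : IsSplittingField K0 L P := by
  rw [isSplittingField_iff_intermediateField]
  have hroot : P.rootSet L = Q.rootSet L := by
    ext x
    rw [mem_rootSet, mem_rootSet, ← hPQ, aeval_map_algebraMap]
    simp [hPm.ne_zero, (hPm.map (algebraMap K0 K)).ne_zero]
  constructor
  · have := IsSplittingField.splits L Q
    rw [IsScalarTower.algebraMap_eq K0 K L, ← Polynomial.map_map, hPQ]
    exact this
  · rw [hroot]
    set M := IntermediateField.adjoin K0 (Q.rootSet L) with hM
    have hα : ∀ a ∈ f.rootSet E, algebraMap K L (algebraMap E K a) ∈ M := by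
      intro a ha
      set q := g.map (algebraMap K0 K) - C (algebraMap E K a) with hq
      replace hdvd := hdvd a ha
      rw [← hq] at hdvd
      have hqs : (q.map (algebraMap K L)).Splits :=
        (IsSplittingField.splits L Q).of_dvd (Polynomial.map_ne_zero hQm.ne_zero)
          ((map_dvd_map' _).mpr hdvd)
      have hqd : q.natDegree = g.natDegree := by
        rw [hq, natDegree_sub_C, natDegree_map]
      obtain ⟨b, hb⟩ := hqs.exists_eval_eq_zero (by
        rw [degree_map]
        intro h0
        have := natDegree_eq_zero_iff_degree_le_zero.2 h0.le
        omega)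
      rw [eval_map_algebraMap] at hb
      have hbM : b ∈ M := by
        refine IntermediateField.subset_adjoin _ _ (mem_rootSet.2 ⟨hQm.ne_zero, ?_⟩)
        obtain ⟨c, hc⟩ := hdvd
        rw [hc, map_mul, hb, zero_mul]
      have : algebraMap K L (algebraMap E K a) = aeval b g := by
        rw [hq, map_sub, aeval_map_algebraMap, aeval_C, sub_eq_zero] at hb
        exact hb.symm
      rw [this]
      rw [show b = algebraMap M L ⟨b, hbM⟩ from rfl, aeval_algebraMap_apply]
      exact Subtype.prop _
    have hE : ∀ e : E, algebraMap K L (algebraMap E K e) ∈ M := by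
      intro e
      have he : e ∈ Algebra.adjoin F (f.rootSet E) := by
        rw [IsSplittingField.adjoin_rootSet E f]; trivial
      induction he using Algebra.adjoin_induction with
      | mem x hx => exact hα x hx
      | algebraMap r =>
        rw [← IsScalarTower.algebraMap_apply F E K, IsScalarTower.algebraMap_apply F K0 K,
          ← IsScalarTower.algebraMap_apply K0 K L]
        exact M.algebraMap_mem _
      | add x y _ _ hx hy => rw [map_add, map_add]; exact M.add_mem hx hy
      | mul x y _ _ hx hy => rw [map_mul, map_mul]; exact M.mul_mem hx hy
    have hK : ∀ k : K, algebraMap K L k ∈ M := by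
      intro k
      have hle : IntermediateField.adjoin K0 (Set.range (algebraMap E K)) ≤
          M.comap (IsScalarTower.toAlgHom K0 K L) := by
        rw [IntermediateField.adjoin_le_iff]
        rintro _ ⟨e, rfl⟩
        exact hE e
      rw [hgen] at hle
      exact hle (show k ∈ ⊤ from trivial)
    rw [eq_top_iff]
    intro x _
    have hx : x ∈ Algebra.adjoin K (Q.rootSet L) := by
      rw [IsSplittingField.adjoin_rootSet L Q]; trivial
    induction hx using Algebra.adjoin_induction with
    | mem x hx => exact IntermediateField.subset_adjoin _ _ hx
    | algebraMap r => exact hK r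
    | add x y _ _ hx hy => exact M.add_mem (hx trivial) (hy trivial)
    | mul x y _ _ hx hy => exact M.mul_mem (hx trivial) (hy trivial)

theorem odoni_tower {F E K0 K : Type*} [Field F] [Field E] [Field K0] [Field K] [CharZero K0]
    [CharZero K]
    [Algebra F E] [Algebra F K0] [Algebra F K] [Algebra K0 K] [Algebra E K]
    [IsScalarTower F K0 K] [IsScalarTower F E K] (f : F[X]) [IsSplittingField F E f]
    (hmon : f.Monic) (hsep : f.Separable) (g : K0[X]) (hg : ∀ a : K0, (g - C a).Monic)
    (hg1 : 1 ≤ g.natDegree)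
    (hgen : IntermediateField.adjoin K0 (Set.range (algebraMap E K)) = ⊤) :
    Nat.card ((f.map (algebraMap F K0)).comp g).Gal =
      Module.finrank K0 K *
        Nat.card (∏ i : f.rootSet E, (g.map (algebraMap K0 K) - C (algebraMap E K i))).Gal := by
  classical
  set P := (f.map (algebraMap F K0)).comp g with hP
  obtain ⟨Q, hQ⟩ : ∃ Q, Q = ∏ i : f.rootSet E, (g.map (algebraMap K0 K) - C (algebraMap E K i)) :=
    ⟨_, rfl⟩
  rw [← hQ]
  have hspE : (f.map (algebraMap F E)).Splits := IsSplittingField.splits E f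
  have hfE : f.map (algebraMap F E) = ∏ i : f.rootSet E, (X - C (i : E)) := by
    have hnd : (f.map (algebraMap F E)).roots.Nodup := nodup_roots hsep.map
    conv_lhs => rw [hspE.eq_prod_roots_of_monic (hmon.map _)]
    have e : (f.map (algebraMap F E)).roots = (f.map (algebraMap F E)).roots.toFinset.val := by
      rw [Multiset.toFinset_val, Multiset.dedup_eq_self.2 hnd]
    rw [e]
    change ∏ x ∈ (f.map (algebraMap F E)).roots.toFinset, (X - C x) = _
    rw [← Finset.prod_coe_sort]
    rfl
  have hPQ : P.map (algebraMap K0 K) = Q := by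
    rw [hP, hQ, Polynomial.map_comp, Polynomial.map_map, ← IsScalarTower.algebraMap_eq,
      IsScalarTower.algebraMap_eq F E K, ← Polynomial.map_map, hfE, Polynomial.map_prod,
      prod_comp]
    simp
  have hgm : g.Monic := by simpa using hg 0
  have hPm : P.Monic := (hmon.map _).comp hgm (by omega)
  have hQm : Q.Monic := hPQ ▸ hPm.map _
  have hspl : IsSplittingField K0 Q.SplittingField P := by
    refine odoni_split f g hg1 hgen P Q hPm hQm hPQ fun a ha => ?_
    exact odoni_dvd
      (fun i : f.rootSet E => g.map (algebraMap K0 K) - C (algebraMap E K i)) Q hQ ⟨a, ha⟩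
  have hcard : ∀ {k : Type _} [Field k] [CharZero k] (p : k[X]),
      Nat.card p.Gal = Module.finrank k p.SplittingField := by
    intro k _ _ p
    have hn : Normal k p.SplittingField := Normal.of_isSplittingField p
    have : IsGalois k p.SplittingField := ⟨⟩
    exact IsGalois.card_aut_eq_finrank k p.SplittingField
  have hcard' : Nat.card Q.Gal = Module.finrank K Q.SplittingField := by
    have hn : Normal K Q.SplittingField := Normal.of_isSplittingField Q
    have : IsGalois K Q.SplittingField := ⟨⟩
    exact IsGalois.card_aut_eq_finrank K Q.SplittingField
  rw [hcard P, hcard', Module.finrank_mul_finrank]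
  exact (IsSplittingField.algEquiv Q.SplittingField P).symm.toLinearEquiv.finrank_eq

attribute [local instance] MvPolynomial.algebraMvPolynomial FractionRing.liftAlgebra

theorem odoni_gen (F E : Type*) [Field F] [Field E] [Algebra F E] (ℓ : ℕ) :
    IntermediateField.adjoin (FractionRing (MvPolynomial (Fin ℓ) F))
      (Set.range (algebraMap E (FractionRing (MvPolynomial (Fin ℓ) E)))) = ⊤ := by
  set M := IntermediateField.adjoin (FractionRing (MvPolynomial (Fin ℓ) F))
      (Set.range (algebraMap E (FractionRing (MvPolynomial (Fin ℓ) E)))) with hM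
  have h : ∀ p : MvPolynomial (Fin ℓ) E, algebraMap _ (FractionRing (MvPolynomial (Fin ℓ) E)) p ∈ M := by
    intro p
    induction p using MvPolynomial.induction_on with
    | C a => exact IntermediateField.subset_adjoin _ _ ⟨a, rfl⟩
    | add p q hp hq => rw [map_add]; exact M.add_mem hp hq
    | mul_X p i hp =>
      rw [map_mul]
      refine M.mul_mem hp ?_
      have : algebraMap (MvPolynomial (Fin ℓ) E) (FractionRing (MvPolynomial (Fin ℓ) E)) (MvPolynomial.X i) =
        algebraMap (FractionRing (MvPolynomial (Fin ℓ) F)) (FractionRing (MvPolynomial (Fin ℓ) E))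
          (algebraMap (MvPolynomial (Fin ℓ) F) _ (MvPolynomial.X i)) := by
        rw [← IsScalarTower.algebraMap_apply, IsScalarTower.algebraMap_apply (MvPolynomial (Fin ℓ) F) (MvPolynomial (Fin ℓ) E)]
        simp
      rw [this]
      exact M.algebraMap_mem _
  rw [eq_top_iff]
  intro x _
  obtain ⟨a, b, hb, rfl⟩ := IsFractionRing.div_surjective (A := MvPolynomial (Fin ℓ) E) x
  exact M.div_mem (h a) (h b)

theorem odoni_final (F E : Type*) [Field F] [CharZero F] [Field E] [Algebra F E] [CharZero E]
    (f : F[X]) [IsSplittingField F E f] (d : ℕ) (hmonic : f.Monic) (hdeg : f.natDegree = d)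
    (hsq : Squarefree f) (ℓ : ℕ) (hℓ : 2 ≤ ℓ) :
    Nat.card (((f.map (algebraMap F (FractionRing (MvPolynomial (Fin ℓ) F)))).comp
          (odoniG ℓ fun i => (algebraMap (MvPolynomial (Fin ℓ) F)
                (FractionRing (MvPolynomial (Fin ℓ) F)) (MvPolynomial.X i)))).Gal) =
      Nat.card f.Gal * ℓ.factorial ^ d := by
  classical
  have hsep : f.Separable := PerfectField.separable_iff_squarefree.2 hsq
  have : CharZero (FractionRing (MvPolynomial (Fin ℓ) F)) :=
    charZero_of_injective_algebraMap (IsFractionRing.injective (MvPolynomial (Fin ℓ) F) _)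
  have : CharZero (FractionRing (MvPolynomial (Fin ℓ) E)) :=
    charZero_of_injective_algebraMap
      (IsFractionRing.injective (MvPolynomial (Fin ℓ) E) _)
  have htow : IsScalarTower F (FractionRing (MvPolynomial (Fin ℓ) F))
    (FractionRing (MvPolynomial (Fin ℓ) E)) := inferInstance
  have hX : ∀ i, algebraMap (FractionRing (MvPolynomial (Fin ℓ) F))
      (FractionRing (MvPolynomial (Fin ℓ) E))
      (algebraMap (MvPolynomial (Fin ℓ) F) _ (MvPolynomial.X i)) =
        algebraMap (MvPolynomial (Fin ℓ) E) _ (MvPolynomial.X i) := by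
    intro i
    rw [← IsScalarTower.algebraMap_apply,
      IsScalarTower.algebraMap_apply (MvPolynomial (Fin ℓ) F) (MvPolynomial (Fin ℓ) E)]
    simp
  rw [odoni_tower (E := E)
    (K := FractionRing (MvPolynomial (Fin ℓ) E)) f hmonic hsep _
    (fun a => odoniG_sub_monic ℓ (by omega) _ a) ?_ (odoni_gen F E ℓ)]
  · have h1 : Module.finrank (FractionRing (MvPolynomial (Fin ℓ) F))
        (FractionRing (MvPolynomial (Fin ℓ) E)) = Nat.card f.Gal := by
      have : FiniteDimensional F E := IsSplittingField.finiteDimensional E f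
      rw [Gal.card_of_separable hsep,
        ← (IsSplittingField.algEquiv E f).toLinearEquiv.finrank_eq, Module.finrank, Module.finrank,
        Algebra.IsAlgebraic.rank_fractionRing_mvPolynomial, Cardinal.toNat_lift]
    have h2 := odoni_geometric ℓ hℓ (fun i : f.rootSet E => (i : E))
      Subtype.val_injective
    have h3 : Fintype.card (f.rootSet E) = d := by
      rw [card_rootSet_eq_natDegree hsep (IsSplittingField.splits E f), hdeg]
    rw [h1]
    rw [h3] at h2
    rw [← h2, odoniG_map]
    simp only [hX]
    rfl
  · have := odoniG_sub_natDegree ℓ (by omega) (fun i => (algebraMap (MvPolynomial (Fin ℓ) F)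
                (FractionRing (MvPolynomial (Fin ℓ) F)) (MvPolynomial.X i))) 0
    rw [map_zero, sub_zero] at this
    omega
end OdoniTower

theorem stmt13 (F : Type*) [Field F] [CharZero F]
    (f : F[X]) (d : ℕ) (hmonic : f.Monic) (hdeg : f.natDegree = d) (hd : 1 ≤ d)
    (hsq : Squarefree f) (ℓ : ℕ) (hℓ : 2 ≤ ℓ) :
    Nat.card
        (((f.map (algebraMap F (FractionRing (MvPolynomial (Fin ℓ) F)))).comp
          (X ^ ℓ + ∑ i : Fin ℓ,
            C (algebraMap (MvPolynomial (Fin ℓ) F)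
                (FractionRing (MvPolynomial (Fin ℓ) F)) (MvPolynomial.X i)) *
              X ^ (ℓ - 1 - (i : ℕ)))).Gal) =
      Nat.card f.Gal * ℓ.factorial ^ d := by
  exact odoni_final F f.SplittingField f d hmonic hdeg hsq ℓ hℓ
end

section
/- Let K be a number field with ring of integers O_K, let f ∈ O_K[x] be monic and separable of degree D ≥ 1 whose Galois group over K has order M, and let ℓ ≥ 2. Then there exist infinitely many monic polynomials g ∈ O_K[x] of degree ℓ such that the Galois group of f∘g over K has order M·(ℓ!)^D. -/
open Polynomial NumberField


theorem grp_card {G X S : Type*} [Group G] [Fintype X] [Fintype S] [DecidableEq X] [DecidableEq S]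
    [MulAction G X] [FaithfulSMul G X] (π : X → S) (ℓ : ℕ)
    (hπ : ∀ (g : G) x, π (g • x) = π x)
    (hfib : ∀ s, Fintype.card {x // π x = s} = ℓ)
    (hT : ∀ x y, π x = π y → ∃ g : G, g • x = y)
    (hSw : ∀ s, ∃ (g : G) (x y : X), x ≠ y ∧ π x = s ∧ π y = s ∧
      MulAction.toPermHom G X g = Equiv.swap x y)
    (hSt : ∀ s, ∃ r, π r = s ∧ ∀ x y, π x = s → π y = s → x ≠ r → y ≠ r →
      ∃ g : G, g • r = r ∧ g • x = y) :
    Nat.card G = ℓ.factorial ^ Fintype.card S := by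
  set φ := MulAction.toPermHom G X with hφ
  have hinj : Function.Injective φ := MulAction.toPerm_injective
  -- conjugation of swaps
  have hconj : ∀ (g : G) x y, Equiv.swap x y ∈ φ.range → Equiv.swap (g • x) (g • y) ∈ φ.range := by
    rintro g x y ⟨k, hk⟩
    refine ⟨g * k * g⁻¹, ?_⟩
    rw [map_mul, map_mul, hk, map_inv]
    have := Equiv.swap_apply_apply (φ g) x y
    simp only [hφ, MulAction.toPermHom_apply, MulAction.toPerm_apply] at this ⊢
    rw [this]
  have htrans : ∀ x y z, Equiv.swap x y ∈ φ.range → Equiv.swap y z ∈ φ.range →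
      Equiv.swap x z ∈ φ.range := by
    intro x y z h1 h2
    by_cases hxy : x = y
    · subst hxy; exact h2
    by_cases hxz : x = z
    · subst hxz; rw [Equiv.swap_self]; exact one_mem _
    have := Equiv.swap_mul_swap_mul_swap hxy hxz
    rw [Equiv.swap_comm x z, ← this]
    exact mul_mem (mul_mem h2 h1) h2
  have hall : ∀ x y, π x = π y → Equiv.swap x y ∈ φ.range := by
    have key : ∀ s, ∃ r, ∀ x, π x = s → Equiv.swap r x ∈ φ.range := by
      intro s
      obtain ⟨r, hr, hst⟩ := hSt s
      obtain ⟨g, a, b, hab, ha, hb, hg⟩ := hSw s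
      obtain ⟨k, hk⟩ := hT a r (ha.trans hr.symm)
      have h1 : Equiv.swap r (k • b) ∈ φ.range := by
        rw [← hk]; exact hconj k a b ⟨g, hg⟩
      have h2 : k • b ≠ r := by
        rw [← hk]; intro h; exact hab (MulAction.injective k h).symm
      refine ⟨r, fun x hx => ?_⟩
      by_cases hxr : x = r
      · subst hxr; rw [Equiv.swap_self]; exact one_mem _
      obtain ⟨m, hm1, hm2⟩ := hst (k • b) x (by rw [hπ, hb]) hx h2 hxr
      have := hconj m _ _ h1
      rwa [hm1, hm2] at this
    intro x y hxy
    obtain ⟨r, hr⟩ := key (π y)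
    refine htrans x r y ?_ (hr y rfl)
    rw [Equiv.swap_comm]; exact hr x hxy
  have hrange : ∀ τ : Equiv.Perm X, τ ∈ φ.range ↔ π ∘ τ = π := by
    intro τ
    constructor
    · rintro ⟨g, rfl⟩
      ext x; exact hπ g x
    · intro h
      have : τ ∈ Subgroup.closure {σ : Equiv.Perm X | σ.IsSwap ∧ σ ∈ φ.range} := by
        rw [mem_closure_isSwap (fun f hf => hf.1)]
        refine ⟨Set.toFinite _, fun x => ?_⟩
        by_cases hx : τ x = x
        · rw [hx]; exact MulAction.mem_orbit_self x
        refine ⟨⟨Equiv.swap x (τ x), Subgroup.subset_closure ⟨⟨x, τ x, Ne.symm hx, rfl⟩, ?_⟩⟩, ?_⟩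
        · exact hall _ _ (congrFun h x).symm
        · simp [Subgroup.smul_def]
      exact (Subgroup.closure_le _).2 (fun σ hσ => hσ.2) this
  have e : G ≃ {τ : Equiv.Perm X // π ∘ τ = π} :=
    (Equiv.ofInjective φ hinj).trans (Equiv.subtypeEquivRight (fun τ => hrange τ))
  rw [Nat.card_congr e, Nat.card_eq_fintype_card, DomMulAct.stabilizer_card]
  simp [hfib]

theorem decomp_conj {L N : Type*} [Field L] [Field N] [NumberField L] [NumberField N] [Algebra L N]
    [IsGalois L N] (Q : Ideal (𝓞 L)) [Q.IsMaximal] (P : Ideal (𝓞 N)) [P.IsMaximal]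
    [P.LiesOver Q] (φ : (𝓞 L ⧸ Q)[X]) (hφ : Irreducible φ) (x y : 𝓞 N)
    (hx : aeval (Ideal.Quotient.mk P x) φ = 0) (hy : aeval (Ideal.Quotient.mk P y) φ = 0) :
    ∃ σ : Gal(N/L), Ideal.Quotient.mk P (σ • x) = Ideal.Quotient.mk P y ∧
      ∀ (a : 𝓞 L) (z : 𝓞 N), Ideal.Quotient.mk P z = Ideal.Quotient.mk P (algebraMap _ _ a) →
        Ideal.Quotient.mk P (σ • z) = Ideal.Quotient.mk P z := by
  let _ := Ideal.Quotient.field Q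
  let _ := Ideal.Quotient.field P
  have hn : Normal (𝓞 L ⧸ Q) (𝓞 N ⧸ P) := Ideal.Quotient.normal Gal(N/L) Q P
  have h1 : minpoly (𝓞 L ⧸ Q) (Ideal.Quotient.mk P x) = φ * C (φ.leadingCoeff⁻¹) :=
    (minpoly.eq_of_irreducible hφ hx).symm
  have hy' : aeval (Ideal.Quotient.mk P y) (minpoly (𝓞 L ⧸ Q) (Ideal.Quotient.mk P x)) = 0 := by
    rw [h1, map_mul, hy, zero_mul]
  obtain ⟨τ, hτ⟩ := minpoly.exists_algEquiv_of_root' (hn.isAlgebraic _) hy'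
  obtain ⟨σ, hσ⟩ := Ideal.Quotient.stabilizerHom_surjective Gal(N/L) Q P τ
  have key : ∀ z, Ideal.Quotient.mk P ((σ : Gal(N/L)) • z) = τ (Ideal.Quotient.mk P z) := by
    intro z
    rw [← hσ]; rfl
  refine ⟨σ, ?_, fun a z hz => ?_⟩
  · rw [key, hτ]
  · rw [key, hz]
    exact τ.commutes (Ideal.Quotient.mk Q a)

theorem inertia_ne {L N : Type*} [Field L] [Field N] [NumberField L] [NumberField N] [Algebra L N]
    [IsGalois L N] (Q : Ideal (𝓞 L)) [Q.IsMaximal] (P : Ideal (𝓞 N)) [P.IsMaximal]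
    [P.LiesOver Q] (hQ : Q ≠ ⊥) (a : 𝓞 L) (haQ : a ∈ Q) (haQ2 : a ∉ Q ^ 2)
    (haP : algebraMap (𝓞 L) (𝓞 N) a ∈ P ^ 2) :
    ∃ σ : Gal(N/L), σ ∈ P.inertia Gal(N/L) ∧ σ ≠ 1 := by
  by_contra hcon
  push Not at hcon
  have hcard : Nat.card (P.inertia Gal(N/L)) = 1 := by
    rw [Subgroup.card_eq_one, Subgroup.eq_bot_iff_forall]
    exact hcon
  have : Finite (𝓞 L ⧸ Q) := Ring.HasFiniteQuotients.finiteQuotient hQ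
  rw [Ideal.card_inertia_eq_ramificationIdxIn Q P,
    Ideal.ramificationIdxIn_eq_ramificationIdx Q P Gal(N/L),
    ← Ideal.ramificationIdx'_eq_ramificationIdx Q P hQ] at hcard
  have hlt : Q.map (algebraMap (𝓞 L) (𝓞 N)) ≤ P := by
    rw [Ideal.map_le_iff_le_comap]; exact (Ideal.over_def P Q).le
  have hsup : Q ≤ Ideal.span {a} ⊔ Q ^ 2 := by
    intro c hc
    obtain ⟨d, e, he, rfl⟩ := Ideal.exists_mul_add_mem_pow_succ hQ (i := 1) a c (by simpa using haQ)
      (by simpa using haQ2) (by simpa using hc)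
    refine add_mem (Ideal.mem_sup_left ?_) (Ideal.mem_sup_right he)
    exact Ideal.mul_mem_right _ _ (Ideal.mem_span_singleton_self a)
  have hle : Q.map (algebraMap (𝓞 L) (𝓞 N)) ≤ P ^ 2 := by
    refine (Ideal.map_mono hsup).trans ?_
    rw [Ideal.map_sup, Ideal.map_pow, Ideal.map_span, Set.image_singleton]
    refine sup_le ?_ (Ideal.pow_right_mono hlt 2)
    rwa [Ideal.span_singleton_le_iff_mem]
  have hne : Q.map (algebraMap (𝓞 L) (𝓞 N)) ≠ ⊥ := Ideal.map_ne_bot_of_ne_bot hQ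
  have hPb : P ≠ ⊥ := ne_bot_of_le_ne_bot hne hlt
  rw [Ideal.IsDedekindDomain.ramificationIdx'_eq_multiplicity hne inferInstance] at hcard
  have hfin : FiniteMultiplicity P (Q.map (algebraMap (𝓞 L) (𝓞 N))) :=
    FiniteMultiplicity.of_prime_left (Ideal.prime_of_isPrime hPb inferInstance) hne
  have := hfin.pow_dvd_iff_le_multiplicity.1 (Ideal.dvd_iff_le.2 hle)
  lia

theorem sq_dvd_of_roots {B : Type*} [CommRing B] [IsDomain B] (F : B[X]) (x y : B) (hxy : x ≠ y)
    (hx : F.eval x = 0) (hy : F.eval y = 0) : (X - C x) * (X - C y) ∣ F := by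
  obtain ⟨H, rfl⟩ := dvd_iff_isRoot.2 hx
  rw [eval_mul] at hy
  have h2 : H.eval y = 0 := by
    rcases mul_eq_zero.1 hy with h | h
    · simp only [eval_sub, eval_X, eval_C] at h
      exact absurd (sub_eq_zero.1 h).symm hxy
    · exact h
  exact mul_dvd_mul_left _ (dvd_iff_isRoot.2 h2)

theorem cube_dvd_of_roots {B : Type*} [CommRing B] [IsDomain B] (F : B[X]) (x y z : B) (hxy : x ≠ y)
    (hxz : x ≠ z) (hyz : y ≠ z)
    (hx : F.eval x = 0) (hy : F.eval y = 0) (hz : F.eval z = 0) :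
    (X - C x) * ((X - C y) * (X - C z)) ∣ F := by
  obtain ⟨H, rfl⟩ := dvd_iff_isRoot.2 hx
  rw [eval_mul] at hy hz
  have h2 : H.eval y = 0 := by
    rcases mul_eq_zero.1 hy with h | h
    · simp only [eval_sub, eval_X, eval_C] at h
      exact absurd (sub_eq_zero.1 h).symm hxy
    · exact h
  have h3 : H.eval z = 0 := by
    rcases mul_eq_zero.1 hz with h | h
    · simp only [eval_sub, eval_X, eval_C] at h
      exact absurd (sub_eq_zero.1 h).symm hxz
    · exact h
  exact mul_dvd_mul_left _ (sq_dvd_of_roots H y z hyz h2 h3)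

theorem not_sq_dvd_of_sep {k : Type*} [CommRing k] [IsDomain k] (F : k[X]) (hF : F.Separable) (a : k) :
    ¬ (X - C a) * (X - C a) ∣ F := fun h =>
  not_isUnit_X_sub_C a (hF.squarefree _ h)

theorem red_inj {B : Type*} [CommRing B] [IsDomain B] (P : Ideal B) [P.IsPrime] (F : B[X])
    (hF : (F.map (Ideal.Quotient.mk P)).Separable) (x y : B)
    (hx : F.eval x = 0) (hy : F.eval y = 0)
    (h : Ideal.Quotient.mk P x = Ideal.Quotient.mk P y) : x = y := by
  by_contra hxy
  have := Polynomial.map_dvd (Ideal.Quotient.mk P) (sq_dvd_of_roots F x y hxy hx hy)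
  simp only [Polynomial.map_mul, Polynomial.map_sub, map_X, map_C, h] at this
  exact not_sq_dvd_of_sep _ hF _ this

/-- collisions only at the double root -/
theorem red_double {B : Type*} [CommRing B] [IsDomain B] (P : Ideal B) [P.IsPrime] (F : B[X])
    (t : B ⧸ P) (u : (B ⧸ P)[X]) (hu : u.Separable)
    (hF : F.map (Ideal.Quotient.mk P) = (X - C t) ^ 2 * u) (x y : B) (hxy : x ≠ y)
    (hx : F.eval x = 0) (hy : F.eval y = 0)
    (h : Ideal.Quotient.mk P x = Ideal.Quotient.mk P y) : Ideal.Quotient.mk P x = t := by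
  by_contra hxt
  have := Polynomial.map_dvd (Ideal.Quotient.mk P) (sq_dvd_of_roots F x y hxy hx hy)
  simp only [Polynomial.map_mul, Polynomial.map_sub, map_X, map_C, ← h] at this
  rw [hF, ← pow_two] at this
  refine not_sq_dvd_of_sep _ hu (Ideal.Quotient.mk P x) ?_
  have hp : Prime (X - C (Ideal.Quotient.mk P x)) := prime_X_sub_C _
  rw [← pow_two]
  refine hp.pow_dvd_of_dvd_mul_left 2 (fun hd => hxt ?_) this
  have := hp.dvd_of_dvd_pow hd
  rw [dvd_iff_isRoot] at this
  simpa [sub_eq_zero] using this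

theorem red_triple {B : Type*} [CommRing B] [IsDomain B] (P : Ideal B) [P.IsPrime] (F : B[X])
    (t : B ⧸ P) (u : (B ⧸ P)[X]) (hu : u.eval t ≠ 0)
    (hF : F.map (Ideal.Quotient.mk P) = (X - C t) ^ 2 * u) (x y z : B) (hxy : x ≠ y)
    (hxz : x ≠ z) (hyz : y ≠ z)
    (hx : F.eval x = 0) (hy : F.eval y = 0) (hz : F.eval z = 0)
    (htx : Ideal.Quotient.mk P x = t) (hty : Ideal.Quotient.mk P y = t)
    (htz : Ideal.Quotient.mk P z = t) : False := by
  have := Polynomial.map_dvd (Ideal.Quotient.mk P) (cube_dvd_of_roots F x y z hxy hxz hyz hx hy hz)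
  simp only [Polynomial.map_mul, Polynomial.map_sub, map_X, map_C, htx, hty, htz] at this
  rw [hF, ← mul_assoc, ← pow_two] at this
  have h2 := (mul_dvd_mul_iff_left (pow_ne_zero 2 (X_sub_C_ne_zero t))).1 this
  exact hu (dvd_iff_isRoot.1 h2)

theorem sq_mem {B : Type*} [CommRing B] [IsDomain B] (P : Ideal B) [P.IsPrime] (F : B[X])
    (t : B) (u : (B ⧸ P)[X]) 
    (hF : F.map (Ideal.Quotient.mk P) = (X - C (Ideal.Quotient.mk P t)) ^ 2 * u) (x : B) 
    (hx : F.eval x = 0)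
    (htx : Ideal.Quotient.mk P x = Ideal.Quotient.mk P t) : F.eval t ∈ P ^ 2 := by
  obtain ⟨H, rfl⟩ := dvd_iff_isRoot.2 hx
  rw [Polynomial.map_mul, Polynomial.map_sub, map_X, map_C, htx, pow_two, mul_assoc] at hF
  have h2 := mul_left_cancel₀ (X_sub_C_ne_zero _) hF
  have h3 : (H.map (Ideal.Quotient.mk P)).eval (Ideal.Quotient.mk P t) = 0 := by
    rw [h2]; simp
  rw [eval_map, eval₂_at_apply, Ideal.Quotient.eq_zero_iff_mem] at h3
  rw [eval_mul, pow_two]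
  refine Ideal.mul_mem_mul ?_ h3
  simp only [eval_sub, eval_X, eval_C]
  exact Ideal.Quotient.eq.1 htx.symm


theorem gal_card {L N : Type*} [Field L] [Field N] [NumberField L] [NumberField N] [Algebra L N]
    [IsGalois L N] (S : Finset (𝓞 L)) (g : (𝓞 L)[X]) (ℓ : ℕ) (hg : g.Monic)
    (hdeg : g.natDegree = ℓ) (hℓ : 1 ≤ ℓ)
    (hsplit : ∀ α ∈ S, ((g - C α).map (algebraMap (𝓞 L) N)).Splits)
    (hgen : ∀ σ : Gal(N/L), (∀ α ∈ S, ∀ x : 𝓞 N, aeval x g = algebraMap (𝓞 L) (𝓞 N) α → σ • x = x)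
      → σ = 1)
    (hT : ∀ α ∈ S, ∃ Q : Ideal (𝓞 L), Q.IsMaximal ∧
      Irreducible ((g - C α).map (Ideal.Quotient.mk Q)) ∧
      ((g - C α).map (Ideal.Quotient.mk Q)).Separable)
    (hS : ∀ α ∈ S, ∃ Q : Ideal (𝓞 L), Q.IsMaximal ∧ ∃ (t : 𝓞 L) (h : (𝓞 L ⧸ Q)[X]),
      (g - C α).map (Ideal.Quotient.mk Q) = (X - C (Ideal.Quotient.mk Q t)) * h ∧ Irreducible h ∧
      ((g - C α).map (Ideal.Quotient.mk Q)).Separable)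
    (hI : ∀ α ∈ S, ∃ Q : Ideal (𝓞 L), Q.IsMaximal ∧ Q ≠ ⊥ ∧ ∃ (t : 𝓞 L) (u : (𝓞 L ⧸ Q)[X]),
      (g - C α).map (Ideal.Quotient.mk Q) = (X - C (Ideal.Quotient.mk Q t)) ^ 2 * u ∧
      u.Separable ∧ u.eval (Ideal.Quotient.mk Q t) ≠ 0 ∧ (g - C α).eval t ∉ Q ^ 2 ∧
      ∀ β ∈ S, β ≠ α → ((g - C β).map (Ideal.Quotient.mk Q)).Separable) :
    Nat.card Gal(N/L) = ℓ.factorial ^ S.card := by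
  classical
  have hmonic : ∀ α : 𝓞 L, (g - C α).Monic := fun α =>
    hg.sub_of_left (lt_of_le_of_lt degree_C_le (natDegree_pos_iff_degree_pos.1 (by lia)))
  have hndeg : ∀ α : 𝓞 L, (g - C α).natDegree = ℓ := fun α => by rw [natDegree_sub_C, hdeg]
  have hinj : Function.Injective (algebraMap (𝓞 L) (𝓞 N)) := FaithfulSMul.algebraMap_injective _ _
  -- primes above
  have hP : ∀ Q : Ideal (𝓞 L), Q.IsMaximal → ∃ P : Ideal (𝓞 N), P.IsMaximal ∧ P.LiesOver Q :=
    fun Q hQ => Ideal.exists_maximal_ideal_liesOver_of_isIntegral Q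
  -- the lifted polynomial
  let F : 𝓞 L → (𝓞 N)[X] := fun α => (g - C α).map (algebraMap (𝓞 L) (𝓞 N))
  have hFr : ∀ α (x : 𝓞 N), (F α).eval x = 0 ↔ aeval x g = algebraMap (𝓞 L) (𝓞 N) α := by
    intro α x
    rw [eval_map_algebraMap, map_sub, aeval_C, sub_eq_zero]
  have hFmap : ∀ α (Q : Ideal (𝓞 L)) (P : Ideal (𝓞 N)) [P.LiesOver Q],
      (F α).map (Ideal.Quotient.mk P) =
      ((g - C α).map (Ideal.Quotient.mk Q)).map (algebraMap (𝓞 L ⧸ Q) (𝓞 N ⧸ P)) := by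
    intro α Q P _
    rw [Polynomial.map_map, Polynomial.map_map]
    rfl
  have hFt : ∀ α (t : 𝓞 L), (F α).eval (algebraMap _ _ t) = algebraMap _ _ ((g - C α).eval t) := by
    intro α t
    rw [eval_map, eval₂_at_apply]
  have hexist : ∀ α ∈ S, ∀ (P : Ideal (𝓞 N)) [P.IsPrime] (b : 𝓞 N), (F α).eval b ∈ P →
      ∃ x : 𝓞 N, (F α).eval x = 0 ∧ Ideal.Quotient.mk P x = Ideal.Quotient.mk P b := by
    intro α hα P _ b hb
    set FN : N[X] := (g - C α).map (algebraMap (𝓞 L) N) with hFN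
    have hFN0 : FN ≠ 0 := ((hmonic α).map _).ne_zero
    have hFNF : FN = (F α).map (algebraMap (𝓞 N) N) := by
      rw [hFN, Polynomial.map_map, ← IsScalarTower.algebraMap_eq]
    have hlift : ∀ z ∈ FN.roots, ∃ x : 𝓞 N, algebraMap (𝓞 N) N x = z := by
      intro z hz
      have h1 : IsIntegral (𝓞 N) z := ⟨F α, (hmonic α).map _, by
        rw [← eval_map, ← hFNF, (mem_roots hFN0).1 hz]⟩
      exact IsIntegrallyClosed.isIntegral_iff.1 h1
    have hml : ∃ m : Multiset (𝓞 N), m.map (algebraMap (𝓞 N) N) = FN.roots := by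
      have : CanLift N (𝓞 N) (algebraMap (𝓞 N) N) (fun z => ∃ x : 𝓞 N, algebraMap (𝓞 N) N x = z) :=
        ⟨fun z h => h⟩
      exact CanLift.prf FN.roots hlift
    obtain ⟨m, hm⟩ := hml
    have hprod : F α = (m.map (fun x => Polynomial.X - C x)).prod := by
      apply map_injective _ (FaithfulSMul.algebraMap_injective (𝓞 N) N)
      have h1 : FN = (FN.roots.map (fun x => Polynomial.X - C x)).prod :=
        (hsplit α hα).eq_prod_roots_of_monic ((hmonic α).map _)
      rw [← hFNF, h1, ← hm,
        Polynomial.map_multiset_prod, Multiset.map_map, Multiset.map_map]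
      simp
    rw [hprod, eval_multiset_prod, Multiset.map_map,
      Ideal.IsPrime.multiset_prod_mem_iff_exists_mem inferInstance] at hb
    obtain ⟨y, hy, hyP⟩ := hb
    rw [Multiset.mem_map] at hy
    obtain ⟨x, hx, rfl⟩ := hy
    refine ⟨x, ?_, ?_⟩
    · rw [hprod, eval_multiset_prod, Multiset.map_map]
      exact Multiset.prod_eq_zero (Multiset.mem_map.2 ⟨x, hx, by simp⟩)
    · simp only [Function.comp, eval_sub, eval_X, eval_C] at hyP
      exact (Ideal.Quotient.eq.2 hyP).symm
  -- the set of roots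
  let X : SubMulAction Gal(N/L) (𝓞 N) :=
    { carrier := {x | ∃ α ∈ S, aeval x g = algebraMap (𝓞 L) (𝓞 N) α}
      smul_mem' := by
        rintro σ x ⟨α, hα, h⟩
        refine ⟨α, hα, ?_⟩
        have : aeval (σ • x) g = σ • aeval x g :=
          aeval_smul g σ x
        rw [this, h, smul_algebraMap] }
  have hXfin : Finite X := by
    refine Set.Finite.subset (S.finite_toSet.biUnion
      (t := fun α => ((F α).roots.toFinset : Set (𝓞 N))) (fun α _ => Finset.finite_toSet _)) ?_
    rintro x ⟨α, hα, h⟩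
    refine Set.mem_biUnion hα ?_
    rw [← hFr] at h
    simp only [Finset.mem_coe, Multiset.mem_toFinset]
    exact (mem_roots ((hmonic α).map _).ne_zero).2 h
  let _ : Fintype X := Fintype.ofFinite X
  let π : X → S := fun x => ⟨x.2.choose, x.2.choose_spec.1⟩
  have hπ : ∀ (x : X) (s : S), π x = s ↔ aeval (x : 𝓞 N) g = algebraMap (𝓞 L) (𝓞 N) s := by
    intro x s
    have h := x.2.choose_spec.2
    constructor
    · rintro rfl
      exact h
    · intro h2
      exact Subtype.ext (hinj (h.symm.trans h2))
  have hsm : ∀ (σ : Gal(N/L)) (x : X), π (σ • x) = π x := by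
    intro σ x
    rw [hπ, SubMulAction.val_smul, aeval_smul, (hπ x _).1 rfl, smul_algebraMap]
  have hfaith : FaithfulSMul Gal(N/L) X := by
    refine ⟨fun {σ τ} h => ?_⟩
    have : τ⁻¹ * σ = 1 := by
      refine hgen _ (fun α hα x hx => ?_)
      have := congrArg Subtype.val (h ⟨x, α, hα, hx⟩)
      simp only [SubMulAction.val_smul] at this
      rw [mul_smul, this, inv_smul_smul]
    exact (inv_mul_eq_one.1 this).symm
  have hfib : ∀ s, Fintype.card {x // π x = s} = ℓ := by
    intro s
    set FN : N[X] := (g - C (s : 𝓞 L)).map (algebraMap (𝓞 L) N) with hFN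
    have hFN0 : FN ≠ 0 := ((hmonic s).map _).ne_zero
    have hFNF : FN = (F s).map (algebraMap (𝓞 N) N) := by
      rw [hFN, Polynomial.map_map, ← IsScalarTower.algebraMap_eq]
    have hlift : ∀ z : N, FN.eval z = 0 → ∃ x : 𝓞 N, algebraMap (𝓞 N) N x = z := by
      intro z hz
      have h1 : IsIntegral (𝓞 N) z := ⟨F s, (hmonic s).map _, by
        rw [← eval_map, ← hFNF, hz]⟩
      exact IsIntegrallyClosed.isIntegral_iff.1 h1
    have hev : ∀ (p : (𝓞 N)[X]) (x : 𝓞 N), (p.map (algebraMap (𝓞 N) N)).eval (algebraMap _ N x) = 0 ↔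
        p.eval x = 0 := by
      intro p x
      rw [eval_map, eval₂_at_apply]
      exact map_eq_zero_iff _ (FaithfulSMul.algebraMap_injective (𝓞 N) N)
    have hnodup : FN.roots.Nodup := by
      rw [Multiset.nodup_iff_count_le_one]
      intro z
      rw [count_roots]
      by_contra hlt
      obtain ⟨h1, h2⟩ := (one_lt_rootMultiplicity_iff_isRoot hFN0).1 (not_le.1 hlt)
      obtain ⟨x, rfl⟩ := hlift z h1
      rw [IsRoot, hFNF, hev] at h1
      rw [IsRoot, hFNF, derivative_map, hev] at h2
      obtain ⟨Q, hQ, hirr, hsep⟩ := hT s s.2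
      obtain ⟨P, hPm, hPQ⟩ := hP Q hQ
      have hsep' : ((F s).map (Ideal.Quotient.mk P)).Separable := by
        rw [hFmap s Q P]; exact hsep.map
      obtain ⟨a, b, hab⟩ := hsep'
      have := congrArg (eval (Ideal.Quotient.mk P x)) hab
      rw [derivative_map, eval_add, eval_mul, eval_mul, eval_map_apply, eval_map_apply, h1, h2] at this
      simp at this
    have hcard : FN.roots.toFinset.card = ℓ := by
      rw [Multiset.toFinset_card_of_nodup hnodup, ← (hsplit s s.2).natDegree_eq_card_roots,
        (hmonic s).natDegree_map, hndeg]
    rw [← hcard, ← Fintype.card_coe]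
    refine Fintype.card_of_bijective (f := fun x => ⟨algebraMap (𝓞 N) N x.1.1, ?_⟩) ⟨?_, ?_⟩
    · rw [Multiset.mem_toFinset, mem_roots hFN0, IsRoot, hFNF, hev, hFr]
      exact (hπ _ _).1 x.2
    · intro x y hxy
      have hxy' : algebraMap (𝓞 N) N x.1.1 = algebraMap (𝓞 N) N y.1.1 := by
        simpa only [Subtype.mk.injEq] using hxy
      exact Subtype.ext (Subtype.ext (FaithfulSMul.algebraMap_injective (𝓞 N) N hxy'))
    · rintro ⟨z, hz⟩
      rw [Multiset.mem_toFinset, mem_roots hFN0, IsRoot] at hz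
      obtain ⟨x, rfl⟩ := hlift z hz
      rw [hFNF, hev, hFr] at hz
      exact ⟨⟨⟨x, s, s.2, hz⟩, (hπ _ _).2 hz⟩, rfl⟩
  have hred : ∀ (α : 𝓞 L) (Q : Ideal (𝓞 L)) (P : Ideal (𝓞 N)) [P.LiesOver Q] (x : 𝓞 N),
      (F α).eval x = 0 →
      aeval (Ideal.Quotient.mk P x) ((g - C α).map (Ideal.Quotient.mk Q)) = 0 := by
    intro α Q P _ x hx
    rw [← eval_map_algebraMap, ← hFmap α Q P, eval_map_apply, hx, map_zero]
  have hsepP : ∀ (α : 𝓞 L) (Q : Ideal (𝓞 L)) (P : Ideal (𝓞 N)) [P.LiesOver Q],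
      ((g - C α).map (Ideal.Quotient.mk Q)).Separable →
      ((F α).map (Ideal.Quotient.mk P)).Separable := by
    intro α Q P _ h
    rw [hFmap α Q P]; exact h.map
  have hroot : ∀ (x : X) (s : S), π x = s → (F s).eval (x : 𝓞 N) = 0 := fun x s h =>
    (hFr _ _).2 ((hπ x s).1 h)
  rw [grp_card (G := Gal(N/L)) π ℓ hsm hfib ?_ ?_ ?_, Fintype.card_coe]
  · intro x y hxy
    obtain ⟨Q, hQ, hirr, hsep⟩ := hT (π y) (π y).2
    obtain ⟨P, hPm, hPQ⟩ := hP Q hQ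
    obtain ⟨σ, hσ, -⟩ := decomp_conj Q P _ hirr x y (hred _ Q P _ (hroot x _ hxy))
      (hred _ Q P _ (hroot y _ rfl))
    refine ⟨σ, Subtype.ext ?_⟩
    exact red_inj P (F (π y)) (hsepP _ Q P hsep) _ _ (hroot (σ • x) _ ((hsm σ x).trans hxy))
      (hroot y _ rfl) hσ
  · intro s
    obtain ⟨Q, hQ, hQ0, t, u, hgu, hu, hut, hval, hoth⟩ := hI s s.2
    obtain ⟨P, hPm, hPQ⟩ := hP Q hQ
    set tP : 𝓞 N ⧸ P := Ideal.Quotient.mk P (algebraMap _ _ t) with htP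
    set uP : (𝓞 N ⧸ P)[X] := u.map (algebraMap (𝓞 L ⧸ Q) (𝓞 N ⧸ P)) with huP
    have halg : algebraMap (𝓞 L ⧸ Q) (𝓞 N ⧸ P) (Ideal.Quotient.mk Q t) = tP := rfl
    have hFu : (F s).map (Ideal.Quotient.mk P) = (Polynomial.X - C tP) ^ 2 * uP := by
      rw [hFmap _ Q P, hgu, Polynomial.map_mul, Polynomial.map_pow, Polynomial.map_sub, map_X,
        map_C, halg]
    have huPs : uP.Separable := hu.map
    have huPt : uP.eval tP ≠ 0 := by
      rw [huP, ← halg, eval_map_apply]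
      let _ := Ideal.Quotient.field Q
      exact (_root_.map_ne_zero _).2 hut
    -- a root congruent to t
    have hgQ : (g - C (s : 𝓞 L)).eval t ∈ Q := by
      rw [← Ideal.Quotient.eq_zero_iff_mem, ← eval_map_apply, hgu]
      simp
    obtain ⟨x₀, hx₀, hx₀t⟩ : ∃ x : 𝓞 N, (F s).eval x = 0 ∧ Ideal.Quotient.mk P x = tP := by
      refine hexist s s.2 P (algebraMap _ _ t) ?_
      rw [hFt, ← Ideal.mem_comap]
      exact (Ideal.over_def P Q).le hgQ
    have hmem := sq_mem P (F s) (algebraMap _ _ t) uP hFu x₀ hx₀ hx₀t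
    rw [hFt] at hmem
    obtain ⟨σ, hσI, hσ1⟩ := inertia_ne Q P hQ0 _ hgQ hval hmem
    have hσred : ∀ x : 𝓞 N, Ideal.Quotient.mk P (σ • x) = Ideal.Quotient.mk P x :=
      fun x => (Ideal.Quotient.mk_eq_mk_iff_sub_mem _ _).mpr (hσI x)
    have hmove : ∀ x : X, σ • x ≠ x → π x = s ∧ Ideal.Quotient.mk P x = tP := by
      intro x hx
      have hx' : ((σ • x : X) : 𝓞 N) ≠ x := fun h => hx (Subtype.ext h)
      have hs : π x = s := by
        by_contra hne
        refine hx' (red_inj P (F (π x)) (hsepP _ Q P (hoth _ (π x).2 ?_)) _ _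
          (hroot (σ • x) _ (hsm σ x)) (hroot x _ rfl) (hσred x))
        exact fun h => hne (Subtype.ext h)
      refine ⟨hs, ?_⟩
      exact red_double P (F s) tP uP huPs hFu x (σ • x : X) hx'.symm (hroot x _ hs)
        (hroot _ _ ((hsm σ x).trans hs)) (hσred x).symm
    obtain ⟨x, hx⟩ : ∃ x : X, σ • x ≠ x := by
      by_contra hcon
      push Not at hcon
      refine hσ1 (hgen σ (fun α hα x hx => ?_))
      exact congrArg Subtype.val (hcon ⟨x, α, hα, hx⟩)
    have hσσ : σ • σ • x ≠ σ • x := fun h => hx (MulAction.injective σ h)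
    have honly : ∀ z : X, σ • z ≠ z → z = x ∨ z = σ • x := by
      intro z hz
      by_contra hcon
      push Not at hcon
      obtain ⟨h1, h2⟩ := hmove x hx
      obtain ⟨h3, h4⟩ := hmove _ hσσ
      obtain ⟨h5, h6⟩ := hmove z hz
      exact red_triple P (F s) tP uP huPt hFu x (σ • x : X) z (fun h => hx (Subtype.ext h).symm)
        (fun h => hcon.1 (Subtype.ext h).symm) (fun h => hcon.2 (Subtype.ext h).symm)
        (hroot _ _ h1) (hroot _ _ h3) (hroot _ _ h5) h2 h4 h6
    refine ⟨σ, x, σ • x, hx.symm, (hmove x hx).1, (hmove _ hσσ).1, ?_⟩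
    ext z : 1
    simp only [MulAction.toPermHom_apply, MulAction.toPerm_apply]
    by_cases hzx : z = x
    · rw [hzx, Equiv.swap_apply_left]
    by_cases hzx' : z = σ • x
    · rw [hzx', Equiv.swap_apply_right]
      have h7 : σ • σ • σ • x ≠ σ • σ • x := fun h => hσσ (MulAction.injective σ h)
      exact (honly _ h7).resolve_right hσσ
    · rw [Equiv.swap_apply_of_ne_of_ne hzx hzx']
      by_contra hcon
      rcases honly z hcon with h | h
      · exact hzx h
      · exact hzx' h
  · intro s
    obtain ⟨Q, hQ, t, h, hgh, hirr, hsep⟩ := hS s s.2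
    obtain ⟨P, hPm, hPQ⟩ := hP Q hQ
    set tP : 𝓞 N ⧸ P := Ideal.Quotient.mk P (algebraMap _ _ t) with htP
    have halg : algebraMap (𝓞 L ⧸ Q) (𝓞 N ⧸ P) (Ideal.Quotient.mk Q t) = tP := rfl
    have hgQ : (g - C (s : 𝓞 L)).eval t ∈ Q := by
      rw [← Ideal.Quotient.eq_zero_iff_mem, ← eval_map_apply, hgh]
      simp
    obtain ⟨r, hr, hrt⟩ : ∃ x : 𝓞 N, (F s).eval x = 0 ∧ Ideal.Quotient.mk P x = tP := by
      refine hexist s s.2 P (algebraMap _ _ t) ?_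
      rw [hFt, ← Ideal.mem_comap]
      exact (Ideal.over_def P Q).le hgQ
    have hrX : aeval r g = algebraMap (𝓞 L) (𝓞 N) s := (hFr _ _).1 hr
    let r' : X := ⟨r, s, s.2, hrX⟩
    have hr' : π r' = s := (hπ _ _).2 hrX
    have hother : ∀ x : X, π x = s → x ≠ r' → aeval (Ideal.Quotient.mk P (x : 𝓞 N)) h = 0 := by
      intro x hx hxr
      have h1 := hred _ Q P _ (hroot x s hx)
      rw [hgh, map_mul] at h1
      refine (mul_eq_zero.1 h1).resolve_left (fun h2 => hxr (Subtype.ext ?_))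
      rw [map_sub, aeval_X, aeval_C, halg, sub_eq_zero] at h2
      exact red_inj P (F s) (hsepP _ Q P hsep) _ _ (hroot x _ hx) hr (h2.trans hrt.symm)
    refine ⟨r', hr', fun x y hx hy hxr hyr => ?_⟩
    obtain ⟨σ, hσ, hσ2⟩ := decomp_conj Q P h hirr x y (hother x hx hxr) (hother y hy hyr)
    refine ⟨σ, Subtype.ext ?_, Subtype.ext ?_⟩
    · exact red_inj P (F s) (hsepP _ Q P hsep) _ _ (hroot (σ • r') _ ((hsm σ r').trans hr'))
        hr (hσ2 t r hrt)
    · exact red_inj P (F s) (hsepP _ Q P hsep) _ _ (hroot (σ • x) _ ((hsm σ x).trans hx))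
        (hroot y _ hy) hσ


theorem exists_theta (L : Type*) [Field L] [NumberField L] :
    ∃ (θ : 𝓞 L) (d : ℤ), d ≠ 0 ∧ ∀ x : 𝓞 L, ∃ P : ℤ[X], (d : 𝓞 L) * x = aeval θ P := by
  obtain ⟨θ₀, hθ₀⟩ := Field.exists_primitive_element ℚ L
  obtain ⟨y, hy0, h_integral⟩ := IsAlgebraic.exists_integral_multiple (R := ℤ) (A := L) (z := θ₀)
    ((IsFractionRing.isAlgebraic_iff ℤ ℚ L).mpr (Algebra.IsAlgebraic.isAlgebraic θ₀))
  let θ : 𝓞 L := ⟨y • θ₀, h_integral⟩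
  have hy : (y : L) ≠ 0 := by exact_mod_cast hy0
  have key : ∀ x : 𝓞 L, ∃ d : ℤ, d ≠ 0 ∧ ∃ P : ℤ[X], (d : 𝓞 L) * x = aeval θ P := by
    intro x
    have hx : (x : L) ∈ Algebra.adjoin ℚ {(θ : L)} := by
      have h1 : (x : L) ∈ IntermediateField.adjoin ℚ {θ₀} := by rw [hθ₀]; trivial
      rw [← IntermediateField.mem_toSubalgebra, IntermediateField.adjoin_simple_toSubalgebra_of_isAlgebraic
        (Algebra.IsAlgebraic.isAlgebraic θ₀)] at h1
      refine Algebra.adjoin_le (S := Algebra.adjoin ℚ {(θ : L)}) ?_ h1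
      rw [Set.singleton_subset_iff]
      have : θ₀ = (y : ℚ)⁻¹ • (θ : L) := by
        change _ = (y : ℚ)⁻¹ • (y • θ₀)
        rw [Algebra.smul_def, zsmul_eq_mul]
        simp [hy]
      have hm : (θ : L) ∈ Algebra.adjoin ℚ {(θ : L)} := Algebra.subset_adjoin (Set.mem_singleton _)
      exact Set.mem_of_eq_of_mem this (Subalgebra.smul_mem _ hm _)
    rw [Algebra.adjoin_singleton_eq_range_aeval] at hx
    obtain ⟨P, hP⟩ := hx
    obtain ⟨b, hbM, hb⟩ := IsLocalization.integerNormalization_spec (nonZeroDivisors ℤ) P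
    refine ⟨b, nonZeroDivisors.ne_zero hbM, IsLocalization.integerNormalization (nonZeroDivisors ℤ) P, ?_⟩
    apply RingOfIntegers.ext
    have h2 : ((aeval θ (IsLocalization.integerNormalization (nonZeroDivisors ℤ) P) : 𝓞 L) : L) =
      aeval (θ : L) ((IsLocalization.integerNormalization (nonZeroDivisors ℤ) P).map (algebraMap ℤ ℚ)) := by
      rw [aeval_map_algebraMap]
      exact (aeval_algebraMap_apply L θ _).symm
    rw [h2, hb]
    simp only [map_mul, map_intCast]
    have hP' : aeval (θ : L) P = algebraMap (𝓞 L) L x := hP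
    rw [← hP']
    simp
  choose d hd P hP using key
  let b := RingOfIntegers.basis L
  classical
  refine ⟨θ, ∏ i, d (b i), Finset.prod_ne_zero_iff.mpr fun i _ => hd _, fun x => ?_⟩
  have hx := b.sum_repr x
  refine ⟨∑ i, C (b.repr x i * ∏ j ∈ Finset.univ.erase i, d (b j)) * P (b i), ?_⟩
  rw [← hx, Finset.mul_sum, map_sum]
  refine Finset.sum_congr rfl fun i _ => ?_
  rw [hx, map_mul, ← hP, aeval_C, ← Finset.mul_prod_erase Finset.univ (fun i => d (b i)) (Finset.mem_univ i)]
  simp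
  ring

theorem schur_prime (m : ℤ[X]) (hm : m.Monic) (hdeg : 0 < m.natDegree) (W : ℤ) (hW : W ≠ 0) :
    ∃ (p : ℕ) (a : ℤ), p.Prime ∧ ¬ (p : ℤ) ∣ W ∧ (p : ℤ) ∣ m.eval a := by
  obtain ⟨b, hb⟩ : ∃ b, m.eval b ≠ 0 := by
    by_contra! h
    exact hm.ne_zero (Polynomial.funext fun r => by simp [h r])
  set c := m.eval b with hc
  -- choose k with m (b + c W k) ≠ ± c
  obtain ⟨k, hk⟩ : ∃ k : ℤ, m.eval (b + c * W * k) ≠ c ∧ m.eval (b + c * W * k) ≠ -c := by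
    let q : ℤ[X] := (m - C c) * (m + C c)
    have hq : q ≠ 0 := by
      apply mul_ne_zero
      · intro h
        rw [sub_eq_zero] at h
        rw [h] at hdeg; simp at hdeg
      · intro h
        rw [add_eq_zero_iff_eq_neg] at h
        rw [h, ← C_neg] at hdeg; simp only [natDegree_C] at hdeg; omega
    by_contra! h
    have : Set.Infinite {x | q.IsRoot x} := by
      have : Function.Injective (fun k : ℤ => b + c * W * k) := by
        intro x y hxy
        have : c * W * x = c * W * y := by simpa using hxy
        exact mul_left_cancel₀ (mul_ne_zero hb hW) this
      refine (Set.infinite_range_of_injective this).mono ?_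
      rintro _ ⟨k, rfl⟩
      by_cases h1 : m.eval (b + c * W * k) = c
      · simp [q, h1]
      · simp [q, h k h1]
    exact hq (eq_zero_of_infinite_isRoot _ this)
  obtain ⟨r, hr⟩ : c * W * k ∣ m.eval (b + c * W * k) - c := by
    have := m.sub_dvd_eval_sub (b + c * W * k) b
    simpa using this
  have h1 : m.eval (b + c * W * k) = c * (1 + W * (k * r)) := by linarith
  have h2 : (1 + W * (k * r)).natAbs ≠ 1 := by
    intro h
    rw [h1] at hk
    rcases Int.natAbs_eq (1 + W * (k * r)) with h3 | h3 <;> rw [h] at h3 <;> rw [h3] at hk <;> simp at hk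
  obtain ⟨p, hp, hpd⟩ := Nat.exists_prime_and_dvd h2
  have hpd' : (p : ℤ) ∣ 1 + W * (k * r) := Int.natCast_dvd.mpr hpd
  refine ⟨p, b + c * W * k, hp, fun h => ?_, h1 ▸ Dvd.dvd.mul_left hpd' _⟩
  have : (p : ℤ) ∣ 1 := (Int.dvd_add_left (Dvd.dvd.mul_right h _)).mp hpd'
  exact (Nat.prime_iff_prime_int.mp hp).not_dvd_one this

theorem deg_one_prime (L : Type*) [Field L] [NumberField L] (B : ℤ) (hB : B ≠ 0) :
    ∃ (p : ℕ) (Q : Ideal (𝓞 L)), p.Prime ∧ ¬ (p : ℤ) ∣ B ∧ Q.IsMaximal ∧ (p : 𝓞 L) ∈ Q ∧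
      ∀ x : 𝓞 L, ∃ n : ℤ, x - n ∈ Q := by
  obtain ⟨θ, d, hd, hP⟩ := exists_theta L
  have hθ : IsIntegral ℤ θ := RingOfIntegers.isIntegral θ
  obtain ⟨p, a, hp, hpW, hpa⟩ := schur_prime (minpoly ℤ θ) (minpoly.monic hθ)
    (minpoly.natDegree_pos hθ) (d * B) (mul_ne_zero hd hB)
  have hpd : ¬ (p : ℤ) ∣ d := fun h => hpW (h.mul_right _)
  have hpB : ¬ (p : ℤ) ∣ B := fun h => hpW (h.mul_left _)
  let I : Ideal (𝓞 L) := Ideal.span {(p : 𝓞 L), θ - a}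
  have hI : I ≠ ⊤ := by
    intro h
    have h1 : (1 : 𝓞 L) ∈ I := h ▸ Submodule.mem_top
    obtain ⟨u, v, huv⟩ := Ideal.mem_span_pair.mp h1
    obtain ⟨U, hU⟩ := hP u
    obtain ⟨V, hV⟩ := hP v
    have h2 : aeval θ (C d - (C (p : ℤ) * U + (X - C a) * V)) = 0 := by
      simp only [map_sub, map_add, map_mul, aeval_C, aeval_X, ← hU, ← hV]
      simp
      linear_combination (-(d : 𝓞 L)) * huv
    obtain ⟨w, hw⟩ := minpoly.isIntegrallyClosed_dvd hθ h2
    have h3 := congrArg (eval a) hw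
    simp at h3
    apply hpd
    have : d = p * U.eval a + (minpoly ℤ θ).eval a * w.eval a := by linarith
    rw [this]
    exact dvd_add (dvd_mul_right _ _) (hpa.mul_right _)
  obtain ⟨Q, hQ, hIQ⟩ := Ideal.exists_le_maximal I hI
  have hpQ : (p : 𝓞 L) ∈ Q := hIQ (Ideal.subset_span (by simp))
  have haQ : θ - a ∈ Q := hIQ (Ideal.subset_span (by simp))
  refine ⟨p, Q, hp, hpB, hQ, hpQ, fun x => ?_⟩
  obtain ⟨P, hPx⟩ := hP x
  obtain ⟨e, s, hes⟩ : IsCoprime d (p : ℤ) :=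
    ((Nat.prime_iff_prime_int.mp hp).coprime_iff_not_dvd.mpr hpd).symm
  refine ⟨e * P.eval a, ?_⟩
  have h1 : aeval θ P - (P.eval a : ℤ) ∈ Q := by
    have : aeval θ P - (P.eval a : ℤ) = aeval θ (P - C (P.eval a)) := by simp
    rw [this]
    obtain ⟨w, hw⟩ := X_sub_C_dvd_sub_C_eval (a := a) (p := P)
    rw [hw, map_mul]
    refine Q.mul_mem_right _ ?_
    simpa using haQ
  have hes' : (e : 𝓞 L) * d + s * p = 1 := by exact_mod_cast hes
  have : x - ((e * P.eval a : ℤ) : 𝓞 L) = e * (aeval θ P - (P.eval a : ℤ)) + s * x * p := by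
    rw [← hPx]; push_cast; linear_combination -x * hes'
  rw [this]
  exact Q.add_mem (Q.mul_mem_left _ h1) (Q.mul_mem_left _ hpQ)

theorem not_mem_sq (L : Type*) [Field L] [NumberField L] (p : ℕ) (hp : p.Prime)
    (h : ¬ (p : ℤ) ∣ NumberField.discr L) (Q : Ideal (𝓞 L)) (hQ : Q.IsMaximal)
    (hpQ : (p : 𝓞 L) ∈ Q) : (p : 𝓞 L) ∉ Q ^ 2 := by
  intro h2
  have hpZ : Prime (p : ℤ) := Nat.prime_iff_prime_int.mp hp
  have hunr : Algebra.IsUnramifiedAt ℤ Q :=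
    (NumberField.not_dvd_discr_iff_forall_mem L (𝓞 L) hpZ).mp h Q hQ.isPrime (by simpa using hpQ)
  have hlie : Q.LiesOver (Ideal.span {(p : ℤ)}) :=
    (Ideal.liesOver_span_iff hQ.ne_top hpZ).mpr (by simpa using hpQ)
  have hpb : Ideal.span {(p : ℤ)} ≠ ⊥ := by simpa using hp.ne_zero
  have hcard := Ideal.ramificationIdx_eq_one_of_isUnramifiedAt (R := ℤ) (p := Q)
  have : (Ideal.span {(p : ℤ)}).IsMaximal :=
    ((Ideal.span_singleton_prime hpZ.ne_zero).mpr hpZ).isMaximal hpb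
  rw [← Ideal.ramificationIdx'_eq_ramificationIdx (Ideal.span {(p : ℤ)}) Q hpb] at hcard
  have hne : (Ideal.span {(p : ℤ)}).map (algebraMap ℤ (𝓞 L)) ≠ ⊥ := Ideal.map_ne_bot_of_ne_bot hpb
  have hle : (Ideal.span {(p : ℤ)}).map (algebraMap ℤ (𝓞 L)) ≤ Q ^ 2 := by
    rw [Ideal.map_span, Ideal.span_le]
    simpa using h2
  have hQb : Q ≠ ⊥ := by
    rintro rfl
    simp only [Ideal.mem_bot, Nat.cast_eq_zero] at hpQ
    exact hp.ne_zero hpQ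
  rw [Ideal.IsDedekindDomain.ramificationIdx'_eq_multiplicity hne inferInstance] at hcard
  have hfin : FiniteMultiplicity Q ((Ideal.span {(p : ℤ)}).map (algebraMap ℤ (𝓞 L))) :=
    FiniteMultiplicity.of_prime_left (Ideal.prime_of_isPrime hQb inferInstance) hne
  have := hfin.pow_dvd_iff_le_multiplicity.1 (Ideal.dvd_iff_le.2 hle)
  omega


theorem locI {k : Type*} [Field k] [Finite k] (ℓ : ℕ) (hℓ : 2 ≤ ℓ) (h0 : (ℓ : k) ≠ 0)
    (h1 : ((ℓ - 1 : ℕ) : k) ≠ 0) (a : k) (T : Finset k) (hT : a ∉ T)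
    (hcard : 1 + T.card * (ℓ * (ℓ - 1)) < Nat.card k) :
    ∃ (h : k[X]) (t : k) (u : k[X]), h.Monic ∧ h.natDegree = ℓ ∧ h - C a = (X - C t) ^ 2 * u ∧
      u.Separable ∧ u.eval t ≠ 0 ∧ ∀ b ∈ T, (h - C b).Separable := by
  classical
  obtain ⟨r, rfl⟩ : ∃ r, ℓ = r + 2 := ⟨ℓ - 2, by omega⟩
  simp only [show r + 2 - 1 = r + 1 by omega] at *
  let c : k → k := fun b => (a - b) / ((r + 1 : ℕ) : k)
  let F : k → k[X] := fun b => (X ^ (r + 2) + C (c b)) ^ (r + 1) - X ^ ((r + 2) * (r + 1))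
  have hF : ∀ b ∈ T, F b ≠ 0 := by
    intro b hb h
    have := congrArg (eval 0) h
    simp [F, c] at this
    rcases this with h3 | h3
    · exact hT ((sub_eq_zero.mp h3) ▸ hb)
    · exact h1 (by exact_mod_cast h3)
  have hFd : ∀ b, (F b).natDegree ≤ (r + 2) * (r + 1) := by
    intro b
    have e1 : (X ^ (r + 2) + C (c b) : k[X]).natDegree ≤ r + 2 :=
      natDegree_add_le_of_degree_le (natDegree_X_pow _).le (by simp)
    have e2 := natDegree_pow_le_of_le (r + 1) e1
    rw [mul_comm] at e2
    exact natDegree_sub_le_of_le e2 (natDegree_X_pow _).le |>.trans (by simp)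
  let G : k[X] := X * ∏ b ∈ T, F b
  have hG : G ≠ 0 := mul_ne_zero X_ne_zero (Finset.prod_ne_zero_iff.mpr hF)
  have hGd : G.natDegree ≤ 1 + T.card * ((r + 2) * (r + 1)) := by
    refine natDegree_mul_le_of_le natDegree_X_le ((natDegree_prod_le _ _).trans ?_)
    refine (Finset.sum_le_card_nsmul _ _ _ fun b _ => hFd b).trans (by simp)
  obtain ⟨t, ht⟩ : ∃ t, G.eval t ≠ 0 := by
    have : Fintype k := Fintype.ofFinite k
    refine Polynomial.exists_eval_ne_zero_of_natDegree_lt_card G hG ?_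
    rw [← Nat.cast_card]
    exact_mod_cast hGd.trans_lt hcard
  simp only [G, eval_mul, eval_X, eval_prod, ne_eq, mul_eq_zero, Finset.prod_eq_zero_iff, not_or, not_exists, not_and] at ht
  obtain ⟨ht0, htb⟩ := ht
  let h : k[X] := X ^ (r + 2) + (-C ((r + 2 : ℕ) * t ^ (r + 1)) * X + C ((r + 1 : ℕ) * t ^ (r + 2) + a))
  have hlow : (-C ((r + 2 : ℕ) * t ^ (r + 1)) * X + C ((r + 1 : ℕ) * t ^ (r + 2) + a)).natDegree ≤ 1 := by
    rw [← C_neg]; exact natDegree_linear_le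
  have hlow' : (-C ((r + 2 : ℕ) * t ^ (r + 1)) * X + C ((r + 1 : ℕ) * t ^ (r + 2) + a)).degree < ((r + 2 : ℕ) : WithBot ℕ) :=
    (degree_le_of_natDegree_le hlow).trans_lt (by exact_mod_cast (by omega : 1 < r + 2))
  have hmon : h.Monic := monic_X_pow_add hlow'
  have hdeg : h.natDegree = r + 2 := by
    rw [natDegree_add_eq_left_of_natDegree_lt] <;> simp only [natDegree_X_pow]
    exact hlow.trans_lt (by omega)
  have hder : derivative h = C ((r + 2 : ℕ) : k) * (X ^ (r + 1) - C (t ^ (r + 1))) := by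
    simp only [h, derivative_add, derivative_mul, derivative_neg, derivative_C, derivative_X, derivative_X_pow]
    simp
    ring
  -- common roots
  have hcommon : ∀ (b : k) (z : AlgebraicClosure k), aeval z (h - C b) = 0 → aeval z (derivative h) = 0 →
      algebraMap k (AlgebraicClosure k) ((r + 1 : ℕ) * t ^ (r + 1)) * (algebraMap k _ t - z) + algebraMap k _ (a - b) = 0 := by
    intro b z hz hz'
    rw [hder] at hz'
    have hne : algebraMap k (AlgebraicClosure k) ((r + 2 : ℕ) : k) ≠ 0 := by
      rwa [_root_.map_ne_zero]
    simp only [map_mul, aeval_C, mul_eq_zero, hne, false_or, map_sub, map_pow, aeval_X] at hz'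
    rw [← hz]
    simp only [h, map_sub, map_add, map_mul, map_pow, aeval_X, aeval_C, map_neg]
    rw [pow_succ z, sub_eq_zero.mp hz']
    simp only [map_natCast]; push_cast; ring
  have hpos : ((r + 1 : ℕ) : k) * t ^ (r + 1) ≠ 0 := mul_ne_zero h1 (pow_ne_zero _ ht0)
  have hpos' : algebraMap k (AlgebraicClosure k) ((r + 1 : ℕ) * t ^ (r + 1)) ≠ 0 := by
    rwa [_root_.map_ne_zero]
  have hdera : ∀ b : k, derivative (h - C b) = derivative h := fun b => by simp
  have hr1 : (h - C a).IsRoot t := by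
    simp only [h, IsRoot, eval_sub, eval_add, eval_mul, eval_pow, eval_X, eval_C, eval_neg]
    push_cast; ring
  have hr2 : (derivative (h - C a)).IsRoot t := by
    rw [hdera, hder]; simp
  have hne : h - C a ≠ 0 := by
    intro hh
    rw [sub_eq_zero] at hh
    rw [hh] at hdeg; simp at hdeg
  obtain ⟨u, hu⟩ : (X - C t) ^ 2 ∣ h - C a := by
    rw [← le_rootMultiplicity_iff hne]
    exact (one_lt_rootMultiplicity_iff_isRoot hne).mpr ⟨hr1, hr2⟩
  have hut : u.eval t ≠ 0 := by
    intro hut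
    have e : derivative (derivative h) = derivative (derivative ((X - C t) ^ 2 * u)) := by
      rw [← hu, hdera]
    have e1 : derivative (derivative h) = C ((r + 2 : ℕ) : k) * (C ((r + 1 : ℕ) : k) * X ^ r) := by
      rw [hder, derivative_C_mul, derivative_sub, derivative_C, derivative_X_pow]; simp
    have e2 := congrArg (eval t) e
    rw [e1] at e2
    have e3 : eval t (derivative (derivative ((X - C t) ^ 2 * u))) = 0 := by
      simp [hut, pow_two]
    rw [e3] at e2
    simp only [eval_mul, eval_C, eval_pow, eval_X] at e2
    exact mul_ne_zero h0 (mul_ne_zero h1 (pow_ne_zero _ ht0)) e2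
  refine ⟨h, t, u, hmon, hdeg, hu, ?_, hut, ?_⟩
  · rw [separable_def, isCoprime_iff_aeval_ne_zero_of_isAlgClosed k (AlgebraicClosure k)]
    intro z
    by_contra! hz
    have e1 : aeval z (h - C a) = 0 := by rw [hu, map_mul, hz.1, mul_zero]
    have e2 : aeval z (derivative h) = 0 := by
      rw [← hdera a, hu, derivative_mul, map_add, map_mul, map_mul, hz.1, hz.2]; simp
    have e3 := hcommon a z e1 e2
    rw [sub_self, map_zero, add_zero, mul_eq_zero, or_iff_right hpos', sub_eq_zero] at e3
    rw [← e3, aeval_algebraMap_apply] at hz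
    have e4 := hz.1
    rw [map_eq_zero] at e4
    exact hut (by simpa using e4)
  · intro b hb
    rw [separable_def, isCoprime_iff_aeval_ne_zero_of_isAlgClosed k (AlgebraicClosure k)]
    intro z
    by_contra! hz
    rw [hdera] at hz
    have e3 := hcommon b z hz.1 hz.2
    have hz' := hz.2
    rw [hder] at hz'
    have hne : algebraMap k (AlgebraicClosure k) ((r + 2 : ℕ) : k) ≠ 0 := by
      rwa [_root_.map_ne_zero]
    simp only [map_mul, aeval_C, mul_eq_zero, hne, false_or, map_sub, map_pow, aeval_X] at hz'
    apply htb b hb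
    apply (algebraMap k (AlgebraicClosure k)).injective
    have hc : a - b = ((r + 1 : ℕ) : k) * c b := by simp only [c]; field_simp
    rw [hc, map_mul, map_mul, mul_assoc, ← mul_add, mul_eq_zero, or_iff_right ((_root_.map_ne_zero _).mpr h1)] at e3
    have e5 : algebraMap k (AlgebraicClosure k) t ^ (r + 1) * z =
        algebraMap k (AlgebraicClosure k) t ^ (r + 2) + algebraMap k _ (c b) := by
      rw [map_pow] at e3
      linear_combination -e3
    simp only [F, eval_sub, eval_pow, eval_add, eval_X, eval_C, map_sub, map_pow, map_add, map_zero]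
    rw [← e5, mul_pow, sub_eq_zero.mp hz']
    ring

theorem exists_irred {k : Type*} [Field k] [Finite k] (n : ℕ) (hn : 1 ≤ n) :
    ∃ h : k[X], h.Monic ∧ h.natDegree = n ∧ Irreducible h := by
  obtain ⟨p, hp⟩ := CharP.exists k
  have : Fact p.Prime := ⟨CharP.char_is_prime k p⟩
  have : NeZero n := ⟨by omega⟩
  obtain ⟨x, hx⟩ := Field.exists_primitive_element k (FiniteField.Extension k p n)
  have hi : IsIntegral k x := Algebra.IsIntegral.isIntegral x
  refine ⟨minpoly k x, minpoly.monic hi, ?_, minpoly.irreducible hi⟩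
  rw [← IntermediateField.adjoin.finrank hi, hx, IntermediateField.finrank_top', FiniteField.finrank_extension]

theorem locT {k : Type*} [Field k] [Finite k] (ℓ : ℕ) (hℓ : 2 ≤ ℓ) (a : k) :
    ∃ h : k[X], h.Monic ∧ h.natDegree = ℓ ∧ Irreducible (h - C a) ∧ (h - C a).Separable := by
  obtain ⟨h, hm, hd, hi⟩ := exists_irred (k := k) ℓ (by omega)
  refine ⟨h + C a, hm.add_of_left ?_, by simp [hd], by simpa using hi, ?_⟩
  · rw [degree_eq_natDegree hm.ne_zero, hd]
    exact degree_C_le.trans_lt (by exact_mod_cast (by omega : 0 < ℓ))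
  · simpa using PerfectField.separable_of_irreducible hi

theorem locS {k : Type*} [Field k] [Finite k] (ℓ : ℕ) (hℓ : 2 ≤ ℓ) (a : k) :
    ∃ h h' : k[X], h.Monic ∧ h.natDegree = ℓ ∧ h - C a = (X - C 0) * h' ∧ Irreducible h' ∧
      (h - C a).Separable := by
  obtain ⟨h, hm, hd, hi, h0⟩ : ∃ h : k[X], h.Monic ∧ h.natDegree = ℓ - 1 ∧ Irreducible h ∧ h.eval 0 ≠ 0 := by
    rcases Nat.eq_or_lt_of_le hℓ with rfl | hlt
    · exact ⟨X - C 1, monic_X_sub_C _, by rw [natDegree_X_sub_C], irreducible_X_sub_C _, by simp⟩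
    · obtain ⟨h, hm, hd, hi⟩ := exists_irred (k := k) (ℓ - 1) (by omega)
      refine ⟨h, hm, hd, hi, fun h0 => ?_⟩
      have : h.natDegree = 1 :=
        natDegree_eq_of_degree_eq_some (degree_eq_one_of_irreducible_of_root hi (x := 0) h0)
      omega
  have hd' : (X * h).natDegree = ℓ := by
    rw [natDegree_X_mul hm.ne_zero, hd]; omega
  have hm' : (X * h).Monic := monic_X.mul hm
  refine ⟨X * h + C a, h, hm'.add_of_left ?_, by simp [hd'], by simp, hi, ?_⟩
  · rw [degree_eq_natDegree hm'.ne_zero, hd']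
    exact degree_C_le.trans_lt (by exact_mod_cast (by omega : 0 < ℓ))
  · rw [add_sub_cancel_right]
    refine separable_X.mul (PerfectField.separable_of_irreducible hi) ?_
    rw [irreducible_X.coprime_iff_not_dvd, X_dvd_iff, coeff_zero_eq_eval_zero]
    exact h0


/-- A condition on integer polynomials that can be forced by a congruence modulo
an integer prime to any given one. -/
def Forceable (ℓ : ℕ) (P : ℤ[X] → Prop) : Prop :=
  ∀ N : ℤ, N ≠ 0 → ∃ m : ℤ, m ≠ 0 ∧ IsCoprime m N ∧ ∃ G : ℤ[X], G.Monic ∧ G.natDegree = ℓ ∧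
    ∀ g : ℤ[X], g.Monic → g.natDegree = ℓ → C m ∣ g - G → P g

theorem lift_int {k : Type*} [Field k] (hs : Function.Surjective (Int.castRingHom k)) (h : k[X])
    (hm : h.Monic) : ∃ G : ℤ[X], G.Monic ∧ G.natDegree = h.natDegree ∧ G.map (Int.castRingHom k) = h := by
  obtain ⟨q, h1, h2, h3⟩ := lifts_and_natDegree_eq_and_monic (f := Int.castRingHom k) (p := h)
    ((mem_lifts h).mpr (map_surjective _ hs h)) hm
  exact ⟨q, h3, h2, h1⟩

theorem surj_of {L : Type*} [Field L] [NumberField L] (Q : Ideal (𝓞 L))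
    (hQ : ∀ x : 𝓞 L, ∃ n : ℤ, x - n ∈ Q) : Function.Surjective (Int.castRingHom (𝓞 L ⧸ Q)) := by
  intro y
  obtain ⟨x, rfl⟩ := Ideal.Quotient.mk_surjective y
  obtain ⟨n, hn⟩ := hQ x
  refine ⟨n, ?_⟩
  have := Ideal.Quotient.eq.mpr hn
  rw [this]; simp

theorem map_mk_of_dvd {L : Type*} [Field L] [NumberField L] (Q : Ideal (𝓞 L)) (m : ℤ)
    (hm : (m : 𝓞 L) ∈ Q) (g G : ℤ[X]) (h : C m ∣ g - G) (α : 𝓞 L) :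
    (g.map (algebraMap ℤ (𝓞 L)) - C α).map (Ideal.Quotient.mk Q) =
      G.map (Int.castRingHom (𝓞 L ⧸ Q)) - C (Ideal.Quotient.mk Q α) := by
  obtain ⟨w, hw⟩ := h
  have e1 : (Ideal.Quotient.mk Q).comp (algebraMap ℤ (𝓞 L)) = Int.castRingHom (𝓞 L ⧸ Q) := RingHom.ext_int _ _
  rw [Polynomial.map_sub, map_C, map_map, e1, eq_add_of_sub_eq hw]
  have : ((m : ℤ) : 𝓞 L ⧸ Q) = 0 := by
    have := Ideal.Quotient.eq_zero_iff_mem.mpr hm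
    simpa using this
  rw [Polynomial.map_add, Polynomial.map_mul, map_C, eq_intCast, this]
  simp

theorem forceT {L : Type*} [Field L] [NumberField L] (ℓ : ℕ) (hℓ : 2 ≤ ℓ) (α : 𝓞 L) :
    Forceable ℓ (fun g => ∃ Q : Ideal (𝓞 L), Q.IsMaximal ∧
      Irreducible ((g.map (algebraMap ℤ (𝓞 L)) - C α).map (Ideal.Quotient.mk Q)) ∧
      ((g.map (algebraMap ℤ (𝓞 L)) - C α).map (Ideal.Quotient.mk Q)).Separable) := by
  intro N hN
  obtain ⟨p, Q, hp, hpN, hQ, hpQ, hdeg1⟩ := deg_one_prime L N hN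
  let _ : Field (𝓞 L ⧸ Q) := Ideal.Quotient.field Q
  have hQb : Q ≠ ⊥ := by
    rintro rfl
    simp only [Ideal.mem_bot, Nat.cast_eq_zero] at hpQ
    exact hp.ne_zero hpQ
  have : Finite (𝓞 L ⧸ Q) := Ring.HasFiniteQuotients.finiteQuotient hQb
  obtain ⟨h, hm, hd, hi, hse⟩ := locT ℓ hℓ (Ideal.Quotient.mk Q α)
  obtain ⟨G, hG, hGd, rfl⟩ := lift_int (surj_of Q hdeg1) h hm
  have hpZ : Prime (p : ℤ) := Nat.prime_iff_prime_int.mp hp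
  refine ⟨p, by exact_mod_cast hp.ne_zero, hpZ.coprime_iff_not_dvd.mpr hpN, G, hG, hGd.trans hd, fun g _ _ hg => ⟨Q, hQ, ?_⟩⟩
  rw [map_mk_of_dvd Q p (by simpa using hpQ) g G hg]
  exact ⟨hi, hse⟩

theorem forceS {L : Type*} [Field L] [NumberField L] (ℓ : ℕ) (hℓ : 2 ≤ ℓ) (α : 𝓞 L) :
    Forceable ℓ (fun g => ∃ Q : Ideal (𝓞 L), Q.IsMaximal ∧ ∃ (t : 𝓞 L) (h : (𝓞 L ⧸ Q)[X]),
      (g.map (algebraMap ℤ (𝓞 L)) - C α).map (Ideal.Quotient.mk Q) = (X - C (Ideal.Quotient.mk Q t)) * h ∧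
      Irreducible h ∧
      ((g.map (algebraMap ℤ (𝓞 L)) - C α).map (Ideal.Quotient.mk Q)).Separable) := by
  intro N hN
  obtain ⟨p, Q, hp, hpN, hQ, hpQ, hdeg1⟩ := deg_one_prime L N hN
  let _ : Field (𝓞 L ⧸ Q) := Ideal.Quotient.field Q
  have hQb : Q ≠ ⊥ := by
    rintro rfl
    simp only [Ideal.mem_bot, Nat.cast_eq_zero] at hpQ
    exact hp.ne_zero hpQ
  have : Finite (𝓞 L ⧸ Q) := Ring.HasFiniteQuotients.finiteQuotient hQb
  obtain ⟨h, h', hm, hd, hi, hir, hse⟩ := locS ℓ hℓ (Ideal.Quotient.mk Q α)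
  obtain ⟨G, hG, hGd, rfl⟩ := lift_int (surj_of Q hdeg1) h hm
  have hpZ : Prime (p : ℤ) := Nat.prime_iff_prime_int.mp hp
  refine ⟨p, by exact_mod_cast hp.ne_zero, hpZ.coprime_iff_not_dvd.mpr hpN, G, hG, hGd.trans hd,
    fun g _ _ hg => ⟨Q, hQ, 0, h', ?_⟩⟩
  rw [map_mk_of_dvd Q p (by simpa using hpQ) g G hg]
  exact ⟨by simpa using hi, hir, hse⟩

theorem forceI {L : Type*} [Field L] [NumberField L] (ℓ : ℕ) (hℓ : 2 ≤ ℓ) (S : Finset (𝓞 L)) (α : 𝓞 L) :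
    Forceable ℓ (fun g => ∃ Q : Ideal (𝓞 L), Q.IsMaximal ∧ Q ≠ ⊥ ∧ ∃ (t : 𝓞 L) (u : (𝓞 L ⧸ Q)[X]),
      (g.map (algebraMap ℤ (𝓞 L)) - C α).map (Ideal.Quotient.mk Q) = (X - C (Ideal.Quotient.mk Q t)) ^ 2 * u ∧
      u.Separable ∧ u.eval (Ideal.Quotient.mk Q t) ≠ 0 ∧ (g.map (algebraMap ℤ (𝓞 L)) - C α).eval t ∉ Q ^ 2 ∧
      ∀ β ∈ S, β ≠ α → ((g.map (algebraMap ℤ (𝓞 L)) - C β).map (Ideal.Quotient.mk Q)).Separable) := by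
  intro N hN
  classical
  let bd : ℕ := ℓ + (1 + S.card * (ℓ * (ℓ - 1)))
  let A : ℤ := ∏ β ∈ S.erase α, (Ideal.absNorm (Ideal.span {α - β}) : ℤ)
  have hA : A ≠ 0 := by
    refine Finset.prod_ne_zero_iff.mpr fun β hβ => ?_
    have hne : α - β ≠ 0 := sub_ne_zero.mpr (Finset.ne_of_mem_erase hβ).symm
    rw [Int.natCast_ne_zero, Ne, Ideal.absNorm_eq_zero_iff]
    simpa using hne
  obtain ⟨p, Q, hp, hpB, hQ, hpQ, hdeg1⟩ := deg_one_prime L (N * (NumberField.discr L * (A * bd.factorial)))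
    (mul_ne_zero hN (mul_ne_zero (NumberField.discr_ne_zero L) (mul_ne_zero hA (by exact_mod_cast bd.factorial_ne_zero))))
  have hpZ : Prime (p : ℤ) := Nat.prime_iff_prime_int.mp hp
  simp only [hpZ.dvd_mul, not_or] at hpB
  obtain ⟨hpN, hpdisc, hpA, hpbd⟩ := hpB
  have hpQ2 := not_mem_sq L p hp hpdisc Q hQ hpQ
  have hpbd' : bd < p := by
    by_contra! hle
    exact hpbd (by exact_mod_cast (hp.dvd_factorial.mpr hle))
  let _ : Field (𝓞 L ⧸ Q) := Ideal.Quotient.field Q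
  have hQb : Q ≠ ⊥ := by
    rintro rfl
    simp only [Ideal.mem_bot, Nat.cast_eq_zero] at hpQ
    exact hp.ne_zero hpQ
  have : Finite (𝓞 L ⧸ Q) := Ring.HasFiniteQuotients.finiteQuotient hQb
  have hcast : ∀ n : ℤ, (n : 𝓞 L ⧸ Q) = 0 → (p : ℤ) ∣ n := by
    intro n hn
    by_contra hnd
    obtain ⟨x, y, hxy⟩ := hpZ.coprime_iff_not_dvd.mpr hnd
    have h1 := congrArg (fun z : ℤ => (z : 𝓞 L ⧸ Q)) hxy
    have h2 : (p : 𝓞 L ⧸ Q) = 0 := by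
      simpa using Ideal.Quotient.eq_zero_iff_mem.mpr hpQ
    simp [hn, h2] at h1
  have hcastN : ∀ n : ℕ, 0 < n → n < p → (n : 𝓞 L ⧸ Q) ≠ 0 := by
    intro n hn hnp h
    have := hcast n (by exact_mod_cast h)
    exact absurd (Nat.le_of_dvd hn (by exact_mod_cast this)) (by omega)
  have hcardk : p ≤ Nat.card (𝓞 L ⧸ Q) := by
    have hinj : Function.Injective (fun i : Fin p => ((i : ℕ) : 𝓞 L ⧸ Q)) := by
      intro i j hij
      have := hcast ((i : ℕ) - (j : ℕ)) (by simpa [sub_eq_zero] using hij)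
      have hi := i.2
      have hj := j.2
      have := Int.eq_zero_of_abs_lt_dvd this (by rw [abs_lt]; omega)
      ext; omega
    simpa using Nat.card_le_card_of_injective _ hinj
  let T : Finset (𝓞 L ⧸ Q) := (S.erase α).image (Ideal.Quotient.mk Q)
  have hT : Ideal.Quotient.mk Q α ∉ T := by
    intro hmem
    obtain ⟨β, hβ, hβα⟩ := Finset.mem_image.mp hmem
    have h1 : α - β ∈ Q := Ideal.Quotient.eq.mp hβα.symm
    have h2 : ((Ideal.absNorm (Ideal.span {α - β}) : ℕ) : 𝓞 L) ∈ Q :=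
      (Ideal.span_singleton_le_iff_mem Q).mpr h1 (Ideal.absNorm_mem _)
    have h3 := hcast (Ideal.absNorm (Ideal.span {α - β}) : ℕ) (by simpa using Ideal.Quotient.eq_zero_iff_mem.mpr h2)
    exact hpA (h3.trans (Finset.dvd_prod_of_mem _ hβ))
  have hTc : T.card ≤ S.card := Finset.card_image_le.trans (Finset.card_le_card (Finset.erase_subset _ _))
  obtain ⟨h, t, u, hm, hd, hu, hus, hut, hT'⟩ := locI ℓ hℓ (hcastN ℓ (by omega) (by omega))
    (hcastN (ℓ - 1) (by omega) (by omega)) (Ideal.Quotient.mk Q α) T hT (by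
      have := Nat.mul_le_mul_right (ℓ * (ℓ - 1)) hTc
      omega)
  obtain ⟨t, rfl⟩ := Ideal.Quotient.mk_surjective t
  obtain ⟨G₀, hG₀, hGd₀, rfl⟩ := lift_int (surj_of Q hdeg1) h hm
  obtain ⟨G, hG, hGd, hGdvd, hGt⟩ : ∃ G : ℤ[X], G.Monic ∧ G.natDegree = ℓ ∧ C (p : ℤ) ∣ G - G₀ ∧
      (G.map (algebraMap ℤ (𝓞 L)) - C α).eval t ∉ Q ^ 2 := by
    by_cases hc : (G₀.map (algebraMap ℤ (𝓞 L)) - C α).eval t ∈ Q ^ 2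
    · refine ⟨G₀ + C (p : ℤ), hG₀.add_of_left ?_, by rw [natDegree_add_C, hGd₀, hd], by simp, fun hc' => hpQ2 ?_⟩
      · rw [degree_eq_natDegree hG₀.ne_zero, hGd₀, hd]
        exact degree_C_le.trans_lt (by exact_mod_cast (by omega : 0 < ℓ))
      · have := (Q ^ 2).sub_mem hc' hc
        simpa using this
    · exact ⟨G₀, hG₀, hGd₀.trans hd, by simp, hc⟩
  refine ⟨(p : ℤ) ^ 2, pow_ne_zero _ hpZ.ne_zero, (hpZ.coprime_iff_not_dvd.mpr hpN).pow_left, G, hG, hGd,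
    fun g _ _ hg => ⟨Q, hQ, hQb, t, u, ?_⟩⟩
  have hg1 : C (p : ℤ) ∣ g - G₀ := by
    have : g - G₀ = (g - G) + (G - G₀) := by ring
    rw [this]
    refine dvd_add (dvd_trans ?_ hg) hGdvd
    rw [C_pow]
    exact dvd_pow_self _ two_ne_zero
  have hmap := map_mk_of_dvd Q p (by simpa using hpQ) g G₀ hg1
  refine ⟨by rw [hmap, hu], hus, hut, fun hmem => hGt ?_, fun β hβ hne => ?_⟩
  · obtain ⟨w, hw⟩ := hg
    have : (G.map (algebraMap ℤ (𝓞 L)) - C α).eval t = (g.map (algebraMap ℤ (𝓞 L)) - C α).eval t -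
        p ^ 2 * (w.map (algebraMap ℤ (𝓞 L))).eval t := by
      rw [eq_add_of_sub_eq hw]; simp
      ring
    rw [this]
    exact (Q ^ 2).sub_mem hmem ((Q ^ 2).mul_mem_right _ (Ideal.pow_mem_pow hpQ 2))
  · rw [hmap]
    exact hT' _ (Finset.mem_image_of_mem _ (Finset.mem_erase.mpr ⟨hne, hβ⟩))

theorem crt_all {ι : Type*} (ℓ : ℕ) (Ps : Finset ι) (P : ι → ℤ[X] → Prop)
    (h : ∀ i ∈ Ps, Forceable ℓ (P i)) :
    ∃ m : ℤ, m ≠ 0 ∧ ∃ G : ℤ[X], G.Monic ∧ G.natDegree = ℓ ∧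
    ∀ g : ℤ[X], g.Monic → g.natDegree = ℓ → C m ∣ g - G → ∀ i ∈ Ps, P i g := by
  classical
  induction Ps using Finset.induction_on with
  | empty => exact ⟨1, one_ne_zero, X ^ ℓ, monic_X_pow _, natDegree_X_pow _, by simp⟩
  | insert i s hi ih =>
    obtain ⟨m, hm, G, hG, hGd, hP⟩ := ih fun j hj => h j (Finset.mem_insert_of_mem hj)
    obtain ⟨m', hm', hco, G', hG', hGd', hP'⟩ := h i (Finset.mem_insert_self _ _) m hm
    obtain ⟨x, y, hxy⟩ := hco
    let R : ℤ[X] := C (x * m') * (G - G')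
    have hGG : (G - G').degree < ℓ := by
      have := degree_sub_lt_left (p := G) (q := G') (by rw [degree_eq_natDegree hG.ne_zero, degree_eq_natDegree hG'.ne_zero, hGd, hGd'])
        hG.ne_zero (by rw [hG.leadingCoeff, hG'.leadingCoeff])
      rwa [degree_eq_natDegree hG.ne_zero, hGd] at this
    have hR : R.degree < G'.degree := by
      rw [degree_eq_natDegree hG'.ne_zero, hGd']
      refine lt_of_le_of_lt ?_ hGG
      simp only [R]
      exact (degree_mul_le _ _).trans ((add_le_add_left degree_C_le _).trans (by simp))
    refine ⟨m' * m, mul_ne_zero hm' hm, G' + R, hG'.add_of_left hR, ?_, fun g hg hgd hdvd j hj => ?_⟩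
    · rw [natDegree_add_eq_left_of_degree_lt hR, hGd']
    · rw [C_mul] at hdvd
      rcases Finset.mem_insert.mp hj with rfl | hj
      · refine hP' g hg hgd ?_
        have : g - G' = (g - (G' + R)) + C m' * (C x * (G - G')) := by simp only [R, C_mul]; ring
        rw [this]
        exact dvd_add ((dvd_mul_right _ _).trans hdvd) (dvd_mul_right _ _)
      · refine hP g hg hgd ?_ j hj
        have hxy' : (C x * C m' + C y * C m : ℤ[X]) = 1 := by
          rw [← C_mul, ← C_mul, ← C_add, hxy, C_1]
        have : g - G = (g - (G' + R)) + C m * (-C y * (G - G')) := by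
          simp only [R, C_mul]; linear_combination (G - G') * hxy'
        rw [this]
        exact dvd_add ((dvd_mul_left _ _).trans hdvd) (dvd_mul_right _ _)


theorem exists_roots_finset (K L : Type*) [Field K] [Field L] [NumberField K] [NumberField L] [Algebra K L]
    (f : (𝓞 K)[X]) (hmonic : f.Monic) (hsep : (f.map (algebraMap (𝓞 K) K)).Separable)
    [IsSplittingField K L (f.map (algebraMap (𝓞 K) K))] :
    ∃ S : Finset (𝓞 L), S.card = f.natDegree ∧
      f.map (algebraMap (𝓞 K) (𝓞 L)) = ∏ α ∈ S, (X - C α) := by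
  classical
  let fL := (f.map (algebraMap (𝓞 K) K)).map (algebraMap K L)
  have hfLm : fL.Monic := (hmonic.map _).map _
  have hspl : fL.Splits := IsSplittingField.splits L (f.map (algebraMap (𝓞 K) K))
  have hnod : fL.roots.Nodup := nodup_roots hsep.map
  have hprod : fL = ∏ a ∈ fL.roots.toFinset, (X - C a) := by
    rw [Finset.prod_eq_multiset_prod, Multiset.toFinset_val, Multiset.dedup_eq_self.mpr hnod]
    exact hspl.eq_prod_roots_of_monic hfLm
  have hcompat : (f.map (algebraMap (𝓞 K) (𝓞 L))).map (algebraMap (𝓞 L) L) = fL := by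
    simp only [fL, map_map]
    rfl
  have h_integral : ∀ a ∈ fL.roots.toFinset, ∃ x : 𝓞 L, (x : L) = a := by
    intro a ha
    rw [Multiset.mem_toFinset, mem_roots hfLm.ne_zero] at ha
    have : IsIntegral (𝓞 L) a := ⟨f.map (algebraMap (𝓞 K) (𝓞 L)), hmonic.map _, by
      rw [← eval_map, hcompat]; exact ha⟩
    exact IsIntegrallyClosed.isIntegral_iff.mp this
  choose! lift hlift using h_integral
  refine ⟨fL.roots.toFinset.image lift, ?_, ?_⟩
  · rw [Finset.card_image_of_injOn, Multiset.toFinset_card_of_nodup hnod, ← hspl.natDegree_eq_card_roots]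
    · simp only [fL]
      rw [(hmonic.map _).natDegree_map, hmonic.natDegree_map]
    · intro a ha b hb hab
      rw [← hlift a ha, ← hlift b hb, hab]
  · apply map_injective (algebraMap (𝓞 L) L) (RingOfIntegers.coe_injective)
    rw [hcompat, Polynomial.map_prod, Finset.prod_image]
    · conv_lhs => rw [hprod]
      refine Finset.prod_congr rfl fun a ha => ?_
      rw [Polynomial.map_sub, map_X, map_C]
      exact congrArg (fun b => X - C b) (hlift a ha).symm
    · intro a ha b hb hab
      rw [← hlift a ha, ← hlift b hb, hab]

theorem core_card (K L N : Type*) [Field K] [Field L] [Field N] [NumberField K] [NumberField L] [NumberField N]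
    [Algebra K L] [Algebra L N] [Algebra K N] [IsScalarTower K L N]
    (f : (𝓞 K)[X]) (S : Finset (𝓞 L))
    (hfS : f.map (algebraMap (𝓞 K) (𝓞 L)) = ∏ α ∈ S, (X - C α))
    (g : ℤ[X]) (ℓ : ℕ) (hℓ : 2 ≤ ℓ) (hg : g.Monic) (hgd : g.natDegree = ℓ)
    [IsSplittingField L N (((f.comp (g.map (algebraMap ℤ (𝓞 K)))).map (algebraMap (𝓞 K) K)).map (algebraMap K L))]
    (hT : ∀ α ∈ S, ∃ Q : Ideal (𝓞 L), Q.IsMaximal ∧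
      Irreducible ((g.map (algebraMap ℤ (𝓞 L)) - C α).map (Ideal.Quotient.mk Q)) ∧
      ((g.map (algebraMap ℤ (𝓞 L)) - C α).map (Ideal.Quotient.mk Q)).Separable)
    (hS : ∀ α ∈ S, ∃ Q : Ideal (𝓞 L), Q.IsMaximal ∧ ∃ (t : 𝓞 L) (h : (𝓞 L ⧸ Q)[X]),
      (g.map (algebraMap ℤ (𝓞 L)) - C α).map (Ideal.Quotient.mk Q) = (X - C (Ideal.Quotient.mk Q t)) * h ∧
      Irreducible h ∧
      ((g.map (algebraMap ℤ (𝓞 L)) - C α).map (Ideal.Quotient.mk Q)).Separable)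
    (hI : ∀ α ∈ S, ∃ Q : Ideal (𝓞 L), Q.IsMaximal ∧ Q ≠ ⊥ ∧ ∃ (t : 𝓞 L) (u : (𝓞 L ⧸ Q)[X]),
      (g.map (algebraMap ℤ (𝓞 L)) - C α).map (Ideal.Quotient.mk Q) = (X - C (Ideal.Quotient.mk Q t)) ^ 2 * u ∧
      u.Separable ∧ u.eval (Ideal.Quotient.mk Q t) ≠ 0 ∧ (g.map (algebraMap ℤ (𝓞 L)) - C α).eval t ∉ Q ^ 2 ∧
      ∀ β ∈ S, β ≠ α → ((g.map (algebraMap ℤ (𝓞 L)) - C β).map (Ideal.Quotient.mk Q)).Separable) :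
    Module.finrank L N = ℓ.factorial ^ S.card := by
  classical
  set FL := ((f.comp (g.map (algebraMap ℤ (𝓞 K)))).map (algebraMap (𝓞 K) K)).map (algebraMap K L) with hFL
  let gL := g.map (algebraMap ℤ (𝓞 L))
  have hgL : gL.Monic := hg.map _
  have hFprod : FL = (∏ α ∈ S, (gL - C α)).map (algebraMap (𝓞 L) L) := by
    have e1 : ∏ α ∈ S, (gL - C α) = (f.map (algebraMap (𝓞 K) (𝓞 L))).comp gL := by
      rw [hfS, prod_comp]; simp
    rw [e1, hFL, map_comp, map_comp, map_comp, map_map, map_map, map_map, map_map, map_map]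
    congr 2
    exact RingHom.ext_int _ _
  have hFne : FL ≠ 0 := by
    rw [hFprod]
    refine ((monic_prod_of_monic _ _ fun α _ => ?_).map _).ne_zero
    refine hgL.sub_of_left ?_
    rw [degree_eq_natDegree hgL.ne_zero, hg.natDegree_map, hgd]
    exact degree_C_le.trans_lt (by exact_mod_cast (by omega : 0 < ℓ))
  have hgal : IsGalois L N := by
    have : Normal L N := Normal.of_isSplittingField FL
    exact ⟨⟩
  have hspl : (FL.map (algebraMap L N)).Splits := IsSplittingField.splits N FL
  rw [← IsGalois.card_aut_eq_finrank]
  refine gal_card S gL ℓ hgL (by rw [hg.natDegree_map, hgd]) (by omega) ?_ ?_ hT hS hI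
  · intro α hα
    have hdvd : ((gL - C α).map (algebraMap (𝓞 L) N)) ∣ FL.map (algebraMap L N) := by
      rw [hFprod, map_map, ← IsScalarTower.algebraMap_eq]
      exact Polynomial.map_dvd _ (Finset.dvd_prod_of_mem _ hα)
    exact hspl.of_dvd ((Polynomial.map_ne_zero_iff (algebraMap L N).injective).mpr hFne) hdvd
  · intro σ hσ
    have hadj : Algebra.adjoin L (FL.rootSet N) = ⊤ := IsSplittingField.adjoin_rootSet N FL
    have : (σ : N →ₐ[L] N) = AlgHom.id L N := by
      refine AlgHom.ext_of_adjoin_eq_top hadj ?_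
      intro β hβ
      have hβ0 : aeval β FL = 0 := (mem_rootSet.mp hβ).2
      rw [hFprod, aeval_map_algebraMap, map_prod, Finset.prod_eq_zero_iff] at hβ0
      obtain ⟨α, hα, hβα⟩ := hβ0
      have hβi : IsIntegral (𝓞 L) β := by
        refine ⟨gL - C α, hgL.sub_of_left ?_, by rwa [aeval_def] at hβα⟩
        rw [degree_eq_natDegree hgL.ne_zero, hg.natDegree_map, hgd]
        exact degree_C_le.trans_lt (by exact_mod_cast (by omega : 0 < ℓ))
      have hβi2 : IsIntegral (𝓞 N) β := hβi.tower_top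
      obtain ⟨x, rfl⟩ := IsIntegrallyClosed.isIntegral_iff.mp hβi2
      have hx := hσ α hα x (by
        apply RingOfIntegers.coe_injective
        rw [map_sub, aeval_C, sub_eq_zero, aeval_algebraMap_apply] at hβα
        exact hβα)
      exact congrArg (algebraMap (𝓞 N) N) hx
    ext x
    exact DFunLike.congr_fun this x

theorem split_KN (K L N : Type*) [Field K] [Field L] [Field N]
    [Algebra K L] [Algebra L N] [Algebra K N] [IsScalarTower K L N] (f g : K[X]) (hf : f ≠ 0)
    (hF : f.comp g ≠ 0) (hg : 0 < g.natDegree)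
    [IsSplittingField K L f] [IsSplittingField L N ((f.comp g).map (algebraMap K L))] :
    IsSplittingField K N (f.comp g) := by
  have hspl : ((f.comp g).map (algebraMap K N)).Splits := by
    have := IsSplittingField.splits N ((f.comp g).map (algebraMap K L))
    rwa [map_map, ← IsScalarTower.algebraMap_eq] at this
  have hmul : IsSplittingField K N (f * f.comp g) := IsSplittingField.mul (K := L) (L := N) (f := f) (g := f.comp g) hf hF
  refine ⟨hspl, ?_⟩
  have htop := IsSplittingField.adjoin_rootSet N (f * f.comp g)
  rw [eq_top_iff, ← htop]
  refine Algebra.adjoin_le fun α hα => ?_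
  have hα0 := (mem_rootSet.mp hα).2
  rw [map_mul, mul_eq_zero] at hα0
  rcases hα0 with hα0 | hα0
  · have hdvd : (g.map (algebraMap K N) - C α) ∣ (f.comp g).map (algebraMap K N) := by
      have h1 : X - C α ∣ f.map (algebraMap K N) := by
        rw [dvd_iff_isRoot, IsRoot, eval_map_algebraMap]; exact hα0
      obtain ⟨w, hw⟩ := h1
      rw [map_comp, hw]
      exact ⟨w.comp (g.map (algebraMap K N)), by simp⟩
    have hs := hspl.of_dvd ((Polynomial.map_ne_zero_iff (algebraMap K N).injective).mpr hF) hdvd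
    obtain ⟨β, hβ⟩ := hs.exists_eval_eq_zero (by
      intro hd
      have : (g.map (algebraMap K N) - C α).natDegree = 0 := natDegree_eq_of_degree_eq_some hd
      rw [natDegree_sub_C, natDegree_map] at this
      omega)
    have hβ' : aeval β g = α := by
      rw [eval_sub, eval_C, sub_eq_zero, eval_map_algebraMap] at hβ; exact hβ
    have hβm : β ∈ Algebra.adjoin K ((f.comp g).rootSet N) := by
      refine Algebra.subset_adjoin (mem_rootSet.mpr ⟨hF, ?_⟩)
      rw [aeval_comp, hβ', hα0]
    rw [← hβ']
    exact Algebra.adjoin_le (Set.singleton_subset_iff.mpr hβm) (aeval_mem_adjoin_singleton K β)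
  · exact Algebra.subset_adjoin (mem_rootSet.mpr ⟨hF, hα0⟩)

theorem card_gal_eq (K N : Type*) [Field K] [Field N] [CharZero K] [Algebra K N] (F : K[X])
    [IsSplittingField K N F] : Nat.card F.Gal = Module.finrank K N := by
  have : IsGalois K F.SplittingField := by
    have : Normal K F.SplittingField := Normal.of_isSplittingField F
    exact ⟨⟩
  rw [(IsSplittingField.algEquiv N F).toLinearEquiv.finrank_eq]
  exact IsGalois.card_aut_eq_finrank K F.SplittingField


theorem stmt15 (K : Type*) [Field K] [NumberField K]
    (f : (𝓞 K)[X]) (D : ℕ) (hD : 1 ≤ D) (hmonic : f.Monic) (hdeg : f.natDegree = D)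
    (hsep : (f.map (algebraMap (𝓞 K) K)).Separable)
    (M : ℕ) (hM : Nat.card (f.map (algebraMap (𝓞 K) K)).Gal = M)
    (ℓ : ℕ) (hℓ : 2 ≤ ℓ) :
    {g : (𝓞 K)[X] | g.Monic ∧ g.natDegree = ℓ ∧
      Nat.card ((f.comp g).map (algebraMap (𝓞 K) K)).Gal = M * ℓ.factorial ^ D}.Infinite := by
  classical
  let L := (f.map (algebraMap (𝓞 K) K)).SplittingField
  have : NumberField L := NumberField.of_module_finite K L
  obtain ⟨S, hScard, hfS⟩ := exists_roots_finset K L f hmonic hsep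
  obtain ⟨m, hm, G, hG, hGd, hP⟩ := crt_all ℓ
    (S.image (fun α (g : ℤ[X]) => _) ∪ (S.image (fun α (g : ℤ[X]) => _) ∪ S.image (fun α (g : ℤ[X]) => _))) id (by
      intro P hP
      simp only [Finset.mem_union, Finset.mem_image] at hP
      rcases hP with ⟨α, -, rfl⟩ | ⟨α, -, rfl⟩ | ⟨α, -, rfl⟩
      · exact forceT ℓ hℓ α
      · exact forceS ℓ hℓ α
      · exact forceI ℓ hℓ S α)
  have hgood : ∀ g : ℤ[X], g.Monic → g.natDegree = ℓ → C m ∣ g - G →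
      Nat.card ((f.comp (g.map (algebraMap ℤ (𝓞 K)))).map (algebraMap (𝓞 K) K)).Gal = M * ℓ.factorial ^ D := by
    intro g hg hgd hdvd
    have hP := hP g hg hgd hdvd
    let F := (f.comp (g.map (algebraMap ℤ (𝓞 K)))).map (algebraMap (𝓞 K) K)
    let N := (F.map (algebraMap K L)).SplittingField
    have : NumberField N := NumberField.of_module_finite L N
    have hfin : Module.finrank L N = ℓ.factorial ^ S.card := by
      refine core_card K L N f S hfS g ℓ hℓ hg hgd ?_ ?_ ?_
      · intro α hα
        exact hP _ (Finset.mem_union_left _ (Finset.mem_image_of_mem _ hα))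
      · intro α hα
        exact hP _ (Finset.mem_union_right _ (Finset.mem_union_left _ (Finset.mem_image_of_mem _ hα)))
      · intro α hα
        exact hP _ (Finset.mem_union_right _ (Finset.mem_union_right _ (Finset.mem_image_of_mem _ hα)))
    have hgK : ((g.map (algebraMap ℤ (𝓞 K))).map (algebraMap (𝓞 K) K)).natDegree = ℓ := by
      rw [(hg.map _).natDegree_map, hg.natDegree_map, hgd]
    have hFne : F ≠ 0 := by
      refine ((hmonic.comp (hg.map _) ?_).map _).ne_zero
      rw [hg.natDegree_map]; omega
    have hcomp : F = (f.map (algebraMap (𝓞 K) K)).comp ((g.map (algebraMap ℤ (𝓞 K))).map (algebraMap (𝓞 K) K)) :=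
      map_comp _ _ _
    have i1 : IsSplittingField L N (((f.map (algebraMap (𝓞 K) K)).comp
        ((g.map (algebraMap ℤ (𝓞 K))).map (algebraMap (𝓞 K) K))).map (algebraMap K L)) := by
      rw [← hcomp]; exact IsSplittingField.splittingField _
    have i2 := split_KN K L N (f.map (algebraMap (𝓞 K) K)) ((g.map (algebraMap ℤ (𝓞 K))).map (algebraMap (𝓞 K) K))
      (hmonic.map _).ne_zero (hcomp ▸ hFne) (by omega)
    rw [← hcomp] at i2
    have e1 := card_gal_eq K N F
    have e2 := card_gal_eq K L (f.map (algebraMap (𝓞 K) K))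
    change Nat.card F.Gal = _
    rw [e1, ← Module.finrank_mul_finrank K L N, hfin, ← e2, hM, hScard, hdeg]
  have hinj : Function.Injective (fun n : ℕ => (G + C (m * n)).map (algebraMap ℤ (𝓞 K))) := by
    intro a b hab
    have h1 := map_injective (algebraMap ℤ (𝓞 K)) (algebraMap ℤ (𝓞 K)).injective_int hab
    have h2 := C_injective (add_left_cancel h1)
    exact_mod_cast mul_left_cancel₀ hm h2
  refine (Set.infinite_range_of_injective hinj).mono ?_
  rintro _ ⟨n, rfl⟩
  have hmon : (G + C (m * n)).Monic := by
    refine hG.add_of_left ?_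
    rw [degree_eq_natDegree hG.ne_zero, hGd]
    exact degree_C_le.trans_lt (by exact_mod_cast (by omega : 0 < ℓ))
  have hnd : (G + C (m * n)).natDegree = ℓ := by rw [natDegree_add_C, hGd]
  refine ⟨hmon.map _, by rw [hmon.natDegree_map, hnd], hgood _ hmon hnd ?_⟩
  rw [add_sub_cancel_left, C_mul]
  exact dvd_mul_right _ _
end

section
/- Let f = x² − 2 ∈ ℤ[x] and for n ≥ 1 let f^{(n)} denote its n-fold iterate f∘f∘⋯∘f. Then the set of prime numbers p such that f^{(n)} mod p is irreducible in 𝔽_p[x] for every n ≥ 1 coincides, among odd primes, with the set of primes p with p ≡ 3 (mod 8) or p ≡ 5 (mod 8); in particular this set of stable primes has natural density 1/2 within the set of all prime numbers. -/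
open Polynomial Filter Topology

/-- `iterComp f n = f ∘ f ∘ ⋯ ∘ f` (`n` times), the `n`-th iterate `f^{(n)}`. -/
noncomputable def iterComp {R : Type*} [CommRing R] (f : R[X]) : ℕ → R[X]
  | 0 => X
  | n + 1 => f.comp (iterComp f n)

/-- A prime `p` is stable for `f ∈ ℤ[x]` if every iterate of `f` is irreducible mod `p`. -/
def StablePrime (f : Polynomial ℤ) (p : ℕ) : Prop :=
  p.Prime ∧ ∀ n, 1 ≤ n → Irreducible ((iterComp f n).map (Int.castRingHom (ZMod p)))

lemma iterComp_succ' {R : Type*} [CommRing R] (f : R[X]) (n : ℕ) :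
    iterComp f (n+1) = (iterComp f n).comp f := by
  induction n with
  | zero => simp [iterComp]
  | succ n ih => 
    rw [iterComp, ih, ← comp_assoc, ← ih]; rfl

lemma iterComp_map {R S : Type*} [CommRing R] [CommRing S] (φ : R →+* S) (f : R[X]) (n : ℕ) :
    (iterComp f n).map φ = iterComp (f.map φ) n := by
  induction n with
  | zero => simp [iterComp]
  | succ n ih => rw [iterComp, iterComp, Polynomial.map_comp, ih]

section
variable {K : Type*} [Field K]

lemma monic_f : (X ^ 2 - 2 : K[X]).Monic := by
  have := monic_X_pow_sub_C (2:K) (n := 2) (by norm_num)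
  rwa [map_ofNat C 2] at this

lemma natDegree_f : (X ^ 2 - 2 : K[X]).natDegree = 2 := by
  have := natDegree_X_pow_sub_C (r := (2:K)) (n := 2)
  rwa [map_ofNat C 2] at this

lemma monic_iter (n : ℕ) : (iterComp (X ^ 2 - 2 : K[X]) n).Monic := by
  induction n with
  | zero => simp [iterComp]
  | succ n ih =>
    rw [iterComp_succ']
    exact ih.comp monic_f (by rw [natDegree_f]; norm_num)

lemma natDegree_iter (n : ℕ) : (iterComp (X ^ 2 - 2 : K[X]) n).natDegree = 2 ^ n := by
  induction n with
  | zero => simp [iterComp]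
  | succ n ih =>
    rw [iterComp_succ', natDegree_comp, ih, natDegree_f, pow_succ]

lemma eval_iter (n : ℕ) : (iterComp (X ^ 2 - 2 : K[X]) (n+1)).eval (-2) = 2 := by
  induction n with
  | zero => simp [iterComp]; norm_num
  | succ n ih => rw [iterComp, eval_comp, ih]; simp; norm_num

lemma norm_aux {E : Type*} [Field E] [Algebra K E] (x : E) (n : ℕ)
    (hx : minpoly K x = iterComp (X ^ 2 - 2 : K[X]) n) :
    Algebra.norm K (IntermediateField.AdjoinSimple.gen K x + 2) = 2 := by
  have hintg : IsIntegral K x := by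
    by_contra h
    rw [minpoly.eq_zero h] at hx
    exact (monic_iter n).ne_zero hx.symm
  set pb := IntermediateField.adjoin.powerBasis hintg with hpb
  have hfin : FiniteDimensional K (IntermediateField.adjoin K {x}) := pb.finite
  have hmp : minpoly K (IntermediateField.AdjoinSimple.gen K x) = iterComp (X ^ 2 - 2 : K[X]) n := by
    rw [IntermediateField.minpoly_gen, hx]
  have hdim : pb.dim = 2 ^ n := by
    rw [hpb, IntermediateField.adjoin.powerBasis_dim, hx, natDegree_iter]
  have hfr : Module.finrank K (IntermediateField.adjoin K {x}) = 2 ^ n := by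
    rw [pb.finrank, hdim]
  have h1 : Algebra.norm K (algebraMap K _ (-2) - IntermediateField.AdjoinSimple.gen K x) =
     (iterComp (X ^ 2 - 2 : K[X]) n).eval (-2) := by
    rw [← hmp]
    have := charpoly_leftMulMatrix pb
    rw [show pb.gen = IntermediateField.AdjoinSimple.gen K x from IntermediateField.adjoin.powerBasis_gen hintg] at this
    rw [← this, Matrix.eval_charpoly, Algebra.norm_eq_matrix_det pb.basis, map_sub, AlgHom.commutes]
    congr 1
  have h2 : IntermediateField.AdjoinSimple.gen K x + 2 = (algebraMap K _ (-1)) * (algebraMap K _ (-2) - IntermediateField.AdjoinSimple.gen K x) := by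
    simp [map_ofNat (algebraMap K (IntermediateField.adjoin K {x})) 2]
  rw [h2, map_mul, h1, Algebra.norm_algebraMap, hfr]
  cases n with
  | zero => simp [iterComp]
  | succ n =>
    rw [eval_iter, Even.neg_one_pow]; simp
    simp [pow_succ]

lemma irr_iter (h2 : ¬ IsSquare (2 : K)) (n : ℕ) : Irreducible (iterComp (X ^ 2 - 2 : K[X]) n) := by
  induction n with
  | zero => simpa [iterComp] using irreducible_X
  | succ n ih =>
    rw [iterComp_succ']
    refine Polynomial.irreducible_comp (monic_iter n) monic_f ih fun E _ _ x hx => ?_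
    have : (X ^ 2 - 2 : K[X]).map (algebraMap K (IntermediateField.adjoin K {x})) - C (IntermediateField.AdjoinSimple.gen K x) = X ^ 2 - C (IntermediateField.AdjoinSimple.gen K x + 2) := by
      simp [map_ofNat C 2]; ring
    rw [this, X_pow_sub_C_irreducible_iff_of_prime Nat.prime_two]
    intro b hb
    apply h2
    refine ⟨Algebra.norm K b, ?_⟩
    rw [← pow_two, ← map_pow, hb, norm_aux x n hx]
end

lemma part1 (p : ℕ) (hp : p.Prime) (hp2 : p ≠ 2) :
    StablePrime (X ^ 2 - 2) p ↔ p % 8 = 3 ∨ p % 8 = 5 := by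
  have := Fact.mk hp
  have hsq := ZMod.exists_sq_eq_two_iff hp2
  have hodd := hp.eq_two_or_odd.resolve_left hp2
  have hiff : p % 8 = 3 ∨ p % 8 = 5 ↔ ¬ IsSquare (2 : ZMod p) := by
    rw [hsq]; omega
  rw [hiff]
  have hm : (X ^ 2 - 2 : ℤ[X]).map (Int.castRingHom (ZMod p)) = X ^ 2 - 2 := by simp
  constructor
  · rintro ⟨-, h⟩
    have := h 1 le_rfl
    rw [iterComp_map, hm] at this
    have h' : iterComp (X ^ 2 - 2 : (ZMod p)[X]) 1 = X ^ 2 - C 2 := by simp [iterComp, map_ofNat C 2]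
    rw [h', X_pow_sub_C_irreducible_iff_of_prime Nat.prime_two] at this
    rintro ⟨b, hb⟩
    exact this b (by rw [hb, pow_two])
  · intro h
    refine ⟨hp, fun n _ => ?_⟩
    rw [iterComp_map, hm]
    exact irr_iter h n

lemma not_stable_two : ¬ StablePrime (X ^ 2 - 2) 2 := by
  rintro ⟨-, h⟩
  have := h 1 le_rfl
  have hm : (X ^ 2 - 2 : ℤ[X]).map (Int.castRingHom (ZMod 2)) = X ^ 2 - 2 := by simp
  rw [iterComp_map, hm] at this
  have h' : iterComp (X ^ 2 - 2 : (ZMod 2)[X]) 1 = X ^ 2 - C 2 := by simp [iterComp, map_ofNat C 2]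
  rw [h', X_pow_sub_C_irreducible_iff_of_prime Nat.prime_two] at this
  exact this 0 (by decide)


section Density

open MeasureTheory FourierTransform

lemma exists_kernel : ∃ (φ : ℝ → ℂ) (k : ℝ → ℝ), Continuous φ ∧ HasCompactSupport φ ∧
    (∀ t, 𝓕 φ t = (k t : ℂ)) ∧ (∀ t, 0 ≤ k t) ∧ Integrable k ∧ 0 < ∫ t, k t := by
  let b : ContDiffBump (0:ℝ) := ⟨1, 2, by norm_num, by norm_num⟩
  let ψ : ℝ → ℂ := fun y => (b y : ℂ)
  have hψc : ContDiff ℝ ((⊤ : ℕ∞) : WithTop ℕ∞) ψ :=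
    Complex.ofRealCLM.contDiff.comp (b.contDiff (n := (⊤ : ℕ∞)))
  have hψs : HasCompactSupport ψ := b.hasCompactSupport.comp_left (g := fun x : ℝ => (x : ℂ)) (by simp)
  have hψi : Integrable ψ := hψc.continuous.integrable_of_hasCompactSupport hψs
  let Ψ : SchwartzMap ℝ ℂ := hψs.toSchwartzMap hψc
  have hΨ : 𝓕 ψ = (𝓕 Ψ : SchwartzMap ℝ ℂ) := by
    rw [SchwartzMap.fourier_coe]; rfl
  have hreal : ∀ t, (starRingEnd ℂ) (𝓕 ψ t) = 𝓕 ψ t := by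
    intro t
    rw [Real.fourier_eq, ← integral_conj, ← integral_neg_eq_self]
    congr 1
    ext v
    have hb : b (-v) = b v := b.neg v
    have h2 : (starRingEnd ℂ) (2 : ℂ) = 2 := map_ofNat _ 2
    simp [ψ, Circle.smul_def, hb, ← Complex.exp_conj, Real.fourierChar_apply, h2]
  have hintg : Integrable (fun t => (𝓕 ψ t).re ^ 2) := by
    rw [hΨ]
    exact ((𝓕 Ψ : SchwartzMap ℝ ℂ).memLp 2).re.integrable_sq
  refine ⟨convolution ψ ψ (ContinuousLinearMap.mul ℂ ℂ) volume, fun t => (𝓕 ψ t).re ^ 2, ?_, ?_, ?_, ?_, ?_, ?_⟩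
  · exact hψs.continuous_convolution_right _ hψi.locallyIntegrable hψc.continuous
  · exact hψs.convolution _ hψs
  · intro t
    rw [Real.fourier_mul_convolution_eq hψi hψi]
    have := Complex.conj_eq_iff_re.1 (hreal t)
    push_cast
    rw [this, pow_two]
  · intro t; positivity
  · exact hintg
  · refine integral_pos_of_integrable_nonneg_nonzero ?_ hintg (fun t => by positivity) (x := 0) ?_
    · rw [hΨ]; exact (Complex.continuous_re.comp (𝓕 Ψ : SchwartzMap ℝ ℂ).continuous).pow 2
    · have h0 : 𝓕 ψ 0 = ((∫ v, b v : ℝ) : ℂ) := by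
        rw [Real.fourier_eq, ← integral_complex_ofReal]
        simp [ψ]
      rw [h0, Complex.ofReal_re]
      exact (pow_pos b.integral_pos 2).ne'

lemma fourier_scale (φ : ℝ → ℂ) (l : ℝ) (hl : 0 < l) (t : ℝ) :
    𝓕 (fun y => φ (y / l)) t = l * 𝓕 φ (l * t) := by
  rw [Real.fourier_eq, Real.fourier_eq]
  have := Measure.integral_comp_div (fun y => Real.fourierChar (-inner ℝ (y) (l * t)) • φ y) l
  simp only [abs_of_pos hl, Complex.real_smul] at this
  rw [← this]
  congr 1
  ext v
  congr 3
  simp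
  field_simp

lemma fourier_mod (φ : ℝ → ℂ) (u t : ℝ) :
    𝓕 (fun y => Real.fourierChar (y * u) • φ y) t = 𝓕 φ (t - u) := by
  rw [Real.fourier_eq, Real.fourier_eq]
  congr 1
  ext v
  rw [smul_smul, ← AddChar.map_add_eq_mul]
  congr 3
  simp; ring

lemma band_tendsto (D : ℝ → ℂ) (B : ℝ) (hDm : Measurable D) (hDB : ∀ t, ‖D t‖ ≤ B)
    (hD0 : ∀ t < 0, D t = 0) (G : ℂ → ℂ) (hG : ContinuousOn G {z | 0 ≤ z.re})
    (hDG : ∀ z : ℂ, 0 < z.re → ∫ t : ℝ, D t * Complex.exp (-z * t) = G z)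
    (φ : ℝ → ℂ) (hφ : Continuous φ) (hφs : HasCompactSupport φ) (hφi : Integrable (𝓕 φ)) :
    Tendsto (fun u : ℝ => ∫ t, D t * 𝓕 φ (t - u)) atTop (𝓝 0) := by
  have hG' : Continuous fun p : ℝ => G (2 * Real.pi * p * Complex.I) := by
    refine hG.comp_continuous (by fun_prop) ?_
    intro x; simp
  have hre : ∀ σ y : ℝ, 0 ≤ σ → (σ:ℂ) + 2 * Real.pi * y * Complex.I ∈ {z : ℂ | 0 ≤ z.re} := by
    intro σ y hσ
    simpa using hσ
  have hφi0 : Integrable φ := hφ.integrable_of_hasCompactSupport hφs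
  -- the key identity
  have key : ∀ u : ℝ, ∫ t, D t * 𝓕 φ (t - u) =
      ∫ y : ℝ, G (2 * Real.pi * y * Complex.I) * (Real.fourierChar (y * u) • φ y) := by
    intro u
    have hg : Integrable (fun y : ℝ => Real.fourierChar (y * u) • φ y) := by
      refine Continuous.integrable_of_hasCompactSupport ?_ ?_
      · fun_prop
      · exact hφs.smul_left
    have step : ∀ σ : ℝ, 0 < σ → ∫ t, (D t * Complex.exp (-σ * t)) * 𝓕 φ (t - u) =
        ∫ y : ℝ, G (σ + 2 * Real.pi * y * Complex.I) * (Real.fourierChar (y * u) • φ y) := by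
      intro σ hσ
      have hf : Integrable (fun t : ℝ => D t * Complex.exp (-σ * t)) := by
        have h1 : Integrable ((Set.Ici (0:ℝ)).indicator fun t => B * Real.exp (-σ * t)) := by
          rw [integrable_indicator_iff measurableSet_Ici, integrableOn_Ici_iff_integrableOn_Ioi]
          exact (exp_neg_integrableOn_Ioi 0 hσ).const_mul B
        refine h1.mono' (by fun_prop) (ae_of_all _ fun t => ?_)
        by_cases ht : 0 ≤ t
        · rw [Set.indicator_of_mem (Set.mem_Ici.2 ht), norm_mul, Complex.norm_exp]
          have : (-(σ:ℂ) * t).re = -σ * t := by simp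
          rw [this]
          gcongr
          exact hDB t
        · rw [hD0 t (not_le.1 ht), Set.indicator_of_notMem (by simpa using ht)]
          simp
      have := VectorFourier.integral_fourierIntegral_smul_eq_flip (L := innerₗ ℝ) (μ := volume) (ν := volume)
        (e := Real.fourierChar) Real.continuous_fourierChar continuous_inner hf hg
      have e1 : ∀ x, VectorFourier.fourierIntegral Real.fourierChar volume (innerₗ ℝ).flip
          (fun y : ℝ => Real.fourierChar (y * u) • φ y) x = 𝓕 φ (x - u) := by
        intro x
        rw [← fourier_mod, Real.fourier_eq, VectorFourier.fourierIntegral]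
        congr 1
        ext v
        simp [mul_comm]
      have e2 : ∀ y : ℝ, VectorFourier.fourierIntegral Real.fourierChar volume (innerₗ ℝ)
          (fun t : ℝ => D t * Complex.exp (-σ * t)) y = G (σ + 2 * Real.pi * y * Complex.I) := by
        intro y
        rw [← hDG _ (by simpa using hσ), VectorFourier.fourierIntegral]
        congr 1
        ext t
        rw [Circle.smul_def, Real.fourierChar_apply, smul_eq_mul, mul_left_comm, ← Complex.exp_add]
        congr 2
        simp
        ring
      simp_rw [e1, e2, smul_eq_mul] at this
      exact this.symm
    have hKi : Integrable fun t => 𝓕 φ (t - u) := hφi.comp_sub_right u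
    have lim1 : Tendsto (fun n : ℕ => ∫ t, (D t * Complex.exp (-((1 / ((n:ℝ) + 1) : ℝ) : ℂ) * t)) * 𝓕 φ (t - u)) atTop
        (𝓝 (∫ t, D t * 𝓕 φ (t - u))) := by
      refine tendsto_integral_of_dominated_convergence (fun t => B * ‖𝓕 φ (t - u)‖) ?_ ?_ ?_ ?_
      · intro n
        exact (Measurable.aestronglyMeasurable (by fun_prop)).mul hKi.aestronglyMeasurable
      · exact hKi.norm.const_mul B
      · intro n
        refine ae_of_all _ fun t => ?_
        rw [norm_mul, norm_mul]
        gcongr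
        by_cases ht : 0 ≤ t
        · have h1 : ‖Complex.exp (-((1 / ((n:ℝ) + 1) : ℝ) : ℂ) * t)‖ ≤ 1 := by
            rw [Complex.norm_exp, Real.exp_le_one_iff]
            have : (-((1 / ((n:ℝ) + 1) : ℝ) : ℂ) * t).re = - (1 / ((n:ℝ) + 1) * t) := by
              rw [← Complex.ofReal_neg, ← Complex.ofReal_mul, Complex.ofReal_re]; ring
            rw [this]
            have : 0 ≤ 1 / ((n:ℝ) + 1) * t := by positivity
            linarith
          calc _ ≤ ‖D t‖ * 1 := by gcongr
            _ ≤ B := by rw [mul_one]; exact hDB t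
        · rw [hD0 t (not_le.1 ht)]
          simpa using (norm_nonneg _).trans (hDB 0)
      · refine ae_of_all _ fun t => ?_
        have h1 : Tendsto (fun n : ℕ => Complex.exp (-((1 / ((n:ℝ) + 1) : ℝ) : ℂ) * t)) atTop (𝓝 1) := by
          have h2 : Continuous fun x : ℝ => Complex.exp (-(x : ℂ) * t) := by fun_prop
          have := (h2.tendsto 0).comp tendsto_one_div_add_atTop_nhds_zero_nat
          simpa [Function.comp_def] using this
        simpa using (h1.const_mul (D t)).mul_const (𝓕 φ (t - u))
    have lim2 : Tendsto (fun n : ℕ => ∫ y : ℝ, G (((1 / ((n:ℝ) + 1) : ℝ) : ℂ) + 2 * Real.pi * y * Complex.I) * (Real.fourierChar (y * u) • φ y)) atTop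
        (𝓝 (∫ y : ℝ, G (2 * Real.pi * y * Complex.I) * (Real.fourierChar (y * u) • φ y))) := by
      obtain ⟨R, hR⟩ : ∃ R, ∀ y ∈ tsupport φ, ∀ σ ∈ Set.Icc (0:ℝ) 1, ‖G ((σ:ℂ) + 2 * Real.pi * y * Complex.I)‖ ≤ R := by
        have hc : IsCompact ((tsupport φ) ×ˢ (Set.Icc (0:ℝ) 1)) := hφs.isCompact.prod isCompact_Icc
        have hcont : ContinuousOn (fun q : ℝ × ℝ => G ((q.2:ℂ) + 2 * Real.pi * q.1 * Complex.I))
            ((tsupport φ) ×ˢ (Set.Icc (0:ℝ) 1)) := by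
          refine hG.comp (by fun_prop) ?_
          rintro ⟨y, σ⟩ ⟨_, hσ⟩
          simpa using hσ.1
        obtain ⟨R, hR⟩ := hc.exists_bound_of_continuousOn hcont
        exact ⟨R, fun y hy σ hσ => hR (y, σ) ⟨hy, hσ⟩⟩
      have hn01 : ∀ n : ℕ, (1 / ((n:ℝ) + 1)) ∈ Set.Icc (0:ℝ) 1 := fun n =>
        ⟨by positivity, by rw [div_le_one (by positivity)]; linarith [(Nat.cast_nonneg n : (0:ℝ) ≤ n)]⟩
      refine tendsto_integral_of_dominated_convergence (fun y => R * ‖φ y‖) ?_ ?_ ?_ ?_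
      · intro n
        refine Continuous.aestronglyMeasurable ?_
        refine Continuous.mul ?_ (by fun_prop)
        refine hG.comp_continuous (by fun_prop) ?_
        intro y
        exact hre _ y (hn01 n).1
      · exact hφi0.norm.const_mul R
      · intro n
        refine ae_of_all _ fun y => ?_
        rw [norm_mul, Circle.norm_smul]
        by_cases hy : y ∈ tsupport φ
        · gcongr
          exact hR y hy _ (hn01 n)
        · rw [image_eq_zero_of_notMem_tsupport hy]; simp
      · refine ae_of_all _ fun y => ?_
        refine Tendsto.mul_const _ ?_
        have h1 := (hG (2 * Real.pi * y * Complex.I) (by simp)).tendsto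
        refine h1.comp (tendsto_nhdsWithin_iff.2 ⟨?_, ?_⟩)
        · have h2 : Continuous fun x : ℝ => (x:ℂ) + 2 * Real.pi * y * Complex.I := by fun_prop
          have := (h2.tendsto 0).comp tendsto_one_div_add_atTop_nhds_zero_nat
          simpa [Function.comp_def] using this
        · refine Eventually.of_forall fun n => ?_
          exact hre _ y (hn01 n).1
    refine tendsto_nhds_unique lim1 (lim2.congr fun n => ?_)
    rw [step _ (by positivity)]
  simp_rw [key]
  have RL := (Real.tendsto_integral_exp_smul_cocompact (fun y : ℝ => G (2 * Real.pi * y * Complex.I) * φ y)).comp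
    ((tendsto_neg_atTop_atBot (G := ℝ)).mono_right atBot_le_cocompact)
  refine RL.congr fun u => ?_
  simp only [Function.comp]
  congr 1
  ext v
  simp [Circle.smul_def]
  ring


lemma smooth_limit (S : ℝ → ℝ) (B c : ℝ) (hSm : Measurable S) (hS : ∀ t, 0 ≤ S t) (hSB : ∀ t, S t ≤ B)
    (hS0 : ∀ t < 0, S t = 0) (hc : 0 ≤ c) (G : ℂ → ℂ) (hG : ContinuousOn G {z | 0 ≤ z.re})
    (hDG : ∀ z : ℂ, 0 < z.re → ∫ t : ℝ in Set.Ioi 0, ((S t - c : ℝ) : ℂ) * Complex.exp (-z * t) = G z)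
    (φ : ℝ → ℂ) (k : ℝ → ℝ) (hφ : Continuous φ) (hφs : HasCompactSupport φ)
    (hk : ∀ t, 𝓕 φ t = (k t : ℂ)) (hki : Integrable k) (l : ℝ) (hl : 0 < l) :
    Tendsto (fun u : ℝ => ∫ v, S (u + v / l) * k v) atTop (𝓝 (c * ∫ v, k v)) := by
  let D : ℝ → ℝ := fun t => S t - (Set.Ici (0:ℝ)).indicator (fun _ => c) t
  have hDm : Measurable D := hSm.sub (measurable_const.indicator measurableSet_Ici)
  have hind : ∀ t, 0 ≤ (Set.Ici (0:ℝ)).indicator (fun _ => c) t ∧ (Set.Ici (0:ℝ)).indicator (fun _ => c) t ≤ c := by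
    intro t
    by_cases ht : 0 ≤ t
    · rw [Set.indicator_of_mem (Set.mem_Ici.2 ht)]; exact ⟨hc, le_rfl⟩
    · rw [Set.indicator_of_notMem (by simpa using ht)]; exact ⟨le_rfl, hc⟩
  have hDB : ∀ t, ‖((D t : ℝ) : ℂ)‖ ≤ B + c := by
    intro t
    rw [Complex.norm_real, Real.norm_eq_abs, abs_le]
    have := hind t
    have h1 := hS t
    have h2 := hSB t
    constructor <;> simp only [D] <;> linarith
  have hD0 : ∀ t < 0, ((D t : ℝ) : ℂ) = 0 := by
    intro t ht
    simp [D, hS0 t ht, Set.indicator_of_notMem (show t ∉ Set.Ici (0:ℝ) by simpa using ht)]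
  have hDG' : ∀ z : ℂ, 0 < z.re → ∫ t : ℝ, ((D t : ℝ) : ℂ) * Complex.exp (-z * t) = G z := by
    intro z hz
    rw [← hDG z hz, ← integral_Ici_eq_integral_Ioi, ← integral_indicator measurableSet_Ici]
    congr 1
    ext t
    by_cases ht : 0 ≤ t
    · rw [Set.indicator_of_mem (Set.mem_Ici.2 ht)]
      simp [D, Set.indicator_of_mem (Set.mem_Ici.2 ht)]
    · rw [hD0 t (not_le.1 ht), Set.indicator_of_notMem (by simpa using ht)]
      simp
  have hFl : ∀ t, 𝓕 (fun y => φ (y / l)) t = ((l * k (l * t) : ℝ) : ℂ) := by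
    intro t
    rw [fourier_scale φ l hl, hk]; push_cast; rfl
  have hkl : Integrable fun t => l * k (l * t) := (hki.comp_mul_left' hl.ne').const_mul l
  have hband := band_tendsto (fun t => ((D t : ℝ) : ℂ)) (B + c) (by fun_prop) hDB hD0 G hG hDG'
    (fun y => φ (y / l)) (by fun_prop)
    (by
      have := hφs.comp_homeomorph (Homeomorph.mulRight₀ l⁻¹ (inv_ne_zero hl.ne'))
      simpa [div_eq_mul_inv, Function.comp_def] using this)
    (by
      have : 𝓕 (fun y => φ (y / l)) = fun t => ((l * k (l * t) : ℝ) : ℂ) := funext hFl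
      rw [this]
      exact hkl.ofReal)
  have hsub : ∀ u, ∫ t, ((D t : ℝ) : ℂ) * 𝓕 (fun y => φ (y / l)) (t - u) =
      ((∫ v, D (u + v / l) * k v : ℝ) : ℂ) := by
    intro u
    simp_rw [hFl]
    rw [← integral_complex_ofReal]
    have h1 := integral_sub_right_eq_self (μ := volume) (fun t => (((D (u + t)) * (l * k (l * t)) : ℝ) : ℂ)) u
    have h2 := Measure.integral_comp_mul_left (fun v => ((D (u + v / l) * k v : ℝ) : ℂ)) l
    rw [abs_of_pos (inv_pos.2 hl)] at h2
    calc _ = ∫ t, (((D (u + (t - u))) * (l * k (l * (t - u))) : ℝ) : ℂ) := by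
          congr 1; ext t; rw [add_sub_cancel]; push_cast; rfl
      _ = ∫ t, (((D (u + t)) * (l * k (l * t)) : ℝ) : ℂ) := h1
      _ = (l : ℂ) * ∫ t, ((D (u + (l * t) / l) * k (l * t) : ℝ) : ℂ) := by
          rw [← integral_const_mul]
          congr 1; ext t; rw [mul_div_cancel_left₀ _ hl.ne']; push_cast; ring
      _ = _ := by
          rw [h2, Complex.real_smul, ← mul_assoc, ← Complex.ofReal_mul, mul_inv_cancel₀ hl.ne']; simp
  simp_rw [hsub] at hband
  have hDlim : Tendsto (fun u => ∫ v, D (u + v / l) * k v) atTop (𝓝 0) := by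
    rw [← Complex.ofReal_zero] at hband
    exact_mod_cast (Complex.continuous_re.tendsto _).comp hband
  have hclim : Tendsto (fun u => ∫ v, (Set.Ici (0:ℝ)).indicator (fun _ => c) (u + v / l) * k v) atTop
      (𝓝 (∫ v, c * k v)) := by
    refine tendsto_integral_filter_of_dominated_convergence (fun v => c * ‖k v‖) ?_ ?_ ?_ ?_
    · refine Eventually.of_forall fun u => ?_
      refine AEStronglyMeasurable.mul (Measurable.aestronglyMeasurable ?_) hki.aestronglyMeasurable
      exact (measurable_const.indicator measurableSet_Ici).comp (by fun_prop)
    · refine Eventually.of_forall fun u => ae_of_all _ fun v => ?_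
      rw [norm_mul]
      gcongr
      rw [Real.norm_eq_abs, abs_of_nonneg (hind _).1]
      exact (hind _).2
    · exact hki.norm.const_mul c
    · refine ae_of_all _ fun v => ?_
      refine tendsto_const_nhds.congr' ?_
      filter_upwards [eventually_ge_atTop (-(v/l))] with u hu
      rw [Set.indicator_of_mem (Set.mem_Ici.2 (by linarith))]
  have hsum := hDlim.add hclim
  rw [zero_add, integral_const_mul] at hsum
  refine hsum.congr fun u => ?_
  rw [← integral_add]
  · congr 1; ext v; simp only [D]; ring
  · refine hki.bdd_mul (c := B + c) (Measurable.aestronglyMeasurable (by fun_prop)) (ae_of_all _ fun v => ?_)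
    have := hDB (u + v / l)
    rwa [Complex.norm_real] at this
  · refine hki.bdd_mul (c := c) (Measurable.aestronglyMeasurable ?_) (ae_of_all _ fun v => ?_)
    · exact (measurable_const.indicator measurableSet_Ici).comp (by fun_prop)
    · rw [Real.norm_eq_abs, abs_of_nonneg (hind _).1]
      exact (hind _).2

lemma tauber (S : ℝ → ℝ) (B c : ℝ) (hSm : Measurable S) (hS : ∀ t, 0 ≤ S t) (hSB : ∀ t, S t ≤ B)
    (hS0 : ∀ t < 0, S t = 0) (hmono : ∀ s t, s ≤ t → S s * Real.exp s ≤ S t * Real.exp t)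
    (hc : 0 ≤ c) (G : ℂ → ℂ) (hG : ContinuousOn G {z | 0 ≤ z.re})
    (hDG : ∀ z : ℂ, 0 < z.re → ∫ t : ℝ in Set.Ioi 0, ((S t - c : ℝ) : ℂ) * Complex.exp (-z * t) = G z) :
    Tendsto S atTop (𝓝 c) := by
  obtain ⟨φ, k, hφ, hφs, hk, hk0, hki, hI⟩ := exists_kernel
  set I := ∫ t, k t with hIdef
  -- for every small ε, eventual two-sided bound
  have main : ∀ ε : ℝ, 0 < ε → ε < 1 → ∀ᶠ u in atTop,
      Real.exp (-(2 * ε)) * (c - ε - B * ε) ≤ S u ∧ S u ≤ Real.exp (2 * ε) * (c + ε) / (1 - ε) := by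
    intro ε hε hε1
    obtain ⟨M, hM0, hM⟩ : ∃ M : ℝ, 0 < M ∧ (1 - ε) * I < ∫ v in Set.Ioc (-M) M, k v := by
      have := intervalIntegral_tendsto_integral hki (tendsto_neg_atTop_atBot (G := ℝ)) tendsto_id
      have h1 := this.eventually (lt_mem_nhds (show (1 - ε) * I < I by nlinarith))
      obtain ⟨M, hM, hM0⟩ := (h1.and (eventually_gt_atTop 0)).exists
      refine ⟨M, hM0, ?_⟩
      rwa [intervalIntegral.integral_of_le (by simp only [id]; linarith)] at hM
    set J := ∫ v in Set.Ioc (-M) M, k v with hJ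
    have hJI : J ≤ I := setIntegral_le_integral hki (ae_of_all _ hk0)
    have hsplit : J + ∫ v in (Set.Ioc (-M) M)ᶜ, k v = I := integral_add_compl measurableSet_Ioc hki
    have hJ0 : 0 < J := lt_of_le_of_lt (by nlinarith) hM
    have hl : 0 < M / ε := by positivity
    have hlim := smooth_limit S B c hSm hS hSB hS0 hc G hG hDG φ k hφ hφs hk hki (M / ε) hl
    have hintg : ∀ u, Integrable fun v => S (u + v / (M / ε)) * k v := by
      intro u
      refine hki.bdd_mul (c := B) (Measurable.aestronglyMeasurable (by fun_prop)) (ae_of_all _ fun v => ?_)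
      rw [Real.norm_eq_abs, abs_of_nonneg (hS _)]; exact hSB _
    have hv : ∀ v ∈ Set.Ioc (-M) M, -ε ≤ v / (M / ε) ∧ v / (M / ε) ≤ ε := by
      intro v hv
      constructor
      · rw [le_div_iff₀ hl]; have : -ε * (M / ε) = -M := by field_simp
        rw [this]; exact hv.1.le
      · rw [div_le_iff₀ hl]; have : ε * (M / ε) = M := by field_simp
        rw [this]; exact hv.2
    have up : ∀ u, S (u - ε) * Real.exp (-(2 * ε)) * J ≤ ∫ v, S (u + v / (M / ε)) * k v := by
      intro u
      calc _ = ∫ v in Set.Ioc (-M) M, S (u - ε) * Real.exp (-(2 * ε)) * k v := by rw [integral_const_mul]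
        _ ≤ ∫ v in Set.Ioc (-M) M, S (u + v / (M / ε)) * k v := by
          refine setIntegral_mono_on (hki.integrableOn.const_mul _) (hintg u).integrableOn measurableSet_Ioc ?_
          intro v hvm
          obtain ⟨h1, h2⟩ := hv v hvm
          refine mul_le_mul_of_nonneg_right ?_ (hk0 v)
          have h3 := hmono (u - ε) (u + v / (M / ε)) (by linarith)
          have h4 : S (u + v / (M / ε)) * Real.exp (u + v / (M / ε)) ≤ S (u + v / (M / ε)) * Real.exp (u + ε) := by
            gcongr; exact hS _
          have h5 : Real.exp (u - ε) = Real.exp (-(2 * ε)) * Real.exp (u + ε) := by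
            rw [← Real.exp_add]; congr 1; ring
          have h6 := h3.trans h4
          rw [h5, ← mul_assoc] at h6
          exact le_of_mul_le_mul_right h6 (Real.exp_pos _)
        _ ≤ _ := setIntegral_le_integral (hintg u) (ae_of_all _ fun v => mul_nonneg (hS _) (hk0 v))
    have down : ∀ u, ∫ v, S (u + v / (M / ε)) * k v ≤ S (u + ε) * Real.exp (2 * ε) * J + B * (I - J) := by
      intro u
      rw [← integral_add_compl measurableSet_Ioc (hintg u) (s := Set.Ioc (-M) M)]
      refine add_le_add ?_ ?_
      · rw [hJ, ← integral_const_mul]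
        refine setIntegral_mono_on (hintg u).integrableOn (hki.integrableOn.const_mul _) measurableSet_Ioc ?_
        intro v hvm
        obtain ⟨h1, h2⟩ := hv v hvm
        refine mul_le_mul_of_nonneg_right ?_ (hk0 v)
        have h3 := hmono (u + v / (M / ε)) (u + ε) (by linarith)
        have h4 : S (u + v / (M / ε)) * Real.exp (u - ε) ≤ S (u + v / (M / ε)) * Real.exp (u + v / (M / ε)) := by
          gcongr
          · exact hS _
          · linarith
        have h5 : Real.exp (u + ε) = Real.exp (2 * ε) * Real.exp (u - ε) := by
          rw [← Real.exp_add]; congr 1; ring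
        have h6 := h4.trans h3
        rw [h5, ← mul_assoc] at h6
        exact le_of_mul_le_mul_right h6 (Real.exp_pos _)
      · have : I - J = ∫ v in (Set.Ioc (-M) M)ᶜ, k v := by linarith
        rw [this, ← integral_const_mul]
        refine setIntegral_mono_on (hintg u).integrableOn (hki.integrableOn.const_mul _) measurableSet_Ioc.compl ?_
        intro v _
        exact mul_le_mul_of_nonneg_right (hSB _) (hk0 v)
    have hB : 0 ≤ B := (hS 0).trans (hSB 0)
    have ev1 := hlim.eventually (gt_mem_nhds (show c * I < (c + ε) * I by nlinarith))
    have ev2 := hlim.eventually (lt_mem_nhds (show (c - ε) * I < c * I by nlinarith))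
    have ev1' := (tendsto_atTop_add_const_right atTop ε tendsto_id).eventually ev1
    have ev2' := (tendsto_atTop_add_const_right atTop (-ε) tendsto_id).eventually ev2
    filter_upwards [ev1', ev2'] with u h1 h2
    simp only [id] at h1 h2
    have hup := up (u + ε)
    have hdown := down (u + -ε)
    rw [add_sub_cancel_right] at hup
    rw [neg_add_cancel_right] at hdown
    have e1 : Real.exp (-(2 * ε)) * Real.exp (2 * ε) = 1 := by rw [← Real.exp_add]; simp
    have p1 := Real.exp_pos (-(2 * ε))
    have p2 := Real.exp_pos (2 * ε)
    constructor
    · have h3 : (c - ε - B * ε) * I ≤ S u * Real.exp (2 * ε) * I := by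
        have a1 : B * (I - J) ≤ B * (ε * I) := by gcongr; linarith
        have a2 : S u * Real.exp (2 * ε) * J ≤ S u * Real.exp (2 * ε) * I := by
          gcongr
          exact mul_nonneg (hS u) p2.le
        nlinarith
      have h4 := le_of_mul_le_mul_right h3 hI
      calc _ ≤ Real.exp (-(2 * ε)) * (S u * Real.exp (2 * ε)) := by gcongr
        _ = S u := by rw [mul_left_comm, e1, mul_one]
    · rw [le_div_iff₀ (by linarith)]
      have h3 : S u * Real.exp (-(2 * ε)) * ((1 - ε) * I) ≤ (c + ε) * I := by
        have : S u * Real.exp (-(2 * ε)) * ((1 - ε) * I) ≤ S u * Real.exp (-(2 * ε)) * J := by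
          gcongr
          exact mul_nonneg (hS u) p1.le
        linarith
      rw [← mul_assoc] at h3
      have h4 := le_of_mul_le_mul_right h3 hI
      calc S u * (1 - ε) = Real.exp (2 * ε) * (S u * Real.exp (-(2 * ε)) * (1 - ε)) := by
            linear_combination (-(S u * (1 - ε))) * e1
        _ ≤ _ := by gcongr
  have c1 : Tendsto (fun ε : ℝ => Real.exp (-(2 * ε)) * (c - ε - B * ε)) (𝓝[>] 0) (𝓝 c) := by
    have : ContinuousAt (fun ε : ℝ => Real.exp (-(2 * ε)) * (c - ε - B * ε)) 0 := by fun_prop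
    have := this.tendsto.mono_left (nhdsWithin_le_nhds (s := Set.Ioi 0))
    simpa using this
  have c2 : Tendsto (fun ε : ℝ => Real.exp (2 * ε) * (c + ε) / (1 - ε)) (𝓝[>] 0) (𝓝 c) := by
    have : ContinuousAt (fun ε : ℝ => Real.exp (2 * ε) * (c + ε) / (1 - ε)) 0 := by
      refine ContinuousAt.div (by fun_prop) (by fun_prop) (by norm_num)
    have := this.tendsto.mono_left (nhdsWithin_le_nhds (s := Set.Ioi 0))
    simpa using this
  have hIoo : ∀ᶠ ε : ℝ in 𝓝[>] 0, 0 < ε ∧ ε < 1 := Ioo_mem_nhdsGT (by norm_num)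
  rw [tendsto_order]
  constructor
  · intro a ha
    obtain ⟨ε, hε, h0, h1⟩ := ((c1.eventually (lt_mem_nhds ha)).and hIoo).exists
    filter_upwards [main ε h0 h1] with u hu using lt_of_lt_of_le hε hu.1
  · intro a ha
    obtain ⟨ε, hε, h0, h1⟩ := ((c2.eventually (gt_mem_nhds ha)).and hIoo).exists
    filter_upwards [main ε h0 h1] with u hu using lt_of_le_of_lt hu.2 hε


open ArithmeticFunction in
noncomputable def psiClass {q : ℕ} (a : ZMod q) (x : ℝ) : ℝ :=
  ∑ n ∈ Finset.Icc 1 ⌊x⌋₊, vonMangoldt.residueClass a n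

section
open ArithmeticFunction
variable {q : ℕ} (a : ZMod q)

lemma psiClass_nonneg (x : ℝ) : 0 ≤ psiClass a x :=
  Finset.sum_nonneg fun n _ => vonMangoldt.residueClass_nonneg a n

lemma psiClass_mono : Monotone (psiClass a) := by
  intro x y hxy
  refine Finset.sum_le_sum_of_subset_of_nonneg ?_ fun n _ _ => vonMangoldt.residueClass_nonneg a n
  exact Finset.Icc_subset_Icc_right (Nat.floor_mono hxy)

lemma psiClass_le {x : ℝ} (hx : 0 ≤ x) : psiClass a x ≤ (Real.log 4 + 4) * x := by
  refine le_trans ?_ (Chebyshev.psi_le_const_mul_self hx)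
  rw [Chebyshev.psi]
  exact Finset.sum_le_sum fun n _ => vonMangoldt.residueClass_le a n

lemma psiClass_zero {x : ℝ} (hx : x < 1) : psiClass a x = 0 := by
  rw [psiClass, Nat.floor_eq_zero.2 hx]; simp

lemma psiClass_tendsto [NeZero q] (ha : IsUnit a) :
    Tendsto (fun x : ℝ => psiClass a x / x) atTop (𝓝 ((q.totient : ℝ)⁻¹)) := by
  set c : ℝ := (q.totient : ℝ)⁻¹ with hc
  have hc0 : 0 ≤ c := by positivity
  let S : ℝ → ℝ := fun t => psiClass a (Real.exp t) * Real.exp (-t)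
  have hSm : Measurable S := by
    have : Measurable (psiClass a) := (psiClass_mono a).measurable
    fun_prop
  have hS0 : ∀ t, 0 ≤ S t := fun t => mul_nonneg (psiClass_nonneg a _) (Real.exp_pos _).le
  have hexp : ∀ t, Real.exp t * Real.exp (-t) = 1 := fun t => by rw [← Real.exp_add]; simp
  have hSB : ∀ t, S t ≤ Real.log 4 + 4 := by
    intro t
    calc S t ≤ ((Real.log 4 + 4) * Real.exp t) * Real.exp (-t) := by
          simp only [S]; gcongr; exact psiClass_le a (Real.exp_pos t).le
      _ = _ := by rw [mul_assoc, hexp, mul_one]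
  have hSz : ∀ t < 0, S t = 0 := by
    intro t ht
    simp only [S]
    rw [psiClass_zero a (Real.exp_lt_one_iff.2 ht), zero_mul]
  have hSe : ∀ t, S t * Real.exp t = psiClass a (Real.exp t) := by
    intro t
    simp only [S]
    rw [mul_assoc, mul_comm (Real.exp (-t)), hexp, mul_one]
  have hmono : ∀ s t, s ≤ t → S s * Real.exp s ≤ S t * Real.exp t := by
    intro s t hst
    rw [hSe, hSe]
    exact psiClass_mono a (Real.exp_le_exp.2 hst)
  have hO : (fun n : ℕ ↦ ∑ k ∈ Finset.Icc 1 n, vonMangoldt.residueClass a k) =O[atTop] fun n ↦ (n : ℝ) ^ (1:ℝ) := by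
    refine Asymptotics.IsBigO.of_bound (Real.log 4 + 4) (Eventually.of_forall fun n => ?_)
    have h1 := psiClass_le a (Nat.cast_nonneg n : (0:ℝ) ≤ n)
    have h2 := psiClass_nonneg a n
    rw [psiClass, Nat.floor_natCast] at h1 h2
    rw [Real.norm_eq_abs, abs_of_nonneg h2, Real.rpow_one, Real.norm_eq_abs, abs_of_nonneg (Nat.cast_nonneg n)]
    exact h1
  let G : ℂ → ℂ := fun z => (vonMangoldt.LFunctionResidueClassAux a (1 + z) - c) / (1 + z)
  have hne : ∀ z : ℂ, 0 ≤ z.re → (1 + z) ≠ 0 := by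
    intro z hz h
    have := congrArg Complex.re h
    simp at this
    linarith
  have hG : ContinuousOn G {z | 0 ≤ z.re} := by
    refine ContinuousOn.div (ContinuousOn.sub ?_ continuousOn_const) (by fun_prop) hne
    refine (vonMangoldt.continuousOn_LFunctionResidueClassAux a).comp (by fun_prop) ?_
    intro z hz
    have : 0 ≤ z.re := hz
    simpa using this
  have himg : Set.image Real.exp (Set.Ioi 0) = Set.Ioi 1 := by
    ext x
    simp only [Set.mem_image, Set.mem_Ioi]
    constructor
    · rintro ⟨t, ht, rfl⟩; exact Real.one_lt_exp_iff.2 ht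
    · intro hx; exact ⟨Real.log x, Real.log_pos hx, Real.exp_log (by linarith)⟩
  have hDG : ∀ z : ℂ, 0 < z.re → ∫ t : ℝ in Set.Ioi 0, ((S t - c : ℝ) : ℂ) * Complex.exp (-z * t) = G z := by
    intro z hz
    have hz' : (-z).re < 0 := by simpa using hz
    have hs : (1:ℝ) < (1 + z).re := by simpa using hz
    have hne1 := hne z hz.le
    have hz0 : z ≠ 0 := by rintro rfl; simp at hz
    have hL := LSeries_eq_mul_integral_of_nonneg (vonMangoldt.residueClass a) zero_le_one hs hO
      (vonMangoldt.residueClass_nonneg a)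
    have hA := vonMangoldt.eqOn_LFunctionResidueClassAux ha (show (1 + z) ∈ {s : ℂ | 1 < s.re} from hs)
    have hcov := integral_image_eq_integral_abs_deriv_smul (s := Set.Ioi (0:ℝ)) (f := Real.exp) (f' := Real.exp)
      measurableSet_Ioi (fun x _ => (Real.hasDerivAt_exp x).hasDerivWithinAt) Real.exp_injective.injOn
      (fun t : ℝ => (∑ k ∈ Finset.Icc 1 ⌊t⌋₊, (vonMangoldt.residueClass a k : ℂ)) * (t:ℂ) ^ (-(1 + z + 1)))
    rw [himg] at hcov
    rw [hcov] at hL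
    have hI1 : IntegrableOn (fun t : ℝ => Complex.exp (-z * t)) (Set.Ioi 0) :=
      integrableOn_exp_mul_complex_Ioi hz' 0
    have hI2 : IntegrableOn (fun t : ℝ => (S t : ℂ) * Complex.exp (-z * t)) (Set.Ioi 0) := by
      refine Integrable.bdd_mul (c := Real.log 4 + 4) hI1 (Measurable.aestronglyMeasurable (by fun_prop))
        (ae_of_all _ fun t => ?_)
      rw [Complex.norm_real, Real.norm_eq_abs, abs_of_nonneg (hS0 t)]
      exact hSB t
    have e1 : ∫ t : ℝ in Set.Ioi 0, ((S t - c : ℝ) : ℂ) * Complex.exp (-z * t) =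
        (∫ t : ℝ in Set.Ioi 0, (S t : ℂ) * Complex.exp (-z * t)) - c * (1 / z) := by
      have h1 : ∫ t : ℝ in Set.Ioi 0, Complex.exp (-z * t) = 1 / z := by
        rw [integral_exp_mul_complex_Ioi hz' 0]; simp
      rw [← h1, ← integral_const_mul, ← integral_sub hI2 (hI1.const_mul _)]
      congr 1
      ext t
      push_cast
      ring
    have e2 : ∫ t : ℝ in Set.Ioi 0, (S t : ℂ) * Complex.exp (-z * t) =
        LSeries (fun n => (vonMangoldt.residueClass a n : ℂ)) (1 + z) / (1 + z) := by
      rw [hL, mul_div_cancel_left₀ _ hne1]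
      congr 1
      ext t
      rw [abs_of_pos (Real.exp_pos t), Complex.real_smul, Complex.cpow_def_of_ne_zero (by simp),
        ← Complex.ofReal_log (Real.exp_pos t).le, Real.log_exp]
      simp only [S, psiClass]
      push_cast
      have : Complex.exp (t * (-(1 + z + 1))) = Complex.exp (-t) * Complex.exp (-z * t) * Complex.exp (-t) := by
        rw [← Complex.exp_add, ← Complex.exp_add]; congr 1; ring
      rw [this]
      have h2 : Complex.exp t * Complex.exp (-t) = 1 := by rw [← Complex.exp_add]; simp
      linear_combination (-(∑ k ∈ Finset.Icc 1 ⌊Real.exp t⌋₊, (vonMangoldt.residueClass a k : ℂ)) * Complex.exp (-t) * Complex.exp (-z * t)) * h2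
    rw [e1, e2]
    simp only [G]
    rw [hA]
    simp only [hc]
    push_cast
    have : (1 + z - 1 : ℂ) = z := by ring
    rw [this]
    field_simp
    ring
  have hT := tauber S _ c hSm hS0 hSB hSz hmono hc0 G hG hDG
  refine (hT.comp Real.tendsto_log_atTop).congr' ?_
  filter_upwards [eventually_gt_atTop 0] with x hx
  simp only [S, Function.comp]
  rw [Real.exp_neg, Real.exp_log hx, div_eq_mul_inv]

end


section
open ArithmeticFunction
variable {q : ℕ} (a : ZMod q)

/-- The primes up to `x` in the residue class `a`. -/
def classPrimes (x : ℕ) : Finset ℕ :=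
  (Finset.Icc 1 x).filter fun n => n.Prime ∧ (n : ZMod q) = a

lemma residueClass_of_mem {x n : ℕ} (hn : n ∈ classPrimes a x) :
    vonMangoldt.residueClass a n = Real.log n := by
  simp only [classPrimes, Finset.mem_filter] at hn
  rw [vonMangoldt.residueClass, Set.indicator_of_mem (by simpa using hn.2.2), vonMangoldt_apply_prime hn.2.1]

lemma classPrimes_lower (x : ℕ) (hx : 1 ≤ x) :
    psiClass a x - 2 * √x * Real.log x ≤ (classPrimes a x).card * Real.log x := by
  have h1 : psiClass a x ≤ (∑ n ∈ classPrimes a x, Real.log n) +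
      ∑ n ∈ Finset.Ioc 0 ⌊(x:ℝ)⌋₊ with ¬ n.Prime, vonMangoldt n := by
    rw [psiClass, Nat.floor_natCast, ← Finset.sum_filter_add_sum_filter_not _ (fun n : ℕ => n.Prime)]
    refine add_le_add ?_ ?_
    · rw [classPrimes, ← Finset.filter_filter, Finset.sum_filter _ _ (s := Finset.filter _ _)]
      refine Finset.sum_le_sum fun n hn => ?_
      have hp : n.Prime := (Finset.mem_filter.1 hn).2
      rw [vonMangoldt.residueClass, Set.indicator_apply, vonMangoldt_apply_prime hp]
      rfl
    · exact Finset.sum_le_sum fun n _ => vonMangoldt.residueClass_le a n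
  have h2 := Chebyshev.psi_sub_theta_le (x := x) (by exact_mod_cast hx)
  rw [Chebyshev.psi_sub_theta_eq_sum_not_prime] at h2
  have h3 : ∑ n ∈ classPrimes a x, Real.log n ≤ (classPrimes a x).card * Real.log x := by
    rw [← nsmul_eq_mul]
    refine Finset.sum_le_card_nsmul _ _ _ fun n hn => ?_
    simp only [classPrimes, Finset.mem_filter, Finset.mem_Icc] at hn
    exact Real.log_le_log (by exact_mod_cast hn.1.1) (by exact_mod_cast hn.1.2)
  linarith

lemma classPrimes_upper (x : ℕ) (y : ℝ) (hy : 1 < y) :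
    ((classPrimes a x).card : ℝ) ≤ y + psiClass a x / Real.log y := by
  have hl := Real.log_pos hy
  rw [← Finset.card_filter_add_card_filter_not (fun n : ℕ => (n:ℝ) ≤ y)]
  push_cast
  refine add_le_add ?_ ?_
  · have : (classPrimes a x).filter (fun n : ℕ => (n:ℝ) ≤ y) ⊆ Finset.Icc 1 ⌊y⌋₊ := by
      intro n hn
      simp only [classPrimes, Finset.mem_filter, Finset.mem_Icc] at hn ⊢
      exact ⟨hn.1.1.1, Nat.le_floor hn.2⟩
    have := Finset.card_le_card this
    rw [Nat.card_Icc, Nat.add_sub_cancel] at this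
    calc _ ≤ ((⌊y⌋₊ : ℕ) : ℝ) := by exact_mod_cast this
      _ ≤ y := Nat.floor_le (by linarith)
  · rw [le_div_iff₀ hl, ← nsmul_eq_mul]
    calc _ ≤ ∑ n ∈ (classPrimes a x).filter (fun n : ℕ => ¬ (n:ℝ) ≤ y), vonMangoldt.residueClass a n := by
          refine Finset.card_nsmul_le_sum _ _ _ fun n hn => ?_
          have h := Finset.mem_filter.1 hn
          rw [residueClass_of_mem a h.1]
          exact Real.log_le_log (by linarith) (not_le.1 h.2).le
      _ ≤ _ := by
          rw [psiClass, Nat.floor_natCast]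
          refine Finset.sum_le_sum_of_subset_of_nonneg ?_ fun n _ _ => vonMangoldt.residueClass_nonneg a n
          exact (Finset.filter_subset _ _).trans (Finset.filter_subset _ _)

lemma classPrimes_tendsto [NeZero q] (ha : IsUnit a) :
    Tendsto (fun x : ℕ => (classPrimes a x).card * Real.log x / x) atTop (𝓝 ((q.totient : ℝ)⁻¹)) := by
  have hpsi := (psiClass_tendsto a ha).comp (tendsto_natCast_atTop_atTop (R := ℝ))
  have hcast := tendsto_natCast_atTop_atTop (R := ℝ)
  -- lower comparison
  have hsq : Tendsto (fun x : ℝ => 2 * (Real.log x / x ^ (1/2 : ℝ))) atTop (𝓝 0) := by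
    have := (isLittleO_log_rpow_atTop (show (0:ℝ) < 1/2 by norm_num)).tendsto_div_nhds_zero
    simpa using this.const_mul 2
  have hlow : Tendsto (fun x : ℕ => psiClass a x / x - 2 * (Real.log x / (x:ℝ) ^ (1/2 : ℝ))) atTop
      (𝓝 ((q.totient : ℝ)⁻¹)) := by
    simpa using hpsi.sub (hsq.comp hcast)
  -- upper comparison
  have hlog : Tendsto (fun x : ℝ => 1 / Real.log x) atTop (𝓝 0) := by
    simp only [one_div]
    exact Real.tendsto_log_atTop.inv_tendsto_atTop
  have hll : Tendsto (fun x : ℝ => Real.log (Real.log x) / Real.log x) atTop (𝓝 0) :=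
    (Real.isLittleO_log_id_atTop.tendsto_div_nhds_zero).comp Real.tendsto_log_atTop
  have hrat : Tendsto (fun x : ℝ => 1 / (1 - 2 * (Real.log (Real.log x) / Real.log x))) atTop (𝓝 1) := by
    have := (tendsto_const_nhds (x := (1:ℝ))).sub (hll.const_mul 2)
    have := this.inv₀ (by norm_num)
    simpa using this
  have hup : Tendsto (fun x : ℕ => 1 / Real.log x + psiClass a x / x * (1 / (1 - 2 * (Real.log (Real.log x) / Real.log x)))) atTop
      (𝓝 ((q.totient : ℝ)⁻¹)) := by
    simpa using (hlog.comp hcast).add (hpsi.mul (hrat.comp hcast))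
  refine tendsto_of_tendsto_of_tendsto_of_le_of_le' hlow hup ?_ ?_
  · filter_upwards [eventually_ge_atTop 1] with x hx
    have hx0 : (0:ℝ) < x := by exact_mod_cast hx
    rw [le_div_iff₀ hx0]
    refine le_trans (le_of_eq ?_) (classPrimes_lower a x hx)
    rw [← Real.sqrt_eq_rpow]
    have hs : √(x:ℝ) * √x = x := Real.mul_self_sqrt hx0.le
    have hs0 : √(x:ℝ) ≠ 0 := (Real.sqrt_pos.2 hx0).ne'
    field_simp
    linear_combination (2 * Real.log x) * hs
  · have hgrow : ∀ᶠ x : ℝ in atTop, 1 < Real.log x ∧ Real.log x ^ 2 < x := by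
      have h1 := Real.tendsto_log_atTop.eventually (eventually_gt_atTop (1:ℝ))
      have h2 : Tendsto (fun x : ℝ => Real.log x ^ 2 / x) atTop (𝓝 0) := by
        have := (Real.isLittleO_pow_log_id_atTop (n := 2)).tendsto_div_nhds_zero
        simpa using this
      filter_upwards [h1, h2.eventually (gt_mem_nhds zero_lt_one), eventually_gt_atTop 0] with x a1 a2 a3
      exact ⟨a1, by rwa [div_lt_one a3] at a2⟩
    filter_upwards [hcast.eventually hgrow] with x ⟨hx1, hx2⟩
    have hlp : 0 < Real.log x := by linarith
    have hl2 : 0 < Real.log x ^ 2 := by positivity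
    have hx0 : (0:ℝ) < x := by linarith
    have hy : 1 < (x:ℝ) / Real.log x ^ 2 := by rwa [one_lt_div hl2]
    have hu := classPrimes_upper a x _ hy
    have hly : Real.log ((x:ℝ) / Real.log x ^ 2) = Real.log x - 2 * Real.log (Real.log x) := by
      rw [Real.log_div hx0.ne' hl2.ne', Real.log_pow]; norm_num
    have hlyp := Real.log_pos hy
    rw [hly] at hu hlyp
    calc (classPrimes a x).card * Real.log x / x ≤
        ((x:ℝ) / Real.log x ^ 2 + psiClass a x / (Real.log x - 2 * Real.log (Real.log x))) * Real.log x / x := by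
          gcongr
      _ = _ := by
          have : 1 - 2 * (Real.log (Real.log x) / Real.log x) = (Real.log x - 2 * Real.log (Real.log x)) / Real.log x := by
            field_simp
          rw [this]
          field_simp

end

lemma part2_aux (P : ℕ → Prop) (hP : ∀ p, P p ↔ p.Prime ∧ (p % 8 = 3 ∨ p % 8 = 5)) :
    Tendsto (fun x : ℕ =>
      (Nat.card {p : ℕ // P p ∧ p ≤ x} : ℝ) /
        (Nat.card {p : ℕ // p.Prime ∧ p ≤ x} : ℝ)) atTop (𝓝 (1 / 2)) := by
  have h3 := classPrimes_tendsto (q := 8) 3 (by decide)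
  have h5 := classPrimes_tendsto (q := 8) 5 (by decide)
  have h1 := classPrimes_tendsto (q := 1) 0 (by decide)
  have t8 : Nat.totient 8 = 4 := by decide
  rw [t8] at h3 h5
  rw [Nat.totient_one] at h1
  have hlim := (h3.add h5).div h1 (by norm_num)
  have e : (((4:ℕ):ℝ)⁻¹ + ((4:ℕ):ℝ)⁻¹) / ((1:ℕ):ℝ)⁻¹ = 1 / 2 := by norm_num
  rw [e] at hlim
  refine hlim.congr' ?_
  filter_upwards [eventually_ge_atTop 2] with x hx
  have c1 : Nat.card {p : ℕ // p.Prime ∧ p ≤ x} = (classPrimes (q := 1) 0 x).card := by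
    refine Nat.subtype_card _ fun p => ?_
    simp only [classPrimes, Finset.mem_filter, Finset.mem_Icc]
    constructor
    · rintro ⟨⟨_, h⟩, hp, _⟩; exact ⟨hp, h⟩
    · rintro ⟨hp, h⟩; exact ⟨⟨hp.one_le, h⟩, hp, Subsingleton.elim _ _⟩
  have m3 : ∀ p : ℕ, ((p : ZMod 8) = 3 ↔ p % 8 = 3) := fun p => by
    have := ZMod.natCast_eq_natCast_iff' p 3 8
    simpa using this
  have m5 : ∀ p : ℕ, ((p : ZMod 8) = 5 ↔ p % 8 = 5) := fun p => by
    have := ZMod.natCast_eq_natCast_iff' p 5 8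
    simpa using this
  have c2 : Nat.card {p : ℕ // P p ∧ p ≤ x} = (classPrimes (q := 8) 3 x).card + (classPrimes (q := 8) 5 x).card := by
    rw [← Finset.card_union_of_disjoint]
    · refine Nat.subtype_card _ fun p => ?_
      simp only [classPrimes, Finset.mem_union, Finset.mem_filter, Finset.mem_Icc, hP, m3, m5]
      constructor
      · rintro (⟨⟨_, h⟩, hp, h'⟩ | ⟨⟨_, h⟩, hp, h'⟩)
        · exact ⟨⟨hp, Or.inl h'⟩, h⟩
        · exact ⟨⟨hp, Or.inr h'⟩, h⟩
      · rintro ⟨⟨hp, h' | h'⟩, h⟩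
        · exact Or.inl ⟨⟨hp.one_le, h⟩, hp, h'⟩
        · exact Or.inr ⟨⟨hp.one_le, h⟩, hp, h'⟩
    · rw [Finset.disjoint_left]
      intro p hp hp'
      simp only [classPrimes, Finset.mem_filter, m3, m5] at hp hp'
      omega
  rw [c1, c2]
  have hx0 : (0:ℝ) < x := by exact_mod_cast (by omega : 0 < x)
  have hlx : 0 < Real.log x := Real.log_pos (by exact_mod_cast (by omega : 1 < x))
  simp only [Pi.div_apply]
  rw [← add_div, ← add_mul, div_div_div_cancel_right₀ hx0.ne', mul_div_mul_right _ _ hlx.ne']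
  push_cast
  rfl


end Density

theorem stmt16 :
    (∀ p : ℕ, p.Prime → p ≠ 2 →
      (StablePrime (X ^ 2 - 2) p ↔ p % 8 = 3 ∨ p % 8 = 5)) ∧
    Tendsto (fun x : ℕ =>
      (Nat.card {p : ℕ // StablePrime (X ^ 2 - 2) p ∧ p ≤ x} : ℝ) /
        (Nat.card {p : ℕ // p.Prime ∧ p ≤ x} : ℝ)) atTop (𝓝 (1 / 2)) := by
  refine ⟨part1, part2_aux _ fun p => ?_⟩
  constructor
  · intro h
    have hp2 : p ≠ 2 := by
      rintro rfl
      exact not_stable_two h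
    exact ⟨h.1, (part1 p h.1 hp2).1 h⟩
  · rintro ⟨hp, h⟩
    exact (part1 p hp (by rintro rfl; omega)).2 h
end
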